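/- Let (V,1,𝒮,Y) be a vertex F-algebra over a formal group law F over a commutative ring R. Then the bracket [a,b] := Res^F_{z=0} Y(a,z)b dz (the coefficient of z^{-1} in (Y(a,z)b)·p_F(z), where p_F(z) = F^{0,1}(z,0)^{-1}) descends to a well-defined R-bilinear bracket on the quotient R-module V̄ = V / Σ_{n≥1} 𝒮^{(n)}(V), and on V̄ it satisfies skew-symmetry [a,b] = −[b,a] and the Jacobi identity [a,[b,c]] − [b,[a,c]] = [[a,b],c]; that is, V̄ becomes a Lie algebra over R. -/

import Mathlib

/-!
Coefficient-wise formal calculus for vertex `F`-algebras, following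
M. Upmeier, "Vertex F-Algebras and Their Associated Lie Algebra".

Series in one, two or three variables are represented by their coefficient
functions `ℤ → R`, `ℤ → ℤ → R`, …; products are given by coefficient-wise
(finite) sums, expressed via `finsum` (`∑ᶠ`).
-/

open scoped BigOperators

noncomputable section

/-- Generalized binomial coefficient `C(n,k) = n(n-1)⋯(n-k+1)/k!` for `n : ℤ`, `k : ℕ`. -/
def zbinom (n : ℤ) (k : ℕ) : ℤ :=
  if 0 ≤ n then (n.toNat.choose k : ℤ)
  else (-1 : ℤ) ^ k * (((k : ℤ) - n - 1).toNat.choose k : ℤ)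

/-- `C(n,m)` for integer `m`, with `C(n,m) = 0` for `m < 0`. -/
def zbinomZ (n m : ℤ) : ℤ := if m < 0 then 0 else zbinom n m.toNat

/-- `(-1)^n` for `n : ℤ`. -/
def msign (n : ℤ) : ℤ := if Even n then 1 else -1

section Series

variable {R : Type*} [CommRing R] {M : Type*} [AddCommGroup M] [Module R M]

/-- Product of a one-variable series with `R`-coefficients with an `M`-valued one. -/
def mulS (f : ℤ → R) (g : ℤ → M) : ℤ → M := fun n => ∑ᶠ i : ℤ, f i • g (n - i)

/-- The constant series `1` (one variable). -/
def oneS (R : Type*) [CommRing R] : ℤ → R := fun n => if n = 0 then 1 else 0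

/-- Natural powers of a one-variable series. -/
def pow1 (f : ℤ → R) : ℕ → ℤ → R
  | 0 => oneS R
  | k + 1 => mulS f (pow1 f k)

/-- Product of two-variable series. -/
def mulS2 (f : ℤ → ℤ → R) (g : ℤ → ℤ → M) : ℤ → ℤ → M :=
  fun a b => ∑ᶠ p : ℤ × ℤ, f p.1 p.2 • g (a - p.1) (b - p.2)

/-- The constant series `1` (two variables). -/
def oneS2 (R : Type*) [CommRing R] : ℤ → ℤ → R := fun a b => if a = 0 ∧ b = 0 then 1 else 0

/-- Natural powers of a two-variable series. -/
def pow2 (f : ℤ → ℤ → R) : ℕ → ℤ → ℤ → R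
  | 0 => oneS2 R
  | k + 1 => mulS2 f (pow2 f k)

/-- `f ∈ M((z))`: only finitely many negative powers. -/
def IsLaurent (f : ℤ → M) : Prop := ∃ N : ℤ, ∀ n : ℤ, n < N → f n = 0

/-- `f ∈ M((z,w))`: only finitely many nonzero coefficients with some negative index. -/
def IsLaurent2 (f : ℤ → ℤ → M) : Prop :=
  {p : ℤ × ℤ | (p.1 < 0 ∨ p.2 < 0) ∧ f p.1 p.2 ≠ 0}.Finite

/-- Formal derivative of a one-variable series. -/
def fderiv1 (f : ℤ → R) : ℤ → R := fun n => ((n + 1 : ℤ) : R) * f (n + 1)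

/-- The polynomial `z - w` as a two-variable series. -/
def zmw (R : Type*) [CommRing R] : ℤ → ℤ → R :=
  fun i j => if i = 1 ∧ j = 0 then 1 else if i = 0 ∧ j = 1 then -1 else 0

/-- `∂/∂w` of a two-variable series. -/
def d01 (f : ℤ → ℤ → R) : ℤ → ℤ → R := fun i j => ((j + 1 : ℤ) : R) * f i (j + 1)

/-- `∂/∂z` of a two-variable series. -/
def d10 (f : ℤ → ℤ → R) : ℤ → ℤ → R := fun i j => ((i + 1 : ℤ) : R) * f (i + 1) j

/-- Substitution `p(f(z,w))` of a two-variable series (zero constant term) into a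
one-variable power series `p`. -/
def comp2 (p : ℤ → R) (f : ℤ → ℤ → R) : ℤ → ℤ → R :=
  fun a b => ∑ᶠ m : ℕ, p (m : ℤ) * pow2 f m a b

/-- Substitution `p(f(z))` of a one-variable series (zero constant term) into a
one-variable power series `p`. -/
def comp1 (p : ℤ → R) (f : ℤ → R) : ℤ → R :=
  fun a => ∑ᶠ m : ℕ, p (m : ℤ) * pow1 f m a

/-- `(G - z)/z` for `G ≡ z (mod w)`. -/
def hzS (G : ℤ → ℤ → R) : ℤ → ℤ → R := fun i j => G (i + 1) j - oneS2 R i j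

/-- Integer powers `i_{z,w} G^n`, for `G ≡ z (mod w)`, expanded in `R((z))⟦w⟧`:
the Newton expansion `z^n ∑_k C(n,k) ((G-z)/z)^k`. -/
def izwPow (G : ℤ → ℤ → R) (n : ℤ) : ℤ → ℤ → R :=
  fun a b => ∑ᶠ k : ℕ, (zbinom n k : R) * pow2 (hzS G) k (a - n) b

/-- `(G - w)/w` for `G ≡ w (mod z)`. -/
def hwS (G : ℤ → ℤ → R) : ℤ → ℤ → R := fun i j => G i (j + 1) - oneS2 R i j

/-- Integer powers `i_{w,z} G^n`, for `G ≡ w (mod z)`, expanded in `R((w))⟦z⟧`. -/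
def iwzPow (G : ℤ → ℤ → R) (n : ℤ) : ℤ → ℤ → R :=
  fun a b => ∑ᶠ k : ℕ, (zbinom n k : R) * pow2 (hwS G) k a (b - n)

/-- `(G + w)/(-w)` for `G ≡ ι(w) (mod z)`. -/
def hwNegS (G : ℤ → ℤ → R) : ℤ → ℤ → R := fun i j => -G i (j + 1) - oneS2 R i j

/-- Integer powers `i_{w,z} G^n`, for `G ≡ -w(1+⋯) (mod z)` (e.g. `G = F(z, ι w)`),
expanded in `R((w))⟦z⟧`. -/
def iwzPowNeg (G : ℤ → ℤ → R) (n : ℤ) : ℤ → ℤ → R :=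
  fun a b => (msign n : R) * ∑ᶠ k : ℕ, (zbinom n k : R) * pow2 (hwNegS G) k a (b - n)

/-- `(f + z)/(-z)` for a series `f = -z(1 + ⋯)` such as `ι(z)`. -/
def hS (f : ℤ → R) : ℤ → R := fun j => -f (j + 1) - oneS R j

/-- Integer powers `f(z)^n` (`n : ℤ`) for `f = -z(1+⋯)`, e.g. `f = ι(z)`. -/
def iotaPow (f : ℤ → R) (n : ℤ) : ℤ → R :=
  fun a => (msign n : R) * ∑ᶠ k : ℕ, (zbinom n k : R) * pow1 (hS f) k (a - n)

/-- `f - 1` for a power series with constant term `1`. -/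
def hOneS (f : ℤ → R) : ℤ → R := fun j => f j - oneS R j

/-- Multiplicative inverse of a power series with constant term `1`. -/
def invOne (f : ℤ → R) : ℤ → R :=
  fun a => ∑ᶠ k : ℕ, ((-1 : R) ^ k) * pow1 (hOneS f) k a

end Series

/-- A (one-dimensional, commutative) formal group law `F(z,w)` over `R`, together with
its (unique) inverse `ι`. -/
structure FormalGroupLaw (R : Type*) [CommRing R] where
  F : ℤ → ℤ → R
  F_supp : ∀ i j : ℤ, i < 0 ∨ j < 0 → F i j = 0
  /-- `F(z,0) = z`, so that `F(z,w) = z + w + O(zw)` using commutativity. -/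
  F_modw : ∀ i : ℤ, F i 0 = if i = 1 then 1 else 0
  F_comm : ∀ i j : ℤ, F i j = F j i
  /-- associativity `F(F(z,w),v) = F(z,F(w,v))`, coefficient-wise. -/
  F_assoc : ∀ a b c : ℤ,
    (∑ᶠ m : ℕ, F (m : ℤ) c * pow2 F m a b) = ∑ᶠ n : ℕ, F a (n : ℤ) * pow2 F n b c
  /-- the inverse `ι(z) = -z + O(z²)`. -/
  inv : ℤ → R
  inv_supp : ∀ n : ℤ, n < 1 → inv n = 0
  inv_one : inv 1 = -1
  /-- `F(z, ι(z)) = 0`, coefficient-wise. -/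
  inv_eq : ∀ n : ℤ, (∑ᶠ p : ℤ × ℕ, F p.1 (p.2 : ℤ) * pow1 inv p.2 (n - p.1)) = 0

namespace FormalGroupLaw

variable {R : Type*} [CommRing R] {M : Type*} [AddCommGroup M] [Module R M]

/-- The series `F(z, ι(w))`. -/
def Fzi (𝓕 : FormalGroupLaw R) : ℤ → ℤ → R :=
  fun i j => ∑ᶠ m : ℕ, 𝓕.F i (m : ℤ) * pow1 𝓕.inv m j

/-- The `F`-delta distribution `z⁻¹δ_F(w/z) = i_{z,w}F(z,ιw)⁻¹ - i_{w,z}F(z,ιw)⁻¹`. -/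
def delta (𝓕 : FormalGroupLaw R) : ℤ → ℤ → R :=
  fun a b => izwPow 𝓕.Fzi (-1) a b - iwzPowNeg 𝓕.Fzi (-1) a b

/-- `p_F(z) = F^{0,1}(z,0)⁻¹`, the coefficient series of the invariant 1-form. -/
def pF (𝓕 : FormalGroupLaw R) : ℤ → R := invOne (fun i => 𝓕.F i 1)

/-- `F`-residue: the coefficient of `z⁻¹` in `f(z)·p_F(z)`. -/
def resF (𝓕 : FormalGroupLaw R) (f : ℤ → M) : M := ∑ᶠ i : ℤ, 𝓕.pF i • f (-1 - i)

/-- The `F`-hyperderivative `𝒮^F_n f`, defined by `i_{z,w}f(F(z,w)) = ∑_n (𝒮^F_n f)(z) wⁿ`. -/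
def hyper (𝓕 : FormalGroupLaw R) (n : ℕ) (f : ℤ → R) : ℤ → R :=
  fun a => ∑ᶠ m : ℤ, f m * izwPow 𝓕.F m a (n : ℤ)

/-- `F`-binomial coefficients: `i_{z,w}F(z,w)^n = ∑_{i,j} binomF(n;i,j) z^i w^j`. -/
def binomF (𝓕 : FormalGroupLaw R) (n i j : ℤ) : R := izwPow 𝓕.F n i j

/-- `φ` is a logarithm of `F`: `φ(F(z,w)) = φ(z) + φ(w)`, `φ(0) = 0`, `φ'(0) = 1`. -/
def IsLogarithm (𝓕 : FormalGroupLaw R) (φ : ℤ → R) : Prop :=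
  (∀ n : ℤ, n < 0 → φ n = 0) ∧ φ 0 = 0 ∧ φ 1 = 1 ∧
  ∀ a b : ℤ, (∑ᶠ m : ℕ, φ (m : ℤ) * pow2 𝓕.F m a b)
    = (if b = 0 then φ a else 0) + (if a = 0 then φ b else 0)

end FormalGroupLaw

section Vertex

variable {R : Type*} [CommRing R] {V : Type*} [AddCommGroup V] [Module R V]

/-- For `c = ∑_m c_m v^m ∈ V((v))`, the substitution `v ↦ F(z,w)` (coefficient `(k,n)` of
`z^k w^n`, expanded in `V((z))⟦w⟧`). -/
def substF (𝓕 : FormalGroupLaw R) (c : ℤ → V) : ℤ → ℤ → V :=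
  fun k n => ∑ᶠ m : ℤ, izwPow 𝓕.F m k n • c m

/-- Coefficients of `i_{z,w} Y(a, F(z,w)) (Y(b,w)c)`, where `Ya v = Y(a,·)v` and
`d = Y(b,·)c`. -/
def substFProd (𝓕 : FormalGroupLaw R) (Ya : V → ℤ → V) (d : ℤ → V) : ℤ → ℤ → V :=
  fun k n => ∑ᶠ q : ℤ × ℤ, izwPow 𝓕.F q.1 k (n - q.2) • Ya (d q.2) q.1

end Vertex

/-- A vertex `F`-algebra `(V, 𝟙, 𝒮, Y)` over the formal group law `𝓕`.
`Y a b : ℤ → V` records the coefficients of `Y(a,z)b = ∑_k (Y a b k) z^k`, and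
`S n` is the component `𝒮⁽ⁿ⁾` of the `F`-shift operator `𝒮(z) = ∑_{n≥0} 𝒮⁽ⁿ⁾ zⁿ`. -/
structure VertexFAlgebra (R : Type*) [CommRing R] (𝓕 : FormalGroupLaw R)
    (V : Type*) [AddCommGroup V] [Module R V] where
  vac : V
  S : ℕ → V →ₗ[R] V
  Y : V →ₗ[R] V →ₗ[R] (ℤ → V)
  /-- `Y(a,z)b ∈ V((z))`. -/
  Y_laurent : ∀ a b : V, IsLaurent (Y a b)
  /-- `Y(a,z)𝟙` is holomorphic. -/
  vac_holo : ∀ (a : V) (k : ℤ), k < 0 → Y a vac k = 0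
  /-- `Y(a,z)𝟙|_{z=0} = a`. -/
  creation : ∀ a : V, Y a vac 0 = a
  /-- `Y(𝟙,z) = id`. -/
  Y_vac : ∀ (b : V) (k : ℤ), Y vac b k = if k = 0 then b else 0
  /-- `𝒮(0) = id`. -/
  S_zero : S 0 = LinearMap.id
  /-- `𝒮(z)𝟙 = 𝟙`. -/
  S_vac : ∀ n : ℕ, 1 ≤ n → S n vac = 0
  /-- `𝒮(z) ∘ 𝒮(w) = 𝒮(F(z,w))`, coefficient-wise. -/
  S_comp : ∀ (a : V) (i j : ℕ),
    S i (S j a) = ∑ᶠ m : ℕ, pow2 𝓕.F m (i : ℤ) (j : ℤ) • S m a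
  /-- `F`-translation covariance `Y(𝒮(w)a, z)b = i_{z,w} Y(a,F(z,w))b`. -/
  translation : ∀ (a b : V) (k : ℤ) (n : ℕ),
    Y (S n a) b k = substF 𝓕 (Y a b) k (n : ℤ)
  /-- weak `F`-associativity. -/
  weak_assoc : ∀ a b c : V, ∃ N : ℕ,
    mulS2 (pow2 𝓕.F N) (fun k l => Y (Y a b k) c l)
      = mulS2 (pow2 𝓕.F N) (substFProd 𝓕 (fun v => Y a v) (Y b c))
  /-- skew symmetry `Y(a,z)b = 𝒮(z)(Y(b,ι(z))a)`, coefficient-wise. -/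
  skew : ∀ (a b : V) (k : ℤ),
    Y a b k = ∑ᶠ q : ℕ × ℤ, iotaPow 𝓕.inv q.2 (k - (q.1 : ℤ)) • S q.1 (Y b a q.2)

end

/-!
Embed `V` into a commutative ring, for instance into the trivial square-zero extension of `R` by
`V`. All series then live in the ring `R((x))((y))` of iterated Laurent series, and the iterated
residue against the differential `p_F(x) p_F(y) dx dy` computes iterated brackets.

Since `p_F(z) dz` is invariant, residues do not change under `x ↦ F(x, y)` and change sign under
`x ↦ ι(x)`. By the chain rule, both follow from the fact that `Aᵐ dA` has a residue only for
`m = -1`, which for nonnegative `m` is seen by lifting `A` to torsion-free coefficients. Hence the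
bracket of a shift `𝒮⁽ⁿ⁾(v)`, `n ≥ 1`, with anything vanishes, and skew symmetry of `Y` gives
antisymmetry modulo shifts.

By weak associativity and skew symmetry, the three terms of the Jacobi identity are residues of
expansions of one expression `F(x, y)⁻ᴺ xᵏ yˡ g(x, y)` in the regions `|y| < |x|`, `|x| < |y|` and
`|F(x, y)| < |y|`. The first residue is the sum of the other two, for every `g ∈ R⟦x, y⟧`: with
`F(x, y) = x + y c` one lowers `N` or raises `l`. For `N = 0` the first two expansions coincide and
the third has no residue; for `0 ≤ l` the first has none, and the other two are exchanged by a
change of variables of sign `-1`.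
-/

noncomputable section

/-! ### Substitutions, Euler derivations and residues of Hahn series -/

open HahnSeries

section HahnSeries

variable {Γ R : Type*} [AddCommGroup Γ] [LinearOrder Γ] [IsOrderedAddMonoid Γ] [CommRing R]

lemma finite_setOf_mem_and_sub_mem {S T : Set Γ} (hS : S.IsPWO) (hT : T.IsPWO) (n : Γ) :
    {γ | γ ∈ S ∧ n - γ ∈ T}.Finite := by
  refine ((Set.AddAntidiagonal.finite_of_isPWO hS hT n).image Prod.fst).subset ?_
  rintro γ ⟨hγ, hnγ⟩
  exact ⟨(γ, n - γ), ⟨hγ, hnγ, add_sub_cancel ..⟩, rfl⟩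

lemma hasFiniteSupport_coeff_mul_coeff_sub (f g : R⟦Γ⟧) (n : Γ) :
    (fun γ => f.coeff γ * g.coeff (n - γ)).HasFiniteSupport :=
  (finite_setOf_mem_and_sub_mem f.isPWO_support g.isPWO_support n).subset fun _ h =>
    ⟨left_ne_zero_of_mul h, right_ne_zero_of_mul h⟩

lemma coeff_mul_eq_finsum (f g : R⟦Γ⟧) (n : Γ) :
    (f * g).coeff n = ∑ᶠ γ, f.coeff γ * g.coeff (n - γ) := by
  rw [coeff_mul, finsum_eq_sum_of_support_subset
    (s := (Finset.antidiagonal f.isPWO_support g.isPWO_support n).image Prod.fst)]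
  · have hinj : Set.InjOn Prod.fst
        (Finset.antidiagonal f.isPWO_support g.isPWO_support n : Set (Γ × Γ)) := by
      intro p hp q hq h
      rw [Finset.mem_coe, Finset.mem_antidiagonal] at hp hq
      exact Prod.ext h (add_left_cancel (a := p.1) (by rw [hp.2.2, h, hq.2.2]))
    rw [Finset.sum_image hinj]
    refine Finset.sum_congr rfl fun p hp => ?_
    rw [← (Finset.mem_antidiagonal.1 hp).2.2, add_sub_cancel_left]
  · intro γ hγ
    rw [Finset.coe_image]
    exact ⟨(γ, n - γ), Finset.mem_antidiagonal.2
      ⟨left_ne_zero_of_mul hγ, right_ne_zero_of_mul hγ, add_sub_cancel ..⟩, rfl⟩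

lemma orderTop_pos_of_coeff_eq_zero {Γ : Type*} [AddCommGroup Γ] [LinearOrder Γ] {h : R⟦Γ⟧}
    (H : ∀ γ ≤ 0, h.coeff γ = 0) : 0 < h.orderTop := by
  by_contra! hle
  obtain ⟨g, hg⟩ := WithTop.ne_top_iff_exists.1 (hle.trans_lt (WithTop.coe_lt_top (0 : Γ))).ne
  rw [← hg] at hle
  exact coeff_orderTop_ne hg.symm (H g (by exact_mod_cast hle))

/-- A substitution of series for the monomials `t ^ γ`, multiplicative in `γ`. The supports of the
series divided by the replaced monomials lie in one partially well-ordered set `excess`, which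
makes the substitution into an arbitrary Hahn series converge. -/
structure MonomialSubst (Γ R : Type*) [AddCommGroup Γ] [LinearOrder Γ] [IsOrderedAddMonoid Γ]
    [CommRing R] where
  toHom : Multiplicative Γ →* R⟦Γ⟧
  excess : Set Γ
  isPWO_excess : excess.IsPWO
  sub_mem_excess : ∀ γ δ : Γ, (toHom (.ofAdd γ)).coeff δ ≠ 0 → δ - γ ∈ excess

namespace MonomialSubst

variable (s : MonomialSubst Γ R)

/-- The series substituted for the monomial of exponent `γ`. -/
def image (γ : Γ) : R⟦Γ⟧ := s.toHom (.ofAdd γ)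

lemma image_add (γ δ : Γ) : s.image (γ + δ) = s.image γ * s.image δ := by
  rw [image, ofAdd_add, map_mul, image, image]

lemma image_zero : s.image 0 = 1 := map_one s.toHom

/-- The family of terms of the series obtained by substitution into `f`. -/
def family (f : R⟦Γ⟧) : SummableFamily Γ R Γ where
  toFun γ := f.coeff γ • s.image γ
  isPWO_iUnion_support' := by
    refine (f.isPWO_support.add s.isPWO_excess).mono ?_
    intro n hn
    simp only [Set.mem_iUnion, mem_support, coeff_smul, smul_eq_mul] at hn
    obtain ⟨γ, hγ⟩ := hn
    exact ⟨γ, left_ne_zero_of_mul hγ, n - γ, s.sub_mem_excess _ _ (right_ne_zero_of_mul hγ),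
      add_sub_cancel ..⟩
  finite_co_support' n := by
    refine (finite_setOf_mem_and_sub_mem f.isPWO_support s.isPWO_excess n).subset fun γ hγ => ?_
    simp only [coeff_smul, smul_eq_mul] at hγ
    exact ⟨left_ne_zero_of_mul hγ, s.sub_mem_excess _ _ (right_ne_zero_of_mul hγ)⟩

lemma family_apply (f : R⟦Γ⟧) (γ : Γ) : s.family f γ = f.coeff γ • s.image γ := rfl

lemma family_add (f g : R⟦Γ⟧) : s.family (f + g) = s.family f + s.family g := by
  ext γ : 1
  simp only [SummableFamily.add_apply, family_apply, coeff_add, add_smul]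

lemma hsum_family_one : (s.family 1).hsum = 1 := by
  ext n
  rw [SummableFamily.coeff_hsum, finsum_eq_single _ 0]
  · rw [family_apply, coeff_one, if_pos rfl, one_smul, image_zero]
  · intro γ hγ
    rw [family_apply, coeff_one, if_neg hγ, zero_smul, coeff_zero]

lemma hsum_family_mul (f g : R⟦Γ⟧) :
    (s.family (f * g)).hsum = (s.family f).hsum * (s.family g).hsum := by
  ext n
  rw [← SummableFamily.hsum_mul, SummableFamily.coeff_hsum, SummableFamily.coeff_hsum]
  let e : Γ × Γ ≃ Γ × Γ :=
    { toFun p := (p.2, p.1 - p.2)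
      invFun p := (p.1 + p.2, p.1)
      left_inv p := by simp
      right_inv p := by simp }
  have hfin := ((s.family f).mul (s.family g)).finite_co_support n
  rw [← finsum_comp_equiv e, finsum_curry]
  · refine finsum_congr fun ε => ?_
    rw [family_apply, coeff_smul, smul_eq_mul, coeff_mul_eq_finsum,
      finsum_mul' _ _ (hasFiniteSupport_coeff_mul_coeff_sub f g ε)]
    refine finsum_congr fun γ => ?_
    simp only [SummableFamily.mul_toFun, family_apply, e, Equiv.coe_fn_mk]
    rw [smul_mul_smul_comm, ← image_add, add_sub_cancel, coeff_smul, smul_eq_mul]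
  · exact hfin.preimage e.injective.injOn

/-- The substitution as a ring homomorphism. -/
def hom : R⟦Γ⟧ →+* R⟦Γ⟧ where
  toFun f := (s.family f).hsum
  map_one' := s.hsum_family_one
  map_mul' := s.hsum_family_mul
  map_zero' := by ext n; simp [family_apply]
  map_add' f g := by rw [family_add, SummableFamily.hsum_add]

lemma hom_mul_eq_hsum (f P : R⟦Γ⟧) : s.hom f * P = (P • s.family f).hsum := by
  rw [SummableFamily.hsum_smul, mul_comm]; rfl

lemma coeff_smul_family (f P : R⟦Γ⟧) (γ n : Γ) :
    ((P • s.family f) γ).coeff n = f.coeff γ * (s.image γ * P).coeff n := by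
  rw [SummableFamily.smul_apply, of_symm_smul_of_eq_mul, family_apply, mul_smul_comm, mul_comm P,
    coeff_smul, smul_eq_mul]

lemma coeff_hom_mul (f P : R⟦Γ⟧) (n : Γ) :
    (s.hom f * P).coeff n = ∑ᶠ γ, f.coeff γ * (s.image γ * P).coeff n := by
  simp only [hom_mul_eq_hsum, SummableFamily.coeff_hsum, coeff_smul_family]

lemma hasFiniteSupport_coeff_hom_mul (f P : R⟦Γ⟧) (n : Γ) :
    (fun γ => f.coeff γ * (s.image γ * P).coeff n).HasFiniteSupport := by
  simpa only [coeff_smul_family] using (P • s.family f).finite_co_support n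

lemma coeff_hom (f : R⟦Γ⟧) (n : Γ) :
    (s.hom f).coeff n = ∑ᶠ γ, f.coeff γ * (s.image γ).coeff n := by
  simpa only [mul_one] using s.coeff_hom_mul f 1 n

lemma hasFiniteSupport_coeff_hom (f : R⟦Γ⟧) (n : Γ) :
    (fun γ => f.coeff γ * (s.image γ).coeff n).HasFiniteSupport := by
  simpa only [mul_one] using s.hasFiniteSupport_coeff_hom_mul f 1 n

lemma hom_single (γ : Γ) (r : R) : s.hom (single γ r) = r • s.image γ := by
  ext n
  rw [coeff_hom, finsum_eq_single _ γ]
  · rw [coeff_single_same, coeff_smul, smul_eq_mul]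
  · intro δ hδ
    rw [coeff_single_of_ne hδ, zero_mul]

end MonomialSubst

/-- The Euler derivation `t ^ γ ↦ φ γ • t ^ γ` of a weight `φ` on the exponents. -/
def euler (φ : Γ →+ ℤ) : Derivation R R⟦Γ⟧ R⟦Γ⟧ :=
  .mk'
    { toFun f :=
        { coeff := fun γ => φ γ * f.coeff γ
          isPWO_support' := f.isPWO_support.mono fun _ h => right_ne_zero_of_mul h }
      map_add' f g := by ext; simp only [coeff_add, mul_add]
      map_smul' r f := by
        ext; simp only [coeff_smul, smul_eq_mul, mul_left_comm, RingHom.id_apply] }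
    fun f g => by
      ext n
      simp only [LinearMap.coe_mk, AddHom.coe_mk, smul_eq_mul, mul_comm g, coeff_add,
        coeff_mul_eq_finsum]
      rw [← finsum_add_distrib ((hasFiniteSupport_coeff_mul_coeff_sub f g n).subset ?_)
        ((hasFiniteSupport_coeff_mul_coeff_sub f g n).subset ?_),
        mul_finsum' _ _ (hasFiniteSupport_coeff_mul_coeff_sub f g n)]
      · refine finsum_congr fun γ => ?_
        have hφ : φ n = φ γ + φ (n - γ) := by rw [← map_add, add_sub_cancel]
        rw [hφ]; push_cast; ring
      · exact fun γ hγ h0 => hγ (by dsimp only at h0 ⊢; linear_combination (φ (n - γ) : R) * h0)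
      · exact fun γ hγ h0 => hγ (by dsimp only at h0 ⊢; linear_combination (φ γ : R) * h0)

lemma coeff_euler (φ : Γ →+ ℤ) (f : R⟦Γ⟧) (γ : Γ) : (euler φ f).coeff γ = φ γ * f.coeff γ := rfl

lemma coeff_euler_eq_zero (φ : Γ →+ ℤ) (f : R⟦Γ⟧) {n : Γ} (hn : φ n = 0) :
    (euler φ f).coeff n = 0 := by
  rw [coeff_euler, hn, Int.cast_zero, zero_mul]

lemma euler_single (φ : Γ →+ ℤ) (γ : Γ) (r : R) :
    euler φ (single γ r) = (φ γ : R⟦Γ⟧) * single γ r := by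
  ext n
  rw [coeff_euler, ← single_zero_intCast, coeff_single_zero_mul]
  rcases eq_or_ne n γ with rfl | hn
  · rfl
  · rw [coeff_single_of_ne hn, mul_zero, mul_zero]

/-- The ring homomorphism of Hahn series induced by one of coefficient rings. -/
def coeffwise {S : Type*} [CommRing S] (f : R →+* S) : R⟦Γ⟧ →+* S⟦Γ⟧ where
  toFun h := h.map f
  map_one' := HahnSeries.map_one f.toMonoidWithZeroHom
  map_mul' _ _ := HahnSeries.map_mul f.toNonUnitalRingHom
  map_zero' := by ext; simp
  map_add' _ _ := by ext; simp

lemma coeff_coeffwise {S : Type*} [CommRing S] (f : R →+* S) (h : R⟦Γ⟧) (n : Γ) :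
    (coeffwise f h).coeff n = f (h.coeff n) := rfl

lemma euler_coeffwise {S : Type*} [CommRing S] (f : R →+* S) (φ : Γ →+ ℤ) (h : R⟦Γ⟧) :
    euler φ (coeffwise f h) = coeffwise f (euler φ h) := by
  ext n
  simp only [coeff_euler, coeff_coeffwise, map_mul, map_intCast]

lemma coeff_pow_mul_euler_of_isAddTorsionFree [IsAddTorsionFree R] (φ : Γ →+ ℤ) (h : R⟦Γ⟧) (k : ℕ)
    {n : Γ} (hn : φ n = 0) : (h ^ k * euler φ h).coeff n = 0 := by
  have hpow : euler φ (h ^ (k + 1)) = (k + 1) • (h ^ k * euler φ h) := by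
    rw [Derivation.leibniz_pow, Nat.add_sub_cancel, smul_eq_mul]
  have hsmul : (k + 1) • (h ^ k * euler φ h).coeff n = 0 := by
    rw [← coeff_smul, ← hpow, coeff_euler_eq_zero φ _ hn]
  exact (smul_eq_zero.1 hsmul).resolve_left k.succ_ne_zero

lemma exists_coeffwise_mvPolynomial_eq (h : R⟦Γ⟧) :
    ∃ (p : MvPolynomial R ℤ →+* R) (h₀ : (MvPolynomial R ℤ)⟦Γ⟧), coeffwise p h₀ = h := by
  classical
  refine ⟨(MvPolynomial.aeval id).toRingHom,
    { coeff γ := if h.coeff γ = 0 then 0 else MvPolynomial.X (h.coeff γ)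
      isPWO_support' := h.isPWO_support.mono fun γ hγ h0 => hγ (if_pos h0) }, ?_⟩
  ext γ
  rw [coeff_coeffwise]
  by_cases h0 : h.coeff γ = 0
  · simp [h0]
  · simp [h0]

/-- The coefficients lift to a torsion-free ring, where `h ^ k * euler φ h` is formally the
derivative of `h ^ (k + 1) / (k + 1)`. -/
lemma coeff_pow_mul_euler (φ : Γ →+ ℤ) (h : R⟦Γ⟧) (k : ℕ) {n : Γ} (hn : φ n = 0) :
    (h ^ k * euler φ h).coeff n = 0 := by
  obtain ⟨p, h₀, rfl⟩ := exists_coeffwise_mvPolynomial_eq h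
  rw [euler_coeffwise, ← map_pow, ← map_mul, coeff_coeffwise,
    coeff_pow_mul_euler_of_isAddTorsionFree φ h₀ k hn, map_zero]

/-- The chain rule: if a weight acts on the substituted series through the weights `φ₁`, `φ₂` of
the exponents, it acts in the same way on all series. -/
lemma MonomialSubst.euler_hom (s : MonomialSubst Γ R) (φ φ₁ φ₂ : Γ →+ ℤ) (α β : R⟦Γ⟧)
    (hs : ∀ γ, euler φ (s.image γ) = s.image γ * ((φ₁ γ : R⟦Γ⟧) * α + (φ₂ γ : R⟦Γ⟧) * β))
    (f : R⟦Γ⟧) :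
    euler φ (s.hom f) = s.hom (euler φ₁ f) * α + s.hom (euler φ₂ f) * β := by
  ext n
  rw [coeff_add, s.coeff_hom_mul, s.coeff_hom_mul, coeff_euler, s.coeff_hom,
    ← finsum_add_distrib (s.hasFiniteSupport_coeff_hom_mul _ _ _)
      (s.hasFiniteSupport_coeff_hom_mul _ _ _), mul_finsum' _ _ (s.hasFiniteSupport_coeff_hom _ _)]
  refine finsum_congr fun γ => ?_
  have hγ : (φ n : R) * (s.image γ).coeff n =
      φ₁ γ * (s.image γ * α).coeff n + φ₂ γ * (s.image γ * β).coeff n := by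
    rw [← coeff_euler, hs, mul_add, mul_left_comm, mul_left_comm _ (φ₂ γ : R⟦Γ⟧), coeff_add,
      ← single_zero_intCast, ← single_zero_intCast, coeff_single_zero_mul, coeff_single_zero_mul]
  rw [coeff_euler, coeff_euler]
  linear_combination f.coeff γ * hγ

/-- The powers `(1 + h) ^ n` of a series `h` of positive order, by their binomial expansions. -/
def oneAddZPow (h : R⟦Γ⟧) : Multiplicative ℤ →* R⟦Γ⟧ where
  toFun n := PowerSeries.heval h (PowerSeries.binomialSeries R n.toAdd)
  map_one' := by rw [toAdd_one, PowerSeries.binomialSeries_zero, map_one]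
  map_mul' m n := by rw [toAdd_mul, PowerSeries.binomialSeries_add, map_mul]

lemma coeff_heval_mul {h : R⟦Γ⟧} (hh : 0 < h.orderTop) (f : PowerSeries R) (P : R⟦Γ⟧) (n : Γ) :
    (PowerSeries.heval h f * P).coeff n = ∑ᶠ k, f.coeff k * (h ^ k * P).coeff n := by
  have hsum : PowerSeries.heval h f * P = (P • SummableFamily.powerSeriesFamily h f).hsum := by
    rw [SummableFamily.hsum_smul, mul_comm]; rfl
  rw [hsum, SummableFamily.coeff_hsum]
  refine finsum_congr fun γ => ?_
  rw [SummableFamily.smul_apply, of_symm_smul_of_eq_mul,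
    SummableFamily.powerSeriesFamily_of_orderTop_pos hh, mul_smul_comm, mul_comm P, coeff_smul,
    smul_eq_mul]

/-- The unit `1 + h` for a series `h` of positive order. -/
def oneAddUnit (h : R⟦Γ⟧) : R⟦Γ⟧ˣ := (oneAddZPow h).toHomUnits (.ofAdd 1)

lemma val_oneAddUnit_zpow (h : R⟦Γ⟧) (n : ℤ) :
    (↑(oneAddUnit h ^ n) : R⟦Γ⟧) = PowerSeries.heval h (PowerSeries.binomialSeries R n) := by
  rw [oneAddUnit, ← map_zpow, ← ofAdd_zsmul, smul_eq_mul, mul_one]; rfl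

lemma val_oneAddUnit {h : R⟦Γ⟧} (hh : 0 < h.orderTop) : (oneAddUnit h : R⟦Γ⟧) = 1 + h := by
  have hbin := PowerSeries.binomialSeries_nat (R := ℤ) (A := R) 1
  rw [Nat.cast_one, pow_one] at hbin
  rw [← zpow_one (oneAddUnit h), val_oneAddUnit_zpow, hbin, map_add, PowerSeries.heval_X _ hh,
    map_one]

lemma coeff_oneAddUnit_zpow {h : R⟦Γ⟧} (hh : 0 < h.orderTop) (n : ℤ) (γ : Γ) :
    (↑(oneAddUnit h ^ n) : R⟦Γ⟧).coeff γ =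
      ∑ᶠ k : ℕ, ((Ring.choose n k : ℤ) : R) * (h ^ k).coeff γ := by
  have hcoeff := coeff_heval_mul hh (PowerSeries.binomialSeries R n) 1 γ
  simpa only [mul_one, ← val_oneAddUnit_zpow, PowerSeries.binomialSeries_coeff, zsmul_one]
    using hcoeff

lemma mem_closure_support_of_coeff_oneAddUnit_zpow_ne_zero {h : R⟦Γ⟧} (hh : 0 < h.orderTop)
    {n : ℤ} {γ : Γ} (hγ : (↑(oneAddUnit h ^ n) : R⟦Γ⟧).coeff γ ≠ 0) :
    γ ∈ AddSubmonoid.closure h.support := by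
  rw [coeff_oneAddUnit_zpow hh] at hγ
  by_contra hmem
  refine hγ (finsum_eq_zero_of_forall_eq_zero fun k => mul_eq_zero_of_right _ ?_)
  by_contra hk
  exact hmem (SummableFamily.support_pow_subset_closure h k hk)

lemma nonneg_of_mem_closure_support {h : R⟦Γ⟧} (hh : 0 < h.orderTop) {γ : Γ}
    (hγ : γ ∈ AddSubmonoid.closure h.support) : 0 ≤ γ := by
  refine (AddSubmonoid.closure_le (S := AddSubmonoid.nonneg Γ)).2 (fun γ hγ => ?_) hγ
  by_contra hlt
  exact hγ (coeff_eq_zero_of_lt_orderTop (lt_trans (by exact_mod_cast not_le.1 hlt) hh))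

lemma isPWO_closure_support {h : R⟦Γ⟧} (hh : 0 < h.orderTop) :
    (AddSubmonoid.closure h.support : Set Γ).IsPWO :=
  h.isPWO_support.addSubmonoid_closure fun _ hγ =>
    nonneg_of_mem_closure_support hh (AddSubmonoid.subset_closure hγ)

/-- The monomials with invertible coefficient as units. -/
def monomialUnit : Multiplicative Γ × Rˣ →* R⟦Γ⟧ˣ :=
  MonoidHom.toHomUnits
    { toFun p := single p.1.toAdd (p.2 : R)
      map_one' := rfl
      map_mul' p q := by rw [single_mul_single]; rfl }

lemma val_monomialUnit (γ : Γ) (c : Rˣ) :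
    (monomialUnit (.ofAdd γ, c) : R⟦Γ⟧) = single γ (c : R) := rfl

/-- A Hahn series with a lowest exponent, whose coefficient is invertible. -/
structure LeadingUnit (Γ R : Type*) [AddCommGroup Γ] [LinearOrder Γ] [IsOrderedAddMonoid Γ]
    [CommRing R] where
  series : R⟦Γ⟧
  exp : Γ
  lead : Rˣ
  coeff_exp : series.coeff exp = lead
  coeff_of_lt : ∀ γ < exp, series.coeff γ = 0

namespace LeadingUnit

variable (A : LeadingUnit Γ R)

/-- The series `h` of positive order in the factorization `lead * t ^ exp * (1 + h)`. -/
def tail : R⟦Γ⟧ := single (-A.exp) ((A.lead⁻¹ : Rˣ) : R) * A.series - 1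

lemma coeff_tail (γ : Γ) :
    A.tail.coeff γ =
      ((A.lead⁻¹ : Rˣ) : R) * A.series.coeff (γ + A.exp) - (1 : R⟦Γ⟧).coeff γ := by
  have hγ : γ = (γ + A.exp) + -A.exp := (add_neg_cancel_right ..).symm
  rw [tail, coeff_sub]
  nth_rw 1 [hγ]
  rw [coeff_single_mul_add]

lemma orderTop_tail_pos : 0 < A.tail.orderTop := by
  refine orderTop_pos_of_coeff_eq_zero fun γ hγ => ?_
  rw [coeff_tail, coeff_one]
  rcases hγ.eq_or_lt with rfl | hlt
  · rw [zero_add, A.coeff_exp, Units.inv_mul, if_pos rfl, sub_self]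
  · rw [A.coeff_of_lt _ (add_lt_of_neg_left _ hlt), mul_zero, if_neg hlt.ne, sub_zero]

/-- The series as a unit of the ring of Hahn series. -/
def unit : R⟦Γ⟧ˣ := monomialUnit (.ofAdd A.exp, A.lead) * oneAddUnit A.tail

lemma val_unit : (A.unit : R⟦Γ⟧) = A.series := by
  rw [unit, Units.val_mul, val_monomialUnit, val_oneAddUnit A.orderTop_tail_pos, tail,
    add_sub_cancel, ← mul_assoc, single_mul_single, add_neg_cancel, Units.mul_inv, single_zero_one,
    one_mul]

lemma val_unit_zpow (n : ℤ) :
    (↑(A.unit ^ n) : R⟦Γ⟧) =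
      single (n • A.exp) ((A.lead ^ n : Rˣ) : R) * (↑(oneAddUnit A.tail ^ n) : R⟦Γ⟧) := by
  rw [unit, mul_zpow, Units.val_mul, ← map_zpow, Prod.pow_mk, ← ofAdd_zsmul, val_monomialUnit]

lemma coeff_unit_zpow (n : ℤ) (γ : Γ) :
    (↑(A.unit ^ n) : R⟦Γ⟧).coeff γ = ((A.lead ^ n : Rˣ) : R) *
      ∑ᶠ k : ℕ, ((Ring.choose n k : ℤ) : R) * (A.tail ^ k).coeff (γ - n • A.exp) := by
  have hγ : γ = (γ - n • A.exp) + n • A.exp := (sub_add_cancel ..).symm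
  rw [val_unit_zpow]
  nth_rw 1 [hγ]
  rw [coeff_single_mul_add, coeff_oneAddUnit_zpow A.orderTop_tail_pos]

lemma sub_mem_closure_support_tail {n : ℤ} {γ : Γ} (hγ : (↑(A.unit ^ n) : R⟦Γ⟧).coeff γ ≠ 0) :
    γ - n • A.exp ∈ AddSubmonoid.closure A.tail.support := by
  refine mem_closure_support_of_coeff_oneAddUnit_zpow_ne_zero A.orderTop_tail_pos (n := n) ?_
  rw [coeff_oneAddUnit_zpow A.orderTop_tail_pos]
  rw [coeff_unit_zpow] at hγ
  exact right_ne_zero_of_mul hγ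

lemma coeff_unit_zpow_of_lt {n : ℤ} {γ : Γ} (hγ : γ < n • A.exp) :
    (↑(A.unit ^ n) : R⟦Γ⟧).coeff γ = 0 := by
  by_contra hne
  have h := nonneg_of_mem_closure_support A.orderTop_tail_pos (A.sub_mem_closure_support_tail hne)
  exact hγ.not_ge (sub_nonneg.1 h)

lemma coeff_inv_unit_mul_euler (φ : Γ →+ ℤ) {n : Γ} (hn : φ n = 0) :
    (((A.unit⁻¹ : R⟦Γ⟧ˣ) : R⟦Γ⟧) * euler φ A.series).coeff n =
      if n = 0 then (φ A.exp : R) else 0 := by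
  set m := monomialUnit (.ofAdd A.exp, A.lead)
  set u := oneAddUnit A.tail
  have hm : euler φ (m : R⟦Γ⟧) = (φ A.exp : R⟦Γ⟧) * m := euler_single ..
  have hu : euler φ (u : R⟦Γ⟧) = euler φ A.tail := by
    rw [val_oneAddUnit A.orderTop_tail_pos, map_add, Derivation.map_one_eq_zero, zero_add]
  have hlog : ((A.unit⁻¹ : R⟦Γ⟧ˣ) : R⟦Γ⟧) * euler φ A.series =
      (φ A.exp : R⟦Γ⟧) + (↑(u ^ (-1 : ℤ)) : R⟦Γ⟧) * euler φ A.tail := by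
    rw [← A.val_unit, show A.unit = m * u from rfl, mul_inv, Units.val_mul, Units.val_mul,
      Derivation.leibniz, hm, hu, zpow_neg_one, smul_eq_mul, smul_eq_mul]
    linear_combination (((u⁻¹ : R⟦Γ⟧ˣ) : R⟦Γ⟧) * euler φ A.tail +
      ((u⁻¹ : R⟦Γ⟧ˣ) : R⟦Γ⟧) * u * (φ A.exp : R⟦Γ⟧)) * Units.inv_mul m +
      (φ A.exp : R⟦Γ⟧) * Units.inv_mul u
  rw [hlog, coeff_add, val_oneAddUnit_zpow, coeff_heval_mul A.orderTop_tail_pos]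
  simp only [coeff_pow_mul_euler φ _ _ hn, mul_zero, finsum_zero, add_zero]
  rw [← single_zero_intCast, coeff_single]
  congr

/-- The residue theorem: among the differentials `A ^ m dA` only `A⁻¹ dA` has a residue. -/
theorem coeff_unit_zpow_mul_euler (φ : Γ →+ ℤ) (m : ℤ) {n : Γ} (hn : φ n = 0) :
    ((↑(A.unit ^ m) : R⟦Γ⟧) * euler φ A.series).coeff n =
      if m = -1 ∧ n = 0 then (φ A.exp : R) else 0 := by
  rcases lt_trichotomy m (-1) with hm | rfl | hm
  · obtain ⟨k, rfl⟩ : ∃ k : ℕ, m = -(k + 2 : ℕ) := ⟨(-m - 2).toNat, by omega⟩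
    have hinv := coeff_pow_mul_euler φ ((A.unit⁻¹ : R⟦Γ⟧ˣ) : R⟦Γ⟧) k hn
    rw [Derivation.leibniz_of_mul_eq_one _ A.unit.inv_mul, smul_eq_mul, neg_mul, mul_neg, coeff_neg,
      neg_eq_zero, ← mul_assoc, ← _root_.pow_add] at hinv
    rw [if_neg (by omega), zpow_neg, ← inv_zpow, zpow_natCast, Units.val_pow_eq_pow_val,
      ← A.val_unit, hinv]
  · rw [zpow_neg_one, A.coeff_inv_unit_mul_euler φ hn]
    simp only [true_and]
  · obtain ⟨k, rfl⟩ : ∃ k : ℕ, m = k := ⟨m.toNat, by omega⟩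
    rw [if_neg (by omega), zpow_natCast, Units.val_pow_eq_pow_val, A.val_unit,
      coeff_pow_mul_euler φ _ k hn]

end LeadingUnit

end HahnSeries

/-! ### Iterated Laurent series -/

section PowerSeriesExponents

lemma finsum_comp_of_injective {α β M : Type*} [AddCommMonoid M] {e : α → β}
    (he : Function.Injective e) {g : β → M} (hg : g.support ⊆ Set.range e) :
    ∑ᶠ a, g (e a) = ∑ᶠ b, g b := by
  rw [← finsum_mem_range he, finsum_mem_def, Set.indicator_eq_self.2 hg]

variable {σ Γ R : Type*} [AddCommGroup Γ] [LinearOrder Γ] [CommRing R] {e : (σ →₀ ℕ) →+ Γ}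

lemma eq_of_coeff_eq_on_range {f g : R⟦Γ⟧} (h : ∀ d, f.coeff (e d) = g.coeff (e d))
    (h' : ∀ γ ∉ Set.range e, f.coeff γ = g.coeff γ) : f = g := by
  ext γ
  by_cases hγ : γ ∈ Set.range e
  · obtain ⟨d, rfl⟩ := hγ
    exact h d
  · exact h' γ hγ

variable [Finite σ]

/-- A power series regarded as a Hahn series, with the monomial of exponent `d` placed at `e d`. -/
def mapExponents (hm : Monotone e) (f : MvPowerSeries σ R) : R⟦Γ⟧ where
  coeff := Function.extend e (fun d => MvPowerSeries.coeff d f) 0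
  isPWO_support' := by
    refine ((Set.isPWO_of_wellQuasiOrderedLE (Set.univ : Set (σ →₀ ℕ))).image_of_monotone hm).mono
      fun γ hγ => ?_
    by_contra h
    exact hγ (Function.extend_apply' _ _ _ fun ⟨d, hd⟩ => h ⟨d, Set.mem_univ d, hd⟩)

lemma coeff_mapExponents (he : Function.Injective e) (hm : Monotone e) (f : MvPowerSeries σ R)
    (d : σ →₀ ℕ) : (mapExponents hm f).coeff (e d) = MvPowerSeries.coeff d f :=
  he.extend_apply ..

lemma coeff_mapExponents_of_notMem (hm : Monotone e) (f : MvPowerSeries σ R) {γ : Γ}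
    (hγ : γ ∉ Set.range e) : (mapExponents hm f).coeff γ = 0 :=
  Function.extend_apply' _ _ _ hγ

lemma mem_range_of_coeff_mapExponents_ne_zero (hm : Monotone e) {f : MvPowerSeries σ R} {γ : Γ}
    (hγ : (mapExponents hm f).coeff γ ≠ 0) : γ ∈ Set.range e := by
  by_contra h
  exact hγ (coeff_mapExponents_of_notMem hm f h)

lemma mapExponents_monomial (he : Function.Injective e) (hm : Monotone e) (d : σ →₀ ℕ) (r : R) :
    mapExponents hm (MvPowerSeries.monomial d r) = single (e d) r := by
  classical
  refine eq_of_coeff_eq_on_range (e := e) (fun d' => ?_) fun γ hγ => ?_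
  · rw [coeff_mapExponents he, MvPowerSeries.coeff_monomial, coeff_single]
    simp only [he.eq_iff]
  · rw [coeff_mapExponents_of_notMem hm _ hγ, coeff_single_of_ne]
    rintro rfl
    exact hγ ⟨d, rfl⟩

variable [IsOrderedAddMonoid Γ]

lemma mapExponents_mul (he : Function.Injective e) (hm : Monotone e) (f g : MvPowerSeries σ R) :
    mapExponents hm (f * g) = mapExponents hm f * mapExponents hm g := by
  classical
  refine eq_of_coeff_eq_on_range (e := e) (fun d => ?_) fun γ hγ => ?_
  · rw [coeff_mapExponents he, MvPowerSeries.coeff_mul, coeff_mul_eq_finsum,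
      finsum_eq_sum_of_support_subset
        (s := (Finset.HasAntidiagonal.antidiagonal d).image (e ∘ Prod.fst))]
    · have hinj : Set.InjOn (e ∘ Prod.fst)
          (Finset.HasAntidiagonal.antidiagonal d : Set ((σ →₀ ℕ) × (σ →₀ ℕ))) := by
        intro p hp q hq h
        rw [Finset.mem_coe, Finset.HasAntidiagonal.mem_antidiagonal] at hp hq
        exact Prod.ext (he h) (add_left_cancel (a := p.1) (by rw [hp, he h, hq]))
      rw [Finset.sum_image hinj]
      refine Finset.sum_congr rfl fun p hp => ?_
      rw [← Finset.HasAntidiagonal.mem_antidiagonal.1 hp, Function.comp_apply, map_add,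
        add_sub_cancel_left, coeff_mapExponents he, coeff_mapExponents he]
    · intro γ hγ
      obtain ⟨a, rfl⟩ := mem_range_of_coeff_mapExponents_ne_zero hm (left_ne_zero_of_mul hγ)
      obtain ⟨b, hb⟩ := mem_range_of_coeff_mapExponents_ne_zero hm (right_ne_zero_of_mul hγ)
      have hab : a + b = d := he (by rw [map_add, hb, add_sub_cancel])
      exact Finset.mem_coe.2 (Finset.mem_image.2
        ⟨(a, b), Finset.HasAntidiagonal.mem_antidiagonal.2 hab, rfl⟩)
  · rw [coeff_mapExponents_of_notMem hm _ hγ, coeff_mul_eq_finsum, eq_comm]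
    refine finsum_eq_zero_of_forall_eq_zero fun δ => ?_
    by_contra hδ
    obtain ⟨a, rfl⟩ := mem_range_of_coeff_mapExponents_ne_zero hm (left_ne_zero_of_mul hδ)
    obtain ⟨b, hb⟩ := mem_range_of_coeff_mapExponents_ne_zero hm (right_ne_zero_of_mul hδ)
    exact hγ ⟨a + b, by rw [map_add, hb, add_sub_cancel]⟩

/-- `mapExponents` as a ring homomorphism. -/
def mapExponentsHom (he : Function.Injective e) (hm : Monotone e) : MvPowerSeries σ R →+* R⟦Γ⟧ where
  toFun := mapExponents hm
  map_one' := by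
    rw [← MvPowerSeries.monomial_zero_one, mapExponents_monomial he, map_zero, single_zero_one]
  map_zero' := eq_of_coeff_eq_on_range (e := e)
    (fun d => by rw [coeff_mapExponents he, map_zero, coeff_zero])
    fun γ hγ => by rw [coeff_mapExponents_of_notMem hm _ hγ, coeff_zero]
  map_add' f g := eq_of_coeff_eq_on_range (e := e)
    (fun d => by simp only [coeff_add, coeff_mapExponents he, map_add])
    fun γ hγ => by simp only [coeff_add, coeff_mapExponents_of_notMem hm _ hγ, add_zero]
  map_mul' := mapExponents_mul he hm

/-- The exponent in two variables with values `m` and `n`. -/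
def finTwoExponent (m n : ℕ) : Fin 2 →₀ ℕ := Finsupp.single 0 m + Finsupp.single 1 n

lemma finTwoExponent_zero (m n : ℕ) : finTwoExponent m n 0 = m := by simp [finTwoExponent]

lemma finTwoExponent_one (m n : ℕ) : finTwoExponent m n 1 = n := by simp [finTwoExponent]

lemma finTwoExponent_eta (d : Fin 2 →₀ ℕ) : finTwoExponent (d 0) (d 1) = d := by
  ext i
  fin_cases i
  · exact finTwoExponent_zero ..
  · exact finTwoExponent_one ..

end PowerSeriesExponents

/-- The ring `R((x))((y))`, as Hahn series with exponents ordered first by the degree in `y`. -/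
abbrev IteratedLaurent (R : Type*) [CommRing R] := HahnSeries (ℤ ×ₗ ℤ) R

namespace IteratedLaurent

section Exponents

/-- The exponent of the monomial `x ^ i * y ^ j` in `R((x))((y))`. -/
def xy (i j : ℤ) : ℤ ×ₗ ℤ := toLex (j, i)

lemma xy_zero : xy 0 0 = 0 := rfl

lemma xy_add (i j k l : ℤ) : xy i j + xy k l = xy (i + k) (j + l) := rfl

lemma xy_sub (i j k l : ℤ) : xy i j - xy k l = xy (i - k) (j - l) := rfl

lemma xy_inj {i j k l : ℤ} : xy i j = xy k l ↔ i = k ∧ j = l := by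
  rw [xy, xy, toLex_inj, Prod.mk.injEq, and_comm]

lemma xy_le_xy {i j k l : ℤ} : xy i j ≤ xy k l ↔ j < l ∨ j = l ∧ i ≤ k :=
  Prod.Lex.toLex_le_toLex

lemma xy_lt_xy {i j k l : ℤ} : xy i j < xy k l ↔ j < l ∨ j = l ∧ i < k :=
  Prod.Lex.toLex_lt_toLex

lemma exists_eq_xy (γ : ℤ ×ₗ ℤ) : ∃ i j, γ = xy i j := ⟨γ.2, γ.1, rfl⟩

/-- `xy` as a bijection. -/
def xyEquiv : ℤ × ℤ ≃ ℤ ×ₗ ℤ := (Equiv.prodComm ℤ ℤ).trans toLex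

/-- The degree in `x`. -/
def xDeg : ℤ ×ₗ ℤ →+ ℤ where
  toFun γ := γ.2
  map_zero' := rfl
  map_add' _ _ := rfl

/-- The degree in `y`. -/
def yDeg : ℤ ×ₗ ℤ →+ ℤ where
  toFun γ := γ.1
  map_zero' := rfl
  map_add' _ _ := rfl

@[simp] lemma xDeg_xy (i j : ℤ) : xDeg (xy i j) = i := rfl

@[simp] lemma yDeg_xy (i j : ℤ) : yDeg (xy i j) = j := rfl

lemma zsmul_xy (n i j : ℤ) : n • xy i j = xy (n * i) (n * j) := by
  obtain ⟨k, l, hkl⟩ := exists_eq_xy (n • xy i j)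
  have hk := congrArg xDeg hkl
  have hl := congrArg yDeg hkl
  rw [map_zsmul, xDeg_xy, xDeg_xy, smul_eq_mul] at hk
  rw [map_zsmul, yDeg_xy, yDeg_xy, smul_eq_mul] at hl
  rw [hkl, hk, hl]

/-- The exponents of the power series in `x` and `y`. -/
def natExp : (Fin 2 →₀ ℕ) →+ ℤ ×ₗ ℤ where
  toFun d := xy (d 0) (d 1)
  map_zero' := rfl
  map_add' d e := by simp [xy_add]

lemma natExp_apply (d : Fin 2 →₀ ℕ) : natExp d = xy (d 0) (d 1) := rfl

lemma natExp_injective : Function.Injective natExp := by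
  intro d e h
  rw [natExp_apply, natExp_apply, xy_inj] at h
  ext i
  fin_cases i
  · exact_mod_cast h.1
  · exact_mod_cast h.2

lemma natExp_mono : Monotone natExp := by
  intro d e h
  have h0 := h 0
  have h1 := h 1
  rw [natExp_apply, natExp_apply, xy_le_xy]
  omega

end Exponents

variable {R : Type*} [CommRing R]

/-- The coefficient of `x ^ i * y ^ j`. -/
def coeffXY (f : IteratedLaurent R) (i j : ℤ) : R := f.coeff (xy i j)

lemma ext_coeffXY {f g : IteratedLaurent R} (h : ∀ i j, coeffXY f i j = coeffXY g i j) : f = g := by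
  ext γ
  exact h γ.2 γ.1

lemma coeffXY_add (f g : IteratedLaurent R) (i j : ℤ) :
    coeffXY (f + g) i j = coeffXY f i j + coeffXY g i j := rfl

lemma coeffXY_neg (f : IteratedLaurent R) (i j : ℤ) : coeffXY (-f) i j = -coeffXY f i j := rfl

lemma coeffXY_sub (f g : IteratedLaurent R) (i j : ℤ) :
    coeffXY (f - g) i j = coeffXY f i j - coeffXY g i j := rfl

lemma coeffXY_mul (f g : IteratedLaurent R) : coeffXY (f * g) = mulS2 (coeffXY f) (coeffXY g) := by
  funext i j
  rw [coeffXY, coeff_mul_eq_finsum, mulS2]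
  exact (finsum_comp_equiv xyEquiv).symm

lemma coeffXY_one : coeffXY (1 : IteratedLaurent R) = oneS2 R := by
  funext i j
  rw [coeffXY, coeff_one, oneS2, ← xy_zero]
  simp only [xy_inj]

lemma coeffXY_pow (f : IteratedLaurent R) (k : ℕ) : coeffXY (f ^ k) = pow2 (coeffXY f) k := by
  induction k with
  | zero => rw [pow_zero, coeffXY_one, pow2]
  | succ k ih => rw [pow_succ', coeffXY_mul, ih, pow2]

/-- The monomial `r * x ^ i * y ^ j`. -/
def monomial (i j : ℤ) (r : R) : IteratedLaurent R := single (xy i j) r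

lemma coeffXY_monomial (i j : ℤ) (r : R) (k l : ℤ) :
    coeffXY (monomial i j r) k l = if k = i ∧ l = j then r else 0 := by
  rw [coeffXY, monomial, coeff_single]
  simp only [xy_inj]

lemma coeffXY_monomial_mul (i j : ℤ) (r : R) (f : IteratedLaurent R) (k l : ℤ) :
    coeffXY (monomial i j r * f) k l = r * coeffXY f (k - i) (l - j) := by
  have hkl : xy k l = xy (k - i) (l - j) + xy i j := by rw [xy_add, sub_add_cancel, sub_add_cancel]
  rw [coeffXY, monomial, hkl, coeff_single_mul_add, coeffXY]

lemma monomial_mul_monomial (i j k l : ℤ) (r s : R) :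
    monomial i j r * monomial k l s = monomial (i + k) (j + l) (r * s) := single_mul_single ..

lemma monomial_zero_one : monomial 0 0 (1 : R) = 1 := rfl

/-- The series with prescribed coefficients. -/
def ofCoeff (f : ℤ → ℤ → R) (hy : ∃ N, ∀ j < N, ∀ i, f i j = 0)
    (hx : ∀ j, ∃ N, ∀ i < N, f i j = 0) : IteratedLaurent R where
  coeff γ := f γ.2 γ.1
  isPWO_support' := by
    refine Set.PartiallyWellOrderedOn.subsetProdLex (α := ℤ) (β := ℤ) ?_ fun j => ?_
    · obtain ⟨N, hN⟩ := hy
      refine (BddBelow.isWF (s := _) ⟨N, ?_⟩).isPWO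
      rintro j ⟨γ, hγ, rfl⟩
      by_contra! h
      exact hγ (hN _ h _)
    · obtain ⟨N, hN⟩ := hx j
      refine (BddBelow.isWF (s := _) ⟨N, ?_⟩).isPWO
      intro i hi
      by_contra! h
      exact hi (hN _ h)

lemma exists_forall_lt_notMem_of_isPWO {s : Set ℤ} (hs : s.IsPWO) : ∃ N, ∀ n < N, n ∉ s := by
  rcases s.eq_empty_or_nonempty with rfl | hne
  · exact ⟨0, fun _ _ => Set.notMem_empty _⟩
  · exact ⟨hs.isWF.min hne, fun n hn h => (hs.isWF.min_le hne h).not_gt hn⟩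

lemma exists_coeffXY_eq_zero_of_lt (f : IteratedLaurent R) :
    ∃ N, ∀ j < N, ∀ i, coeffXY f i j = 0 := by
  obtain ⟨N, hN⟩ := exists_forall_lt_notMem_of_isPWO
    (Set.PartiallyWellOrderedOn.imageProdLex (α := ℤ) (β := ℤ) f.isPWO_support)
  refine ⟨N, fun j hj i => ?_⟩
  by_contra h
  exact hN j hj ⟨xy i j, h, rfl⟩

/-- The inclusion of the ring of power series in two variables. -/
def ofMvPowerSeries : MvPowerSeries (Fin 2) R →+* IteratedLaurent R :=
  mapExponentsHom natExp_injective natExp_mono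

lemma coeff_ofMvPowerSeries (f : MvPowerSeries (Fin 2) R) (d : Fin 2 →₀ ℕ) :
    (ofMvPowerSeries f).coeff (natExp d) = MvPowerSeries.coeff d f :=
  coeff_mapExponents natExp_injective natExp_mono f d

lemma coeff_ofMvPowerSeries_of_notMem (f : MvPowerSeries (Fin 2) R) {γ : ℤ ×ₗ ℤ}
    (hγ : γ ∉ Set.range natExp) : (ofMvPowerSeries f).coeff γ = 0 :=
  coeff_mapExponents_of_notMem natExp_mono f hγ

lemma coeffXY_ofMvPowerSeries_natCast (f : MvPowerSeries (Fin 2) R) (m n : ℕ) :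
    coeffXY (ofMvPowerSeries f) m n = MvPowerSeries.coeff (finTwoExponent m n) f := by
  rw [← coeff_ofMvPowerSeries, natExp_apply, finTwoExponent_zero, finTwoExponent_one, coeffXY]

lemma coeffXY_ofMvPowerSeries_of_neg (f : MvPowerSeries (Fin 2) R) {i j : ℤ} (h : i < 0 ∨ j < 0) :
    coeffXY (ofMvPowerSeries f) i j = 0 := by
  refine coeff_ofMvPowerSeries_of_notMem f ?_
  rintro ⟨d, hd⟩
  rw [natExp_apply, xy_inj] at hd
  omega

lemma ofMvPowerSeries_X_zero : ofMvPowerSeries (MvPowerSeries.X 0) = monomial 1 0 (1 : R) := by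
  refine (mapExponents_monomial natExp_injective natExp_mono _ _).trans ?_
  rw [monomial, natExp_apply]; simp

lemma ofMvPowerSeries_X_one : ofMvPowerSeries (MvPowerSeries.X 1) = monomial 0 1 (1 : R) := by
  refine (mapExponents_monomial natExp_injective natExp_mono _ _).trans ?_
  rw [monomial, natExp_apply]; simp

end IteratedLaurent

lemma derivation_val_units_zpow {R A : Type*} [CommRing R] [CommRing A] [Algebra R A]
    (D : Derivation R A A) (u : Aˣ) (n : ℤ) :
    D ↑(u ^ n) = n * (↑(u ^ n) * (↑u⁻¹ * D u)) := by
  have hinv : D ↑u⁻¹ = -↑u⁻¹ ^ 2 * D u := by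
    rw [D.leibniz_of_mul_eq_one u.inv_mul, smul_eq_mul]
  induction n with
  | zero => rw [zpow_zero, Units.val_one, D.map_one_eq_zero, Int.cast_zero, zero_mul]
  | succ n ih =>
    rw [zpow_add_one, Units.val_mul, D.leibniz, ih, smul_eq_mul, smul_eq_mul]
    push_cast
    linear_combination -((↑(u ^ (n : ℤ)) : A) * D u) * u.inv_mul
  | pred n ih =>
    rw [zpow_sub_one, Units.val_mul, D.leibniz, ih, hinv, smul_eq_mul, smul_eq_mul]
    push_cast
    ring

namespace IteratedLaurent

open scoped Pointwise

variable {R : Type*} [CommRing R]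

/-- The substitution of series with leading terms `c * x` and `d * y` for `x` and `y`. -/
def pairSubst (A B : LeadingUnit (ℤ ×ₗ ℤ) R) (hA : A.exp = xy 1 0) (hB : B.exp = xy 0 1) :
    MonomialSubst (ℤ ×ₗ ℤ) R where
  toHom :=
    { toFun γ := ↑(A.unit ^ xDeg γ.toAdd * B.unit ^ yDeg γ.toAdd)
      map_one' := by simp
      map_mul' γ δ := by
        rw [← Units.val_mul, toAdd_mul, map_add, map_add, zpow_add, zpow_add, mul_mul_mul_comm] }
  excess := (AddSubmonoid.closure A.tail.support : Set (ℤ ×ₗ ℤ)) +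
    (AddSubmonoid.closure B.tail.support : Set (ℤ ×ₗ ℤ))
  isPWO_excess :=
    (isPWO_closure_support A.orderTop_tail_pos).add (isPWO_closure_support B.orderTop_tail_pos)
  sub_mem_excess γ δ hγ := by
    obtain ⟨i, j, rfl⟩ := exists_eq_xy γ
    have hij : xy i j = i • A.exp + j • B.exp := by
      rw [hA, hB, zsmul_xy, zsmul_xy, xy_add]
      simp only [mul_one, mul_zero, add_zero, zero_add]
    obtain ⟨α, hα, β, hβ, rfl⟩ := support_mul_subset (Function.mem_support.2 hγ)
    exact ⟨α - i • A.exp, A.sub_mem_closure_support_tail hα,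
      β - j • B.exp, B.sub_mem_closure_support_tail hβ, by rw [hij]; exact sub_add_sub_comm ..⟩

/-- A substitution `x ↦ a`, `y ↦ b` of power series which extends to `R((x))((y))`: the leading
terms of `a` and `b` are `c * x` and `d * y` with invertible `c` and `d`. -/
structure PowerSeriesSubst (R : Type*) [CommRing R] where
  a : MvPowerSeries (Fin 2) R
  b : MvPowerSeries (Fin 2) R
  c : Rˣ
  d : Rˣ
  coeffXY_a_zero : coeffXY (ofMvPowerSeries a) 0 0 = 0
  coeffXY_a_one : coeffXY (ofMvPowerSeries a) 1 0 = c
  coeffXY_b_zero : ∀ i, coeffXY (ofMvPowerSeries b) i 0 = 0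
  coeffXY_b_one : coeffXY (ofMvPowerSeries b) 0 1 = d

namespace PowerSeriesSubst

variable (s : PowerSeriesSubst R)

/-- The leading term of the series substituted for `x`. -/
def leadingX : LeadingUnit (ℤ ×ₗ ℤ) R where
  series := ofMvPowerSeries s.a
  exp := xy 1 0
  lead := s.c
  coeff_exp := s.coeffXY_a_one
  coeff_of_lt γ hγ := by
    obtain ⟨i, j, rfl⟩ := exists_eq_xy γ
    rw [xy_lt_xy] at hγ
    by_cases hij : i < 0 ∨ j < 0
    · exact coeffXY_ofMvPowerSeries_of_neg _ hij
    · obtain ⟨rfl, rfl⟩ : i = 0 ∧ j = 0 := by omega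
      exact s.coeffXY_a_zero

/-- The leading term of the series substituted for `y`. -/
def leadingY : LeadingUnit (ℤ ×ₗ ℤ) R where
  series := ofMvPowerSeries s.b
  exp := xy 0 1
  lead := s.d
  coeff_exp := s.coeffXY_b_one
  coeff_of_lt γ hγ := by
    obtain ⟨i, j, rfl⟩ := exists_eq_xy γ
    rw [xy_lt_xy] at hγ
    by_cases hij : i < 0 ∨ j < 0
    · exact coeffXY_ofMvPowerSeries_of_neg _ hij
    · obtain rfl : j = 0 := by omega
      exact s.coeffXY_b_zero i

/-- The series substituted for `x` as a unit. -/
def unitX : (IteratedLaurent R)ˣ := s.leadingX.unit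

/-- The series substituted for `y` as a unit. -/
def unitY : (IteratedLaurent R)ˣ := s.leadingY.unit

lemma val_unitX : (s.unitX : IteratedLaurent R) = ofMvPowerSeries s.a := s.leadingX.val_unit

lemma val_unitY : (s.unitY : IteratedLaurent R) = ofMvPowerSeries s.b := s.leadingY.val_unit

/-- The substitution on `R((x))((y))`. -/
def monomialSubst : MonomialSubst (ℤ ×ₗ ℤ) R := pairSubst s.leadingX s.leadingY rfl rfl

/-- The substitution as a ring endomorphism of `R((x))((y))`. -/
def hom : IteratedLaurent R →+* IteratedLaurent R := s.monomialSubst.hom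

lemma image_xy (i j : ℤ) :
    s.monomialSubst.image (xy i j) =
      (↑(s.unitX ^ i) : IteratedLaurent R) * (↑(s.unitY ^ j) : IteratedLaurent R) := rfl

lemma hom_monomial (i j : ℤ) (r : R) :
    s.hom (monomial i j r) = monomial 0 0 r *
      ((↑(s.unitX ^ i) : IteratedLaurent R) * (↑(s.unitY ^ j) : IteratedLaurent R)) := by
  rw [hom, monomial, MonomialSubst.hom_single, image_xy, ← single_zero_mul_eq_smul]
  rfl

lemma hasSubst : MvPowerSeries.HasSubst ![s.a, s.b] := by
  refine MvPowerSeries.hasSubst_of_constantCoeff_zero fun i => ?_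
  rw [← MvPowerSeries.coeff_zero_eq_constantCoeff_apply, ← coeff_ofMvPowerSeries]
  fin_cases i
  · exact s.coeffXY_a_zero
  · exact s.coeffXY_b_zero 0

lemma coeff_hom_ofMvPowerSeries (f : MvPowerSeries (Fin 2) R) (γ : ℤ ×ₗ ℤ) :
    (s.hom (ofMvPowerSeries f)).coeff γ = ∑ᶠ d : Fin 2 →₀ ℕ,
      MvPowerSeries.coeff d f * (ofMvPowerSeries (s.a ^ d 0 * s.b ^ d 1)).coeff γ := by
  rw [hom, MonomialSubst.coeff_hom, ← finsum_comp_of_injective natExp_injective]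
  · refine finsum_congr fun d => ?_
    rw [coeff_ofMvPowerSeries, natExp_apply, image_xy, zpow_natCast, zpow_natCast,
      Units.val_pow_eq_pow_val, Units.val_pow_eq_pow_val, val_unitX, val_unitY, map_mul, map_pow,
      map_pow]
  · intro δ hδ
    by_contra h
    exact hδ (mul_eq_zero_of_left (coeff_ofMvPowerSeries_of_notMem _ h) _)

lemma hom_ofMvPowerSeries (f : MvPowerSeries (Fin 2) R) :
    s.hom (ofMvPowerSeries f) = ofMvPowerSeries (MvPowerSeries.subst ![s.a, s.b] f) := by
  refine eq_of_coeff_eq_on_range (e := natExp) (fun e => ?_) fun γ hγ => ?_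
  · rw [coeff_hom_ofMvPowerSeries, coeff_ofMvPowerSeries, MvPowerSeries.coeff_subst s.hasSubst]
    refine finsum_congr fun d => ?_
    rw [coeff_ofMvPowerSeries, Finsupp.prod_fintype _ _ (fun _ => pow_zero _), Fin.prod_univ_two]
    rfl
  · simp only [coeff_hom_ofMvPowerSeries, coeff_ofMvPowerSeries_of_notMem _ hγ, mul_zero,
      finsum_zero]

lemma euler_hom (φ : ℤ ×ₗ ℤ →+ ℤ) (f : IteratedLaurent R) :
    euler φ (s.hom f) =
      s.hom (euler xDeg f) * (↑s.unitX⁻¹ * euler φ (ofMvPowerSeries s.a)) +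
      s.hom (euler yDeg f) * (↑s.unitY⁻¹ * euler φ (ofMvPowerSeries s.b)) := by
  refine s.monomialSubst.euler_hom φ xDeg yDeg _ _ (fun γ => ?_) f
  obtain ⟨i, j, rfl⟩ := exists_eq_xy γ
  rw [image_xy, Derivation.leibniz, derivation_val_units_zpow, derivation_val_units_zpow, val_unitX,
    val_unitY, xDeg_xy, yDeg_xy, smul_eq_mul, smul_eq_mul]
  ring

end PowerSeriesSubst

end IteratedLaurent

/-! ### The formal group law as a power series -/

section Subst

open MvPowerSeries

variable {R : Type*} [CommRing R] {σ τ : Type*}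

lemma subst_pair_subst {a₁ a₂ : MvPowerSeries σ R} {b : σ → MvPowerSeries τ R}
    (ha : HasSubst ![a₁, a₂]) (hb : HasSubst b) (f : MvPowerSeries (Fin 2) R) :
    subst b (subst ![a₁, a₂] f) = subst ![subst b a₁, subst b a₂] f := by
  rw [subst_comp_subst_apply ha hb]
  congr 1
  funext i
  fin_cases i <;> rfl

lemma subst_powerSeries_subst {a : MvPowerSeries σ R} {b : σ → MvPowerSeries τ R}
    (ha : PowerSeries.HasSubst a) (hb : HasSubst b) (f : PowerSeries R) :
    subst b (PowerSeries.subst a f) = PowerSeries.subst (subst b a) f := by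
  rw [PowerSeries.subst_def, subst_comp_subst_apply ha.const hb]
  rfl

lemma hasSubst_pair {a b : MvPowerSeries τ R} (ha : PowerSeries.HasSubst a)
    (hb : PowerSeries.HasSubst b) : HasSubst ![a, b] :=
  hasSubst_of_constantCoeff_nilpotent fun i => by
    fin_cases i
    · exact ha
    · exact hb

lemma coeff_subst_X_pair {i j k : Fin 3} (hij : i ≠ j) (hik : i ≠ k) (hjk : j ≠ k)
    (g : MvPowerSeries (Fin 2) R) (e : Fin 3 →₀ ℕ) :
    coeff e (subst ![(X i : MvPowerSeries (Fin 3) R), X j] g) =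
      if e k = 0 then coeff (finTwoExponent (e i) (e j)) g else 0 := by
  let ν : Fin 2 ↪ Fin 3 := ⟨![i, j], by
    intro a b h
    fin_cases a <;> fin_cases b <;> simp_all [hij.symm]⟩
  have hν : ![(X i : MvPowerSeries (Fin 3) R), X j] = X ∘ ν := by
    funext l
    fin_cases l <;> rfl
  have hk : k ∉ Set.range ν := by
    rintro ⟨l, hl⟩
    fin_cases l
    · exact hik hl
    · exact hjk hl
  rw [hν, ← rename_eq_subst]
  split_ifs with he
  · have hembed : e = Finsupp.embDomain ν (finTwoExponent (e i) (e j)) := by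
      ext l
      obtain rfl | rfl | rfl : l = i ∨ l = j ∨ l = k := by omega
      · exact (finTwoExponent_zero ..).symm.trans (Finsupp.embDomain_apply_self ν _ 0).symm
      · exact (finTwoExponent_one ..).symm.trans (Finsupp.embDomain_apply_self ν _ 1).symm
      · rw [he, Finsupp.embDomain_of_notMem_range _ _ _ hk]
    nth_rw 1 [hembed]
    rw [coeff_embDomain_rename]
  · refine coeff_rename_eq_zero _ _ ?_
    rintro ⟨d, rfl⟩
    exact he (Finsupp.mapDomain_of_notMem_range _ _ hk)

lemma coeff_subst_X_pair_mul_X_pow {i j k : Fin 3} (hij : i ≠ j) (hik : i ≠ k) (hjk : j ≠ k)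
    (g : MvPowerSeries (Fin 2) R) (n : ℕ) (e : Fin 3 →₀ ℕ) :
    coeff e (subst ![(X i : MvPowerSeries (Fin 3) R), X j] g * X k ^ n) =
      if e k = n then coeff (finTwoExponent (e i) (e j)) g else 0 := by
  rw [X_pow_eq, coeff_mul_monomial, mul_one, coeff_subst_X_pair hij hik hjk]
  simp only [Finsupp.single_le_iff, Finsupp.tsub_apply, Finsupp.single_eq_same,
    Finsupp.single_eq_of_ne hik, Finsupp.single_eq_of_ne hjk, Nat.sub_zero]
  split_ifs <;> first | rfl | omega

end Subst

namespace FormalGroupLaw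

open IteratedLaurent MvPowerSeries

variable {R : Type*} [CommRing R] (𝓕 : FormalGroupLaw R)

/-- The formal group law as a power series. -/
def series : MvPowerSeries (Fin 2) R := fun d => 𝓕.F (d 0) (d 1)

lemma coeff_series (d : Fin 2 →₀ ℕ) : coeff d 𝓕.series = 𝓕.F (d 0) (d 1) := rfl

lemma coeffXY_series : coeffXY (ofMvPowerSeries 𝓕.series) = 𝓕.F := by
  funext i j
  by_cases h : i < 0 ∨ j < 0
  · rw [coeffXY_ofMvPowerSeries_of_neg _ h, 𝓕.F_supp _ _ h]
  · obtain ⟨m, rfl⟩ : ∃ m : ℕ, i = m := ⟨i.toNat, by omega⟩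
    obtain ⟨n, rfl⟩ : ∃ n : ℕ, j = n := ⟨j.toNat, by omega⟩
    rw [coeffXY_ofMvPowerSeries_natCast, coeff_series, finTwoExponent_zero, finTwoExponent_one]

lemma coeffXY_series_pow (m : ℕ) : coeffXY (ofMvPowerSeries (𝓕.series ^ m)) = pow2 𝓕.F m := by
  rw [map_pow, coeffXY_pow, coeffXY_series]

lemma coeff_series_pow (m : ℕ) (d : Fin 2 →₀ ℕ) :
    coeff d (𝓕.series ^ m) = pow2 𝓕.F m (d 0) (d 1) := by
  rw [← coeffXY_series_pow, ← coeff_ofMvPowerSeries, natExp_apply, coeffXY]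

lemma constantCoeff_series : constantCoeff 𝓕.series = 0 := by
  rw [← coeff_zero_eq_constantCoeff_apply, coeff_series]
  simpa using 𝓕.F_modw 0

lemma coeff_prod_series_subst_X_pair_pow {i j k : Fin 3} (hij : i ≠ j) (hik : i ≠ k) (hjk : j ≠ k)
    (d : Fin 2 →₀ ℕ) (e : Fin 3 →₀ ℕ) :
    coeff e (d.prod fun s n =>
      ![subst ![(X i : MvPowerSeries (Fin 3) R), X j] 𝓕.series, X k] s ^ n) =
      if e k = d 1 then pow2 𝓕.F (d 0) (e i) (e j) else 0 := by
  rw [Finsupp.prod_fintype _ _ (fun _ => pow_zero _), Fin.prod_univ_two]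
  simp only [Matrix.cons_val_zero, Matrix.cons_val_one]
  rw [← subst_pow HasSubst.X_X, coeff_subst_X_pair_mul_X_pow hij hik hjk, coeff_series_pow,
    finTwoExponent_zero, finTwoExponent_one]

lemma coeff_series_subst_series_left {i j k : Fin 3} (hij : i ≠ j) (hik : i ≠ k) (hjk : j ≠ k)
    (e : Fin 3 →₀ ℕ) :
    coeff e (subst ![subst ![(X i : MvPowerSeries (Fin 3) R), X j] 𝓕.series, X k] 𝓕.series) =
      ∑ᶠ m : ℕ, 𝓕.F m (e k) * pow2 𝓕.F m (e i) (e j) := by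
  rw [coeff_subst (HasSubst.cons_subst_zero_left i j k 𝓕.constantCoeff_series)]
  simp only [coeff_prod_series_subst_X_pair_pow 𝓕 hij hik hjk]
  have hinj : Function.Injective fun m : ℕ => finTwoExponent m (e k) := by
    intro m n h
    simpa only [finTwoExponent_zero] using DFunLike.congr_fun h 0
  rw [← finsum_comp_of_injective hinj]
  · refine finsum_congr fun m => ?_
    rw [finTwoExponent_one, finTwoExponent_zero, if_pos rfl, coeff_series, finTwoExponent_one,
      finTwoExponent_zero, smul_eq_mul]
  · intro d hd
    have hk : e k = d 1 := by
      by_contra h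
      exact hd (by simp only [if_neg h, smul_zero])
    exact ⟨d 0, by dsimp only; rw [hk, finTwoExponent_eta]⟩

lemma series_subst_comm {σ : Type*} {a b : MvPowerSeries σ R} (ha : PowerSeries.HasSubst a)
    (hb : PowerSeries.HasSubst b) : subst ![a, b] 𝓕.series = subst ![b, a] 𝓕.series := by
  ext e
  rw [coeff_subst (hasSubst_pair ha hb), coeff_subst (hasSubst_pair hb ha)]
  refine finsum_eq_of_bijective (fun d => finTwoExponent (d 1) (d 0))
    (Function.Involutive.bijective fun d => by
      simp only [finTwoExponent_zero, finTwoExponent_one, finTwoExponent_eta]) fun d => ?_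
  rw [Finsupp.prod_fintype _ _ (fun _ => pow_zero _), Fin.prod_univ_two,
    Finsupp.prod_fintype _ _ (fun _ => pow_zero _), Fin.prod_univ_two, coeff_series, coeff_series,
    finTwoExponent_zero, finTwoExponent_one, 𝓕.F_comm, mul_comm]
  rfl

/-- The formal group law in Mathlib's sense. -/
def toFormalGroup : FormalGroup R where
  toPowerSeries := 𝓕.series
  zero_constantCoeff := 𝓕.constantCoeff_series
  lin_coeff_X := by rw [coeff_series]; simp [𝓕.F_modw]
  lin_coeff_Y := by rw [coeff_series, 𝓕.F_comm]; simp [𝓕.F_modw]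
  assoc := by
    have hXX : PowerSeries.HasSubst (subst ![(X 1 : MvPowerSeries (Fin 3) R), X 2] 𝓕.series) :=
      PowerSeries.HasSubst.of_constantCoeff_zero (constantCoeff_subst_eq_zero
        HasSubst.X_X (fun i => by fin_cases i <;> simp) 𝓕.constantCoeff_series)
    ext e
    rw [𝓕.series_subst_comm (PowerSeries.HasSubst.X 0) hXX,
      coeff_series_subst_series_left 𝓕 (by decide) (by decide) (by decide),
      coeff_series_subst_series_left 𝓕 (by decide) (by decide) (by decide), 𝓕.F_assoc]
    exact finsum_congr fun n => by rw [𝓕.F_comm]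

lemma hasSubst_series : PowerSeries.HasSubst 𝓕.series :=
  PowerSeries.HasSubst.of_constantCoeff_zero 𝓕.constantCoeff_series

end FormalGroupLaw

lemma ringChoose_eq_zbinom (n : ℤ) (k : ℕ) : Ring.choose n k = zbinom n k := by
  rw [zbinom]
  split_ifs with hn
  · lift n to ℕ using hn
    rw [Int.toNat_natCast, Ring.choose_natCast]
  · have hneg := Ring.choose_neg (-n) k
    have hcast : -n + (k : ℤ) - 1 = (((k : ℤ) - n - 1).toNat : ℤ) := by omega
    rw [neg_neg, hcast, Ring.choose_natCast, Units.smul_def, smul_eq_mul, Int.negOnePow_def] at hneg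
    rw [hneg]
    simp

lemma zbinom_neg_one (k : ℕ) : zbinom (-1) k = (-1) ^ k := by
  rw [zbinom, if_neg (by omega)]
  simp

lemma val_neg_one_zpow_eq_msign (R : Type*) [CommRing R] (n : ℤ) :
    (((-1 : Rˣ) ^ n : Rˣ) : R) = msign n := by
  rw [msign]
  split_ifs with h
  · rw [h.neg_one_zpow]; simp
  · rw [(Int.not_even_iff_odd.1 h).neg_one_zpow]; simp

namespace IteratedLaurent

variable {R : Type*} [CommRing R]

/-- The inclusion of `R((x))` into `R((x))((y))`. -/
def ofLaurentX : HahnSeries ℤ R →+* IteratedLaurent R :=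
  embDomainRingHom ⟨⟨fun n => xy n 0, rfl⟩, fun _ _ => rfl⟩
    (fun _ _ h => (xy_inj.1 h).1) fun m n => by
      change xy m 0 ≤ xy n 0 ↔ _
      rw [xy_le_xy]; omega

/-- The inclusion of `R((y))` into `R((x))((y))`. -/
def ofLaurentY : HahnSeries ℤ R →+* IteratedLaurent R :=
  embDomainRingHom ⟨⟨fun n => xy 0 n, rfl⟩, fun _ _ => rfl⟩
    (fun _ _ h => (xy_inj.1 h).2) fun m n => by
      change xy 0 m ≤ xy 0 n ↔ _
      rw [xy_le_xy]; omega

lemma coeffXY_ofLaurentX (f : HahnSeries ℤ R) (i j : ℤ) :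
    coeffXY (ofLaurentX f) i j = if j = 0 then f.coeff i else 0 := by
  split_ifs with h
  · subst h
    exact embDomain_coeff (f := ⟨⟨fun n : ℤ => xy n 0, _⟩, _⟩)
  · refine embDomain_of_notMem_range fun ⟨n, hn⟩ => h ?_
    exact (xy_inj.1 (show xy n 0 = xy i j from hn)).2.symm

lemma coeffXY_ofLaurentY (f : HahnSeries ℤ R) (i j : ℤ) :
    coeffXY (ofLaurentY f) i j = if i = 0 then f.coeff j else 0 := by
  split_ifs with h
  · subst h
    exact embDomain_coeff (f := ⟨⟨fun n : ℤ => xy 0 n, _⟩, _⟩)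
  · refine embDomain_of_notMem_range fun ⟨n, hn⟩ => h ?_
    exact (xy_inj.1 (show xy 0 n = xy i j from hn)).1.symm

lemma ofMvPowerSeries_subst_X_zero (f : PowerSeries R) :
    ofMvPowerSeries (f.subst (MvPowerSeries.X 0 : MvPowerSeries (Fin 2) R)) =
      ofLaurentX (ofPowerSeries ℤ R f) := by
  refine ext_coeffXY fun i j => ?_
  rw [coeffXY_ofLaurentX, PowerSeries.coeff_coe]
  by_cases h : i < 0 ∨ j < 0
  · rw [coeffXY_ofMvPowerSeries_of_neg _ h]
    split_ifs <;> first | rfl | omega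
  · lift i to ℕ using by omega
    lift j to ℕ using by omega
    rw [coeffXY_ofMvPowerSeries_natCast, PowerSeries.coeff_subst_single]
    simp [Finsupp.ext_iff, Fin.forall_fin_two, finTwoExponent_zero, finTwoExponent_one,
      (Int.natCast_nonneg _).not_gt]

lemma ofMvPowerSeries_subst_X_one (f : PowerSeries R) :
    ofMvPowerSeries (f.subst (MvPowerSeries.X 1 : MvPowerSeries (Fin 2) R)) =
      ofLaurentY (ofPowerSeries ℤ R f) := by
  refine ext_coeffXY fun i j => ?_
  rw [coeffXY_ofLaurentY, PowerSeries.coeff_coe]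
  by_cases h : i < 0 ∨ j < 0
  · rw [coeffXY_ofMvPowerSeries_of_neg _ h]
    split_ifs <;> first | rfl | omega
  · lift i to ℕ using by omega
    lift j to ℕ using by omega
    rw [coeffXY_ofMvPowerSeries_natCast, PowerSeries.coeff_subst_single]
    simp [Finsupp.ext_iff, Fin.forall_fin_two, finTwoExponent_zero, finTwoExponent_one,
      (Int.natCast_nonneg _).not_gt]

end IteratedLaurent

lemma coeff_pow_eq_pow1 {R : Type*} [CommRing R] (f : HahnSeries ℤ R) (k : ℕ) :
    (f ^ k).coeff = pow1 f.coeff k := by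
  induction k with
  | zero =>
    funext n
    rw [pow_zero, pow1, oneS, coeff_one]
    congr
  | succ k ih =>
    funext n
    rw [pow_succ', coeff_mul_eq_finsum, pow1, mulS, ih]
    rfl

lemma coeff_ofPowerSeries_mk {R : Type*} [CommRing R] {f : ℤ → R} (hf : ∀ n < 0, f n = 0) :
    (ofPowerSeries ℤ R (PowerSeries.mk fun n => f n)).coeff = f := by
  funext n
  rw [PowerSeries.coeff_coe]
  split_ifs with hn
  · exact (hf n hn).symm
  · rw [PowerSeries.coeff_mk, Int.natAbs_of_nonneg (by omega)]

lemma subst_pair_self {R : Type*} [CommRing R] (f : MvPowerSeries (Fin 2) R) :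
    MvPowerSeries.subst ![(MvPowerSeries.X 0 : MvPowerSeries (Fin 2) R), MvPowerSeries.X 1] f
      = f := by
  have hX : ![(MvPowerSeries.X 0 : MvPowerSeries (Fin 2) R), MvPowerSeries.X 1] =
      MvPowerSeries.X := by
    funext i
    fin_cases i <;> rfl
  rw [hX, MvPowerSeries.subst_self, id]

namespace FormalGroupLaw

variable {R : Type*} [CommRing R] (𝓕 : FormalGroupLaw R)

/-- The series `F^{0,1}(z, 0)`. -/
def q : PowerSeries R := PowerSeries.mk fun n => 𝓕.F n 1

lemma coeff_ofPowerSeries_q : (ofPowerSeries ℤ R 𝓕.q).coeff = fun n => 𝓕.F n 1 :=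
  coeff_ofPowerSeries_mk (f := fun n => 𝓕.F n 1) fun n hn => 𝓕.F_supp n 1 (.inl hn)

/-- The leading term `1` of `F^{0,1}(z, 0)`. -/
def qLeading : LeadingUnit ℤ R where
  series := ofPowerSeries ℤ R 𝓕.q
  exp := 0
  lead := 1
  coeff_exp := by simp [coeff_ofPowerSeries_q, 𝓕.F_comm 0, 𝓕.F_modw]
  coeff_of_lt n hn := by simp [coeff_ofPowerSeries_q, 𝓕.F_supp _ _ (.inl hn)]

/-- The series `p_F = F^{0,1}(z, 0)⁻¹`. -/
def p : PowerSeries R := PowerSeries.invOfUnit 𝓕.q 1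

lemma q_mul_p : 𝓕.q * 𝓕.p = 1 := by
  refine PowerSeries.mul_invOfUnit _ _ ?_
  rw [← PowerSeries.coeff_zero_eq_constantCoeff_apply, q, PowerSeries.coeff_mk, 𝓕.F_comm]
  simp [𝓕.F_modw]

lemma ofPowerSeries_p_eq_val_inv :
    ofPowerSeries ℤ R 𝓕.p = (↑(𝓕.qLeading.unit ^ (-1 : ℤ)) : HahnSeries ℤ R) := by
  rw [zpow_neg_one]
  refine Units.eq_inv_of_mul_eq_one_left ?_
  rw [LeadingUnit.val_unit, qLeading, ← map_mul, q_mul_p, map_one]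

lemma coeff_ofPowerSeries_p : (ofPowerSeries ℤ R 𝓕.p).coeff = 𝓕.pF := by
  have htail : 𝓕.qLeading.tail.coeff = (hOneS fun n => 𝓕.F n 1 : ℤ → R) := by
    funext n
    simp [LeadingUnit.coeff_tail, qLeading, coeff_ofPowerSeries_q, coeff_one, hOneS, oneS]
  funext n
  rw [ofPowerSeries_p_eq_val_inv, LeadingUnit.coeff_unit_zpow, pF, invOne]
  simp only [coeff_pow_eq_pow1, htail, ringChoose_eq_zbinom, zbinom_neg_one]
  simp [qLeading]

/-- The formal inverse as a power series. -/
def iota : PowerSeries R := PowerSeries.mk fun n => 𝓕.inv n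

lemma coeff_ofPowerSeries_iota : (ofPowerSeries ℤ R 𝓕.iota).coeff = 𝓕.inv :=
  coeff_ofPowerSeries_mk fun n hn => 𝓕.inv_supp n (by omega)

/-- The leading term `-z` of the formal inverse. -/
def iotaLeading : LeadingUnit ℤ R where
  series := ofPowerSeries ℤ R 𝓕.iota
  exp := 1
  lead := -1
  coeff_exp := by rw [coeff_ofPowerSeries_iota, 𝓕.inv_one, Units.val_neg, Units.val_one]
  coeff_of_lt n hn := by rw [coeff_ofPowerSeries_iota, 𝓕.inv_supp n hn]

lemma coeff_iotaLeading_zpow (n a : ℤ) :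
    (↑(𝓕.iotaLeading.unit ^ n) : HahnSeries ℤ R).coeff a = iotaPow 𝓕.inv n a := by
  have htail : 𝓕.iotaLeading.tail.coeff = hS 𝓕.inv := by
    funext j
    rw [LeadingUnit.coeff_tail, iotaLeading, inv_neg_one, Units.val_neg, Units.val_one, neg_one_mul,
      coeff_one, coeff_ofPowerSeries_iota, hS, oneS]
    congr
  rw [LeadingUnit.coeff_unit_zpow, iotaPow]
  simp only [coeff_pow_eq_pow1, htail, ringChoose_eq_zbinom]
  simp only [iotaLeading, smul_eq_mul, mul_one, val_neg_one_zpow_eq_msign]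

lemma constantCoeff_iota : PowerSeries.constantCoeff 𝓕.iota = 0 := by
  rw [← PowerSeries.coeff_zero_eq_constantCoeff_apply, iota, PowerSeries.coeff_mk]
  exact 𝓕.inv_supp _ (by simp)

lemma hasSubst_iota_subst {σ : Type*} {f : MvPowerSeries σ R} (hf : PowerSeries.HasSubst f) :
    PowerSeries.HasSubst (𝓕.iota.subst f) := by
  obtain ⟨g, hg⟩ := PowerSeries.X_dvd_iff.2 𝓕.constantCoeff_iota
  rw [hg, PowerSeries.subst_mul hf, PowerSeries.subst_X hf]
  exact hf.mul_left

lemma finsum_coeff_series_mul_coeff_iota_pow (n : ℕ) :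
    ∑ᶠ d : Fin 2 →₀ ℕ, MvPowerSeries.coeff d 𝓕.series *
      PowerSeries.coeff n (PowerSeries.X ^ d 0 * 𝓕.iota ^ d 1) = 0 := by
  have hinj : Function.Injective fun d : Fin 2 →₀ ℕ => ((d 0 : ℤ), d 1) := by
    intro d e h
    obtain ⟨h0, h1⟩ := Prod.mk.inj h
    rw [← finTwoExponent_eta d, ← finTwoExponent_eta e, Int.natCast_inj.1 h0, h1]
  rw [← 𝓕.inv_eq n, ← finsum_comp_of_injective hinj]
  · refine finsum_congr fun d => ?_
    rw [coeff_series, ← 𝓕.coeff_ofPowerSeries_iota, ← coeff_pow_eq_pow1,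
      ← LaurentSeries.coeff_coe_powerSeries, map_mul, map_pow, map_pow, ofPowerSeries_X, single_pow,
      coeff_single_mul]
    simp
  · rintro ⟨a, k⟩ h
    have ha : 0 ≤ a := by
      by_contra! hlt
      exact h (mul_eq_zero_of_left (𝓕.F_supp _ _ (.inl hlt)) _)
    lift a to ℕ using ha
    exact ⟨finTwoExponent a k, by simp [finTwoExponent_zero, finTwoExponent_one]⟩

lemma series_subst_X_iota : MvPowerSeries.subst
    ![(MvPowerSeries.X 0 : MvPowerSeries (Fin 2) R), 𝓕.iota.subst (MvPowerSeries.X 0)] 𝓕.series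
      = 0 := by
  have hX : PowerSeries.HasSubst (MvPowerSeries.X 0 : MvPowerSeries (Fin 2) R) :=
    PowerSeries.HasSubst.X 0
  ext e
  have hterm (d : Fin 2 →₀ ℕ) : (d.prod fun s n => ![(MvPowerSeries.X 0 : MvPowerSeries (Fin 2) R),
      𝓕.iota.subst (MvPowerSeries.X 0)] s ^ n) =
        PowerSeries.subst (MvPowerSeries.X 0) (PowerSeries.X ^ d 0 * 𝓕.iota ^ d 1) := by
    rw [Finsupp.prod_fintype _ _ (fun _ => pow_zero _), Fin.prod_univ_two,
      PowerSeries.subst_mul hX, PowerSeries.subst_pow hX, PowerSeries.subst_pow hX,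
      PowerSeries.subst_X hX]
    rfl
  rw [MvPowerSeries.coeff_subst (hasSubst_pair hX (𝓕.hasSubst_iota_subst hX)), map_zero]
  simp only [hterm, PowerSeries.coeff_subst_single, smul_eq_mul, mul_ite, mul_zero]
  split_ifs
  · exact 𝓕.finsum_coeff_series_mul_coeff_iota_pow (e 0)
  · exact finsum_zero

section Points

variable {σ : Type*} {f g : MvPowerSeries σ R}

instance isComm_toFormalGroup : 𝓕.toFormalGroup.IsComm where
  comm := (subst_pair_self 𝓕.series).symm.trans
    (𝓕.series_subst_comm (PowerSeries.HasSubst.X 0) (PowerSeries.HasSubst.X 1))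

/-- The formal inverse on points of the formal group. -/
def negPoint (x : 𝓕.toFormalGroup.Point σ) : 𝓕.toFormalGroup.Point σ :=
  ⟨𝓕.iota.subst x.1, 𝓕.hasSubst_iota_subst x.2⟩

lemma add_negPoint (x : 𝓕.toFormalGroup.Point σ) : x + 𝓕.negPoint x = 0 := by
  have hxx : MvPowerSeries.HasSubst ![x.1, x.1] := hasSubst_pair x.2 x.2
  have hX : PowerSeries.HasSubst (MvPowerSeries.X 0 : MvPowerSeries (Fin 2) R) :=
    PowerSeries.HasSubst.X 0
  have h := congrArg (MvPowerSeries.subst ![x.1, x.1]) 𝓕.series_subst_X_iota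
  rw [subst_pair_subst (hasSubst_pair hX (𝓕.hasSubst_iota_subst hX)) hxx,
    subst_powerSeries_subst hX hxx, MvPowerSeries.subst_X hxx, ← MvPowerSeries.coe_substAlgHom hxx,
    map_zero] at h
  exact Subtype.ext h

lemma hasSubst_series_subst (hf : PowerSeries.HasSubst f) (hg : PowerSeries.HasSubst g) :
    PowerSeries.HasSubst (MvPowerSeries.subst ![f, g] 𝓕.series) := by
  let x : 𝓕.toFormalGroup.Point σ := ⟨f, hf⟩
  let y : 𝓕.toFormalGroup.Point σ := ⟨g, hg⟩
  exact (x + y).2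

lemma iota_subst_iota_subst (hf : PowerSeries.HasSubst f) :
    𝓕.iota.subst (𝓕.iota.subst f : MvPowerSeries σ R) = f := by
  let x : 𝓕.toFormalGroup.Point σ := ⟨f, hf⟩
  have h : x = 𝓕.negPoint (𝓕.negPoint x) :=
    left_neg_eq_right_neg (𝓕.add_negPoint x) (𝓕.add_negPoint (𝓕.negPoint x))
  exact congrArg (fun z : 𝓕.toFormalGroup.Point σ => z.1) h.symm

lemma series_subst_series_iota (hf : PowerSeries.HasSubst f) (hg : PowerSeries.HasSubst g) :
    MvPowerSeries.subst ![MvPowerSeries.subst ![f, g] 𝓕.series, 𝓕.iota.subst g] 𝓕.series = f := by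
  let x : 𝓕.toFormalGroup.Point σ := ⟨f, hf⟩
  let y : 𝓕.toFormalGroup.Point σ := ⟨g, hg⟩
  have h : x + y + 𝓕.negPoint y = x := by rw [add_assoc, add_negPoint, add_zero]
  exact congrArg (fun z : 𝓕.toFormalGroup.Point σ => z.1) h

lemma series_subst_iota_series (hf : PowerSeries.HasSubst f) (hg : PowerSeries.HasSubst g) :
    MvPowerSeries.subst ![𝓕.iota.subst f, MvPowerSeries.subst ![f, g] 𝓕.series] 𝓕.series = g := by
  let x : 𝓕.toFormalGroup.Point σ := ⟨f, hf⟩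
  let y : 𝓕.toFormalGroup.Point σ := ⟨g, hg⟩
  have h : 𝓕.negPoint x + (x + y) = y := by
    rw [← add_assoc, add_comm _ x, add_negPoint, zero_add]
  exact congrArg (fun z : 𝓕.toFormalGroup.Point σ => z.1) h

end Points

end FormalGroupLaw

/-! ### Invariance of the residue -/

namespace IteratedLaurent

variable {R : Type*} [CommRing R]

lemma coeffXY_ofMvPowerSeries_subst {a : MvPowerSeries (Fin 2) R} (ha : PowerSeries.HasSubst a)
    (f : PowerSeries R) (i j : ℤ) :
    coeffXY (ofMvPowerSeries (f.subst a)) i j =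
      ∑ᶠ n : ℕ, PowerSeries.coeff n f * coeffXY (ofMvPowerSeries (a ^ n)) i j := by
  by_cases h : i < 0 ∨ j < 0
  · simp only [coeffXY_ofMvPowerSeries_of_neg _ h, mul_zero, finsum_zero]
  · lift i to ℕ using by omega
    lift j to ℕ using by omega
    simp only [coeffXY_ofMvPowerSeries_natCast, PowerSeries.coeff_subst ha, smul_eq_mul]

lemma coeffXY_euler_xDeg (f : IteratedLaurent R) (i j : ℤ) :
    coeffXY (euler xDeg f) i j = i * coeffXY f i j := rfl

lemma coeffXY_natCast_mul (m : ℕ) (f : IteratedLaurent R) (i j : ℤ) :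
    coeffXY ((m : IteratedLaurent R) * f) i j = m * coeffXY f i j := by
  rw [← nsmul_eq_mul, ← nsmul_eq_mul]
  rfl

lemma monomial_one_pow (i j : ℤ) (k : ℕ) :
    (monomial i j (1 : R)) ^ k = monomial (k * i) (k * j) 1 := by
  rw [monomial, single_pow, one_pow, monomial, ← natCast_zsmul, zsmul_xy]

lemma exists_eq_X_zero_mul {f : MvPowerSeries (Fin 2) R}
    (h : ∀ j, coeffXY (ofMvPowerSeries f) 0 j = 0) : ∃ g, f = MvPowerSeries.X 0 * g := by
  refine MvPowerSeries.X_dvd_iff.mpr fun m hm => ?_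
  rw [← coeff_ofMvPowerSeries, natExp_apply, hm]
  exact h (m 1)

end IteratedLaurent

open IteratedLaurent

namespace FormalGroupLaw

variable {R : Type*} [CommRing R] (𝓕 : FormalGroupLaw R)

/-- The formal inverse `ι(x)`. -/
abbrev iotaX : MvPowerSeries (Fin 2) R := 𝓕.iota.subst (MvPowerSeries.X 0)

/-- The formal inverse `ι(y)`. -/
abbrev iotaY : MvPowerSeries (Fin 2) R := 𝓕.iota.subst (MvPowerSeries.X 1)

/-- The density `p_F(x)` of the invariant differential `p_F(x) dx`. -/
abbrev pX : IteratedLaurent R := ofMvPowerSeries (𝓕.p.subst (MvPowerSeries.X 0))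

/-- The density `p_F(y)` of the invariant differential `p_F(y) dy`. -/
abbrev pY : IteratedLaurent R := ofMvPowerSeries (𝓕.p.subst (MvPowerSeries.X 1))

lemma coeffXY_pX (i j : ℤ) : coeffXY 𝓕.pX i j = if j = 0 then 𝓕.pF i else 0 := by
  rw [pX, ofMvPowerSeries_subst_X_zero, coeffXY_ofLaurentX, coeff_ofPowerSeries_p]

lemma coeffXY_pY (i j : ℤ) : coeffXY 𝓕.pY i j = if i = 0 then 𝓕.pF j else 0 := by
  rw [pY, ofMvPowerSeries_subst_X_one, coeffXY_ofLaurentY, coeff_ofPowerSeries_p]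

lemma coeffXY_iotaX (i j : ℤ) :
    coeffXY (ofMvPowerSeries 𝓕.iotaX) i j = if j = 0 then 𝓕.inv i else 0 := by
  rw [ofMvPowerSeries_subst_X_zero, coeffXY_ofLaurentX, coeff_ofPowerSeries_iota]

lemma coeffXY_iotaY (i j : ℤ) :
    coeffXY (ofMvPowerSeries 𝓕.iotaY) i j = if i = 0 then 𝓕.inv j else 0 := by
  rw [ofMvPowerSeries_subst_X_one, coeffXY_ofLaurentY, coeff_ofPowerSeries_iota]

lemma exists_series_eq_X_one_add : ∃ g, 𝓕.series = MvPowerSeries.X 1 + MvPowerSeries.X 0 * g ∧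
    ∀ j, coeffXY (ofMvPowerSeries g) 0 j = 𝓕.F j 1 := by
  obtain ⟨g, hg⟩ := exists_eq_X_zero_mul (f := 𝓕.series - MvPowerSeries.X 1) fun j => by
    rw [map_sub, coeffXY_sub, coeffXY_series, ofMvPowerSeries_X_one, coeffXY_monomial, 𝓕.F_comm,
      𝓕.F_modw]
    split_ifs <;> first | omega | simp
  refine ⟨g, sub_eq_iff_eq_add'.1 hg, fun j => ?_⟩
  have h := congrArg (fun f => coeffXY (ofMvPowerSeries f) 1 j) hg
  simp only [map_sub, coeffXY_sub, coeffXY_series, map_mul, ofMvPowerSeries_X_zero,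
    ofMvPowerSeries_X_one, coeffXY_monomial_mul, coeffXY_monomial] at h
  rwa [if_neg (by omega), sub_zero, 𝓕.F_comm, one_mul, sub_self, sub_zero, eq_comm] at h

lemma pow2_F_one (m : ℕ) (b : ℤ) : pow2 𝓕.F m 1 b = (m : R) * 𝓕.F (b - m + 1) 1 := by
  obtain ⟨g, hg, hg0⟩ := 𝓕.exists_series_eq_X_one_add
  rcases Nat.eq_zero_or_pos m with rfl | hm
  · simp [pow2, oneS2]
  obtain ⟨k, hk⟩ := Polynomial.powAddExpansion (MvPowerSeries.X 1) (MvPowerSeries.X 0 * g) m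
  have hexpand : 𝓕.series ^ m = MvPowerSeries.X 1 ^ m * 1 +
      (m : MvPowerSeries (Fin 2) R) * (MvPowerSeries.X 0 * (MvPowerSeries.X 1 ^ (m - 1) * g)) +
        MvPowerSeries.X 0 ^ 2 * (k * g ^ 2) := by
    rw [hg, hk]
    ring
  have hhigh : coeffXY (ofMvPowerSeries (k * g ^ 2)) (1 - ((2 : ℕ) : ℤ) * 1) b = 0 :=
    coeffXY_ofMvPowerSeries_of_neg _ (.inl (by norm_num))
  have hb : b - ((m - 1 : ℕ) : ℤ) * 1 = b - m + 1 := by push_cast [Nat.cast_sub hm]; ring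
  rw [← coeffXY_series_pow, hexpand]
  simp only [map_add, map_mul, map_pow, map_natCast, map_one, ofMvPowerSeries_X_zero,
    ofMvPowerSeries_X_one, monomial_one_pow, coeffXY_add, coeffXY_natCast_mul,
    coeffXY_monomial_mul, coeffXY_one] at hhigh ⊢
  have hone : (oneS2 R 1 (b - m * 1) : R) = 0 := if_neg (by omega)
  simp only [mul_zero, sub_zero, sub_self, hone, hhigh, hb, hg0]
  ring

lemma coeffXY_q_series (i j : ℤ) : coeffXY (ofMvPowerSeries (𝓕.q.subst 𝓕.series)) i j =
    ∑ᶠ n : ℕ, 𝓕.F 1 n * pow2 𝓕.F n i j := by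
  rw [coeffXY_ofMvPowerSeries_subst 𝓕.hasSubst_series]
  refine finsum_congr fun n => ?_
  rw [coeffXY_series_pow, q, PowerSeries.coeff_mk, 𝓕.F_comm]

/- Multiplied by `x`, this is `∂F/∂x(x, y) · F^{0,1}(x, 0) = F^{0,1}(F(x, y), 0)`, the derivative of
associativity at the origin in the first of its three variables. -/
lemma eulerX_series_mul_q : euler xDeg (ofMvPowerSeries 𝓕.series) *
    ofMvPowerSeries (𝓕.q.subst (MvPowerSeries.X 0)) =
      monomial 1 0 1 * ofMvPowerSeries (𝓕.q.subst 𝓕.series) := by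
  refine ext_coeffXY fun i j => ?_
  rw [coeffXY_monomial_mul, coeffXY_q_series, one_mul, sub_zero, ← 𝓕.F_assoc, coeffXY_mul, mulS2]
  have hinj : Function.Injective fun m : ℕ => ((m : ℤ), j) := fun m n h =>
    Int.natCast_inj.mp (Prod.mk.inj h).1
  rw [← finsum_comp_of_injective hinj]
  · refine finsum_congr fun m => ?_
    rw [pow2_F_one, coeffXY_euler_xDeg, coeffXY_series, ofMvPowerSeries_subst_X_zero,
      coeffXY_ofLaurentX, sub_self, if_pos rfl, coeff_ofPowerSeries_q, sub_right_comm,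
      sub_add_cancel]
    push_cast
    ring
  · rintro ⟨a, b⟩ h
    by_contra hrange
    refine h ?_
    dsimp only
    rw [coeffXY_euler_xDeg, coeffXY_series, ofMvPowerSeries_subst_X_zero, coeffXY_ofLaurentX]
    by_cases hb : j - b = 0
    · rw [𝓕.F_supp a b (.inl ?_), mul_zero, zero_smul]
      by_contra ha
      exact hrange ⟨a.toNat, by simp only [Prod.mk.injEq]; omega⟩
    · rw [if_neg hb, smul_zero]

end FormalGroupLaw

namespace IteratedLaurent

variable {R : Type*} [CommRing R]

/-- The series `f'` arises from `f` by exchanging the two variables. -/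
def IsSwap (f f' : IteratedLaurent R) : Prop := ∀ i j, coeffXY f i j = coeffXY f' j i

namespace IsSwap

variable {f f' g g' : IteratedLaurent R}

lemma symm (h : IsSwap f f') : IsSwap f' f := fun i j => (h j i).symm

lemma unique (h : IsSwap f f') (h' : IsSwap f g) : f' = g :=
  ext_coeffXY fun i j => (h j i).symm.trans (h' j i)

lemma mul (hf : IsSwap f f') (hg : IsSwap g g') : IsSwap (f * g) (f' * g') := by
  intro i j
  rw [coeffXY_mul, coeffXY_mul, mulS2, mulS2]
  refine finsum_eq_of_bijective _ (Equiv.prodComm ℤ ℤ).bijective fun p => ?_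
  rw [hf, hg]
  rfl

lemma monomial (i j : ℤ) (r : R) :
    IsSwap (IteratedLaurent.monomial i j r) (IteratedLaurent.monomial j i r) := fun k l => by
  rw [coeffXY_monomial, coeffXY_monomial]
  simp only [and_comm]

lemma euler (h : IsSwap f f') : IsSwap (_root_.euler xDeg f) (_root_.euler yDeg f') :=
  fun i j => congrArg (fun r => (i : R) * r) (h i j)

end IsSwap

/-- Exchange of the two variables of a power series. -/
def swapVars : MvPowerSeries (Fin 2) R →ₐ[R] MvPowerSeries (Fin 2) R :=
  MvPowerSeries.rename (Equiv.swap 0 1)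

lemma swapVars_X_zero :
    swapVars (MvPowerSeries.X 0 : MvPowerSeries (Fin 2) R) = MvPowerSeries.X 1 := by
  rw [swapVars, MvPowerSeries.rename_X, Equiv.swap_apply_left]

lemma swapVars_X_one :
    swapVars (MvPowerSeries.X 1 : MvPowerSeries (Fin 2) R) = MvPowerSeries.X 0 := by
  rw [swapVars, MvPowerSeries.rename_X, Equiv.swap_apply_right]

lemma swapVars_eq_subst (f : MvPowerSeries (Fin 2) R) :
    swapVars f = MvPowerSeries.subst ![MvPowerSeries.X 1, MvPowerSeries.X 0] f := by
  have hX : MvPowerSeries.X ∘ Equiv.swap (0 : Fin 2) 1 =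
      ![(MvPowerSeries.X 1 : MvPowerSeries (Fin 2) R), MvPowerSeries.X 0] := by
    funext i
    fin_cases i <;> simp
  rw [swapVars, MvPowerSeries.rename_eq_subst, hX]

lemma hasSubst_X_one_X_zero : MvPowerSeries.HasSubst
    ![(MvPowerSeries.X 1 : MvPowerSeries (Fin 2) R), MvPowerSeries.X 0] :=
  hasSubst_pair (PowerSeries.HasSubst.X 1) (PowerSeries.HasSubst.X 0)

lemma swapVars_subst_pair {a b : MvPowerSeries (Fin 2) R} (h : MvPowerSeries.HasSubst ![a, b])
    (f : MvPowerSeries (Fin 2) R) :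
    swapVars (MvPowerSeries.subst ![a, b] f) =
      MvPowerSeries.subst ![swapVars a, swapVars b] f := by
  simp only [swapVars_eq_subst, subst_pair_subst h hasSubst_X_one_X_zero]

lemma swapVars_subst {a : MvPowerSeries (Fin 2) R} (h : PowerSeries.HasSubst a)
    (f : PowerSeries R) : swapVars (f.subst a) = f.subst (swapVars a) := by
  simp only [swapVars_eq_subst, subst_powerSeries_subst h hasSubst_X_one_X_zero]

lemma coeff_swapVars (f : MvPowerSeries (Fin 2) R) (m n : ℕ) :
    MvPowerSeries.coeff (finTwoExponent m n) (swapVars f) =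
      MvPowerSeries.coeff (finTwoExponent n m) f := by
  have h := MvPowerSeries.coeff_embDomain_rename (Equiv.swap (0 : Fin 2) 1).toEmbedding f
    (finTwoExponent n m)
  have hexp : (finTwoExponent n m).embDomain (Equiv.swap (0 : Fin 2) 1).toEmbedding =
      finTwoExponent m n := by
    simp [Finsupp.embDomain_eq_mapDomain, finTwoExponent, Finsupp.mapDomain_add,
      Finsupp.mapDomain_single, add_comm]
  rwa [hexp] at h

lemma isSwap_ofMvPowerSeries (f : MvPowerSeries (Fin 2) R) :
    IsSwap (ofMvPowerSeries f) (ofMvPowerSeries (swapVars f)) := by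
  intro i j
  by_cases h : i < 0 ∨ j < 0
  · rw [coeffXY_ofMvPowerSeries_of_neg _ h, coeffXY_ofMvPowerSeries_of_neg _ h.symm]
  · lift i to ℕ using by omega
    lift j to ℕ using by omega
    rw [coeffXY_ofMvPowerSeries_natCast, coeffXY_ofMvPowerSeries_natCast, coeff_swapVars]

namespace PowerSeriesSubst

variable (s : PowerSeriesSubst R)

lemma hom_subst_X_zero (f : PowerSeries R) :
    s.hom (ofMvPowerSeries (f.subst (MvPowerSeries.X 0))) = ofMvPowerSeries (f.subst s.a) := by
  rw [hom_ofMvPowerSeries, subst_powerSeries_subst (PowerSeries.HasSubst.X 0) s.hasSubst,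
    MvPowerSeries.subst_X s.hasSubst]
  rfl

lemma hom_subst_X_one (f : PowerSeries R) :
    s.hom (ofMvPowerSeries (f.subst (MvPowerSeries.X 1))) = ofMvPowerSeries (f.subst s.b) := by
  rw [hom_ofMvPowerSeries, subst_powerSeries_subst (PowerSeries.HasSubst.X 1) s.hasSubst,
    MvPowerSeries.subst_X s.hasSubst]
  rfl

lemma hom_X : s.hom (monomial 1 0 1) = ofMvPowerSeries s.a := by
  rw [hom_monomial, monomial_zero_one, zpow_one, zpow_zero, Units.val_one, one_mul, mul_one,
    val_unitX]

lemma hom_Y : s.hom (monomial 0 1 1) = ofMvPowerSeries s.b := by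
  rw [hom_monomial, monomial_zero_one, zpow_one, zpow_zero, Units.val_one, one_mul, one_mul,
    val_unitY]

variable {s}

lemma val_unitY_zpow (hb : s.b = MvPowerSeries.X 1) (n : ℤ) :
    (↑(s.unitY ^ n) : IteratedLaurent R) = monomial 0 n 1 := by
  have h : s.unitY = monomialUnit (.ofAdd (xy 0 1), 1) := by
    refine Units.ext ?_
    rw [val_unitY, hb, ofMvPowerSeries_X_one, val_monomialUnit]
    rfl
  rw [h, ← map_zpow, Prod.pow_mk, ← ofAdd_zsmul, val_monomialUnit, one_zpow, Units.val_one,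
    zsmul_xy, mul_zero, mul_one, monomial]

lemma coeffXY_image_mul_euler (hb : s.b = MvPowerSeries.X 1) (k l n : ℤ) :
    coeffXY (s.monomialSubst.image (xy k l) * euler xDeg (ofMvPowerSeries s.a)) 0 n =
      if k = -1 ∧ l = n then 1 else 0 := by
  have h := s.leadingX.coeff_unit_zpow_mul_euler xDeg k (n := xy 0 (n - l)) (xDeg_xy ..)
  rw [image_xy, val_unitY_zpow hb, mul_comm (↑(s.unitX ^ k) : IteratedLaurent R), mul_assoc,
    coeffXY_monomial_mul, one_mul, sub_zero]
  refine h.trans ?_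
  simp [← xy_zero, xy_inj, leadingX, xDeg_xy, sub_eq_zero, eq_comm]

lemma coeffXY_hom_mul_euler (hb : s.b = MvPowerSeries.X 1) (f : IteratedLaurent R) (n : ℤ) :
    coeffXY (s.hom f * euler xDeg (ofMvPowerSeries s.a)) 0 n = coeffXY f (-1) n := by
  have h := s.monomialSubst.coeff_hom_mul f (euler xDeg (ofMvPowerSeries s.a)) (xy 0 n)
  rw [coeffXY, hom, h, finsum_eq_single _ (xy (-1) n)]
  · refine (congrArg _ (coeffXY_image_mul_euler hb (-1) n n)).trans ?_
    rw [if_pos ⟨rfl, rfl⟩, mul_one, coeffXY]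
  · intro γ hγ
    obtain ⟨k, l, rfl⟩ := exists_eq_xy γ
    refine (congrArg _ (coeffXY_image_mul_euler hb k l n)).trans ?_
    rw [if_neg (fun hkl => hγ (xy_inj.2 hkl)), mul_zero]

lemma coeffXY_hom_mul (hb : s.b = MvPowerSeries.X 1) {p : IteratedLaurent R} {ε : R}
    (hp : s.hom p * euler xDeg (ofMvPowerSeries s.a) = monomial 1 0 ε * p)
    (f : IteratedLaurent R) (n : ℤ) :
    ε * coeffXY (s.hom f * p) (-1) n = coeffXY (f * p) (-1) n := by
  rw [← coeffXY_hom_mul_euler hb (f * p), map_mul, mul_assoc, hp, mul_left_comm,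
    coeffXY_monomial_mul, zero_sub, sub_zero]

end PowerSeriesSubst

end IteratedLaurent

namespace FormalGroupLaw

variable {R : Type*} [CommRing R] (𝓕 : FormalGroupLaw R)

/-- The substitution `x ↦ F(x, y)`. -/
def seriesSubst : PowerSeriesSubst R where
  a := 𝓕.series
  b := MvPowerSeries.X 1
  c := 1
  d := 1
  coeffXY_a_zero := by rw [coeffXY_series, 𝓕.F_modw]; simp
  coeffXY_a_one := by rw [coeffXY_series, 𝓕.F_modw]; simp
  coeffXY_b_zero i := by rw [ofMvPowerSeries_X_one, coeffXY_monomial, if_neg (by omega)]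
  coeffXY_b_one := by rw [ofMvPowerSeries_X_one, coeffXY_monomial]; simp

/-- The substitution `x ↦ ι(x)`. -/
def iotaSubst : PowerSeriesSubst R where
  a := 𝓕.iotaX
  b := MvPowerSeries.X 1
  c := -1
  d := 1
  coeffXY_a_zero := by rw [coeffXY_iotaX, 𝓕.inv_supp _ (by omega)]; simp
  coeffXY_a_one := by rw [coeffXY_iotaX, 𝓕.inv_one]; simp
  coeffXY_b_zero i := by rw [ofMvPowerSeries_X_one, coeffXY_monomial, if_neg (by omega)]
  coeffXY_b_one := by rw [ofMvPowerSeries_X_one, coeffXY_monomial]; simp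

/-- The substitution `x ↦ F(x, y)`, `y ↦ ι(y)`. -/
def seriesIotaSubst : PowerSeriesSubst R where
  a := 𝓕.series
  b := 𝓕.iotaY
  c := 1
  d := -1
  coeffXY_a_zero := by rw [coeffXY_series, 𝓕.F_modw]; simp
  coeffXY_a_one := by rw [coeffXY_series, 𝓕.F_modw]; simp
  coeffXY_b_zero i := by rw [coeffXY_iotaY, 𝓕.inv_supp _ (by omega)]; simp
  coeffXY_b_one := by rw [coeffXY_iotaY, 𝓕.inv_one]; simp

lemma swapVars_series : swapVars 𝓕.series = 𝓕.series := by
  rw [swapVars_eq_subst, ← 𝓕.series_subst_comm (PowerSeries.HasSubst.X 0)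
    (PowerSeries.HasSubst.X 1), subst_pair_self]

lemma isSwap_series : IsSwap (ofMvPowerSeries 𝓕.series) (ofMvPowerSeries 𝓕.series) := by
  simpa only [swapVars_series] using isSwap_ofMvPowerSeries 𝓕.series

lemma hasSubst_iotaX : PowerSeries.HasSubst 𝓕.iotaX :=
  𝓕.hasSubst_iota_subst (PowerSeries.HasSubst.X 0)

lemma hasSubst_iotaY : PowerSeries.HasSubst 𝓕.iotaY :=
  𝓕.hasSubst_iota_subst (PowerSeries.HasSubst.X 1)

lemma swapVars_iotaX : swapVars 𝓕.iotaX = 𝓕.iotaY := by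
  rw [swapVars_subst (PowerSeries.HasSubst.X 0), swapVars_X_zero]

lemma isSwap_pX : IsSwap 𝓕.pX 𝓕.pY := by
  simpa only [swapVars_subst (PowerSeries.HasSubst.X 0), swapVars_X_zero] using
    isSwap_ofMvPowerSeries (𝓕.p.subst (MvPowerSeries.X 0 : MvPowerSeries (Fin 2) R))

lemma p_subst_mul_q_subst {σ : Type*} {a : MvPowerSeries σ R} (ha : PowerSeries.HasSubst a) :
    𝓕.p.subst a * 𝓕.q.subst a = 1 := by
  rw [← PowerSeries.subst_mul ha, mul_comm, q_mul_p, ← PowerSeries.coe_substAlgHom ha, map_one]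

/- Invariance of the differential `p_F(x) dx`, with the Euler derivation `x ∂/∂x` for `∂/∂x`. -/
lemma p_series_mul_eulerX : ofMvPowerSeries (𝓕.p.subst 𝓕.series) *
    euler xDeg (ofMvPowerSeries 𝓕.series) = monomial 1 0 1 * 𝓕.pX := by
  have hpX : 𝓕.pX * ofMvPowerSeries (𝓕.q.subst (MvPowerSeries.X 0)) = 1 := by
    rw [← map_mul, 𝓕.p_subst_mul_q_subst (PowerSeries.HasSubst.X 0), map_one]
  have hpF : ofMvPowerSeries (𝓕.p.subst 𝓕.series) * ofMvPowerSeries (𝓕.q.subst 𝓕.series) = 1 := by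
    rw [← map_mul, 𝓕.p_subst_mul_q_subst 𝓕.hasSubst_series, map_one]
  linear_combination (𝓕.pX * ofMvPowerSeries (𝓕.p.subst 𝓕.series)) * 𝓕.eulerX_series_mul_q -
    ofMvPowerSeries (𝓕.p.subst 𝓕.series) * euler xDeg (ofMvPowerSeries 𝓕.series) * hpX +
      monomial 1 0 1 * 𝓕.pX * hpF

lemma p_series_mul_eulerY : ofMvPowerSeries (𝓕.p.subst 𝓕.series) *
    euler yDeg (ofMvPowerSeries 𝓕.series) = monomial 0 1 1 * 𝓕.pY := by
  have hp : IsSwap (ofMvPowerSeries (𝓕.p.subst 𝓕.series))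
      (ofMvPowerSeries (𝓕.p.subst 𝓕.series)) := by
    simpa only [swapVars_subst 𝓕.hasSubst_series, swapVars_series] using
      isSwap_ofMvPowerSeries (𝓕.p.subst 𝓕.series)
  refine (hp.mul 𝓕.isSwap_series.euler).unique ?_
  rw [p_series_mul_eulerX]
  exact (IsSwap.monomial 1 0 1).mul 𝓕.isSwap_pX

lemma series_subst_series_iotaY :
    MvPowerSeries.subst ![𝓕.series, 𝓕.iotaY] 𝓕.series = MvPowerSeries.X 0 := by
  simpa only [subst_pair_self] using 𝓕.series_subst_series_iota
    (PowerSeries.HasSubst.X (0 : Fin 2)) (PowerSeries.HasSubst.X (1 : Fin 2))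

lemma seriesIotaSubst_hom_series :
    𝓕.seriesIotaSubst.hom (ofMvPowerSeries 𝓕.series) = monomial 1 0 1 := by
  rw [PowerSeriesSubst.hom_ofMvPowerSeries, ← ofMvPowerSeries_X_zero]
  exact congrArg ofMvPowerSeries 𝓕.series_subst_series_iotaY

lemma seriesIotaSubst_hom_p_series :
    𝓕.seriesIotaSubst.hom (ofMvPowerSeries (𝓕.p.subst 𝓕.series)) = 𝓕.pX := by
  rw [PowerSeriesSubst.hom_ofMvPowerSeries,
    subst_powerSeries_subst 𝓕.hasSubst_series 𝓕.seriesIotaSubst.hasSubst]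
  exact congrArg (fun f => ofMvPowerSeries (𝓕.p.subst f)) 𝓕.series_subst_series_iotaY

/- `F(F(x, y), ι(y)) = x` does not involve `y`, so its derivative with respect to `y` vanishes. -/
lemma p_iota_mul_eulerY : ofMvPowerSeries (𝓕.p.subst 𝓕.iotaY) *
    euler yDeg (ofMvPowerSeries 𝓕.iotaY) = -(monomial 0 1 1 * 𝓕.pY) := by
  let s := 𝓕.seriesIotaSubst
  have hx : 𝓕.pX * s.hom (euler xDeg (ofMvPowerSeries 𝓕.series)) =
      s.unitX * ofMvPowerSeries (𝓕.p.subst 𝓕.series) := by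
    have h := congrArg s.hom 𝓕.p_series_mul_eulerX
    rwa [map_mul, map_mul, seriesIotaSubst_hom_p_series, s.hom_X, s.hom_subst_X_zero,
      ← s.val_unitX] at h
  have hy : 𝓕.pX * s.hom (euler yDeg (ofMvPowerSeries 𝓕.series)) =
      s.unitY * ofMvPowerSeries (𝓕.p.subst 𝓕.iotaY) := by
    have h := congrArg s.hom 𝓕.p_series_mul_eulerY
    rwa [map_mul, map_mul, seriesIotaSubst_hom_p_series, s.hom_Y, s.hom_subst_X_one,
      ← s.val_unitY] at h
  have hchain : 0 = s.hom (euler xDeg (ofMvPowerSeries 𝓕.series)) *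
        (↑s.unitX⁻¹ * euler yDeg (ofMvPowerSeries 𝓕.series)) +
      s.hom (euler yDeg (ofMvPowerSeries 𝓕.series)) *
        (↑s.unitY⁻¹ * euler yDeg (ofMvPowerSeries 𝓕.iotaY)) := by
    have h := s.euler_hom yDeg (ofMvPowerSeries 𝓕.series)
    rwa [seriesIotaSubst_hom_series, monomial, euler_single, yDeg_xy, Int.cast_zero, zero_mul] at h
  linear_combination -𝓕.pX * hchain -
    (↑s.unitX⁻¹ : IteratedLaurent R) * euler yDeg (ofMvPowerSeries 𝓕.series) * hx -
    (↑s.unitY⁻¹ : IteratedLaurent R) * euler yDeg (ofMvPowerSeries 𝓕.iotaY) * hy -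
    ofMvPowerSeries (𝓕.p.subst 𝓕.series) * euler yDeg (ofMvPowerSeries 𝓕.series) *
      s.unitX.mul_inv -
    ofMvPowerSeries (𝓕.p.subst 𝓕.iotaY) * euler yDeg (ofMvPowerSeries 𝓕.iotaY) *
      s.unitY.mul_inv - 𝓕.p_series_mul_eulerY

lemma p_iota_mul_eulerX : ofMvPowerSeries (𝓕.p.subst 𝓕.iotaX) *
    euler xDeg (ofMvPowerSeries 𝓕.iotaX) = monomial 1 0 (-1) * 𝓕.pX := by
  have hiota := isSwap_ofMvPowerSeries 𝓕.iotaX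
  have hp := isSwap_ofMvPowerSeries (𝓕.p.subst 𝓕.iotaX)
  rw [swapVars_iotaX] at hiota
  rw [swapVars_subst 𝓕.hasSubst_iotaX, swapVars_iotaX] at hp
  have hneg : -monomial 0 1 (1 : R) = monomial 0 1 (-1) := (single_neg _ _).symm
  refine (hp.mul hiota.euler).symm.unique ?_
  rw [p_iota_mul_eulerY, ← neg_mul, hneg]
  exact ((IsSwap.monomial 1 0 (-1)).mul 𝓕.isSwap_pX).symm

lemma coeffXY_seriesSubst_unitX_zpow (n : ℤ) :
    coeffXY (↑(𝓕.seriesSubst.unitX ^ n) : IteratedLaurent R) = izwPow 𝓕.F n := by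
  have htail : coeffXY 𝓕.seriesSubst.leadingX.tail = hzS 𝓕.F := by
    funext i j
    have h : coeffXY (ofMvPowerSeries 𝓕.series) (i + 1) (j + 0) = 𝓕.F (i + 1) j := by
      rw [coeffXY_series, add_zero]
    refine (LeadingUnit.coeff_tail ..).trans ?_
    refine congrArg₂ (· - ·) ?_ (congrFun₂ (coeffXY_one (R := R)) i j)
    exact (congrArg₂ (· * ·) (congrArg Units.val (_root_.inv_one (G := Rˣ))) h).trans (one_mul _)
  funext i j
  refine (LeadingUnit.coeff_unit_zpow ..).trans ?_
  have hexp : xy i j - n • 𝓕.seriesSubst.leadingX.exp = xy (i - n) j := by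
    change xy i j - n • xy 1 0 = _
    rw [zsmul_xy, xy_sub, mul_one, mul_zero, sub_zero]
  have hlead : ((𝓕.seriesSubst.leadingX.lead ^ n : Rˣ) : R) = 1 :=
    congrArg Units.val (one_zpow n)
  rw [hexp, hlead, one_mul, izwPow]
  refine finsum_congr fun k => ?_
  rw [ringChoose_eq_zbinom, ← htail, ← coeffXY_pow, coeffXY]

lemma coeffXY_iotaSubst_unitX_zpow (n i j : ℤ) :
    coeffXY (↑(𝓕.iotaSubst.unitX ^ n) : IteratedLaurent R) i j =
      if j = 0 then iotaPow 𝓕.inv n i else 0 := by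
  have h : 𝓕.iotaSubst.unitX =
      Units.map (ofLaurentX (R := R) : HahnSeries ℤ R →* IteratedLaurent R) 𝓕.iotaLeading.unit := by
    refine Units.ext ?_
    rw [PowerSeriesSubst.val_unitX, Units.coe_map, LeadingUnit.val_unit]
    exact ofMvPowerSeries_subst_X_zero _
  rw [h, ← map_zpow, Units.coe_map]
  refine (coeffXY_ofLaurentX _ i j).trans ?_
  rw [coeff_iotaLeading_zpow]

/-- The iterated residue `Res_x Res_y f p_F(x) p_F(y) dx dy`. -/
def iteratedRes (f : IteratedLaurent R) : R := coeffXY (f * 𝓕.pX * 𝓕.pY) (-1) (-1)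

lemma iteratedRes_eq_of_isSwap {f f' : IteratedLaurent R} (h : IsSwap f f') :
    𝓕.iteratedRes f = 𝓕.iteratedRes f' := by
  rw [iteratedRes, (h.mul 𝓕.isSwap_pX).mul 𝓕.isSwap_pX.symm, iteratedRes, mul_right_comm]

lemma iteratedRes_sub (f g : IteratedLaurent R) :
    𝓕.iteratedRes (f - g) = 𝓕.iteratedRes f - 𝓕.iteratedRes g := by
  rw [iteratedRes, sub_mul, sub_mul, coeffXY_sub, iteratedRes, iteratedRes]

lemma coeffXY_seriesSubst_hom_mul_pX (f : IteratedLaurent R) (n : ℤ) :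
    coeffXY (𝓕.seriesSubst.hom f * 𝓕.pX) (-1) n = coeffXY (f * 𝓕.pX) (-1) n := by
  have h := 𝓕.seriesSubst.coeffXY_hom_mul rfl (p := 𝓕.pX) (ε := 1)
    (by rw [PowerSeriesSubst.hom_subst_X_zero]; exact 𝓕.p_series_mul_eulerX) f n
  rwa [one_mul] at h

lemma coeffXY_iotaSubst_hom_mul_pX (f : IteratedLaurent R) (n : ℤ) :
    coeffXY (𝓕.iotaSubst.hom f * 𝓕.pX) (-1) n = -coeffXY (f * 𝓕.pX) (-1) n := by
  have h := 𝓕.iotaSubst.coeffXY_hom_mul rfl (p := 𝓕.pX) (ε := -1)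
    (by rw [PowerSeriesSubst.hom_subst_X_zero]; exact 𝓕.p_iota_mul_eulerX) f n
  rw [← h, neg_one_mul, neg_neg]

lemma iteratedRes_seriesSubst_hom (f : IteratedLaurent R) :
    𝓕.iteratedRes (𝓕.seriesSubst.hom f) = 𝓕.iteratedRes f := by
  have h := 𝓕.coeffXY_seriesSubst_hom_mul_pX (f * 𝓕.pY) (-1)
  have hpY : 𝓕.seriesSubst.hom 𝓕.pY = 𝓕.pY := 𝓕.seriesSubst.hom_subst_X_one _
  rwa [map_mul, hpY, mul_right_comm, mul_right_comm f] at h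

lemma iteratedRes_iotaSubst_hom (f : IteratedLaurent R) :
    𝓕.iteratedRes (𝓕.iotaSubst.hom f) = -𝓕.iteratedRes f := by
  have h := 𝓕.coeffXY_iotaSubst_hom_mul_pX (f * 𝓕.pY) (-1)
  have hpY : 𝓕.iotaSubst.hom 𝓕.pY = 𝓕.pY := 𝓕.iotaSubst.hom_subst_X_one _
  rwa [map_mul, hpY, mul_right_comm, mul_right_comm f] at h

end FormalGroupLaw

/-! ### The three-term residue identity -/

lemma zpow_neg_natCast_eq_mul {G : Type*} [Group G] (u : G) (N : ℕ) :
    u ^ (-N : ℤ) = u ^ (-(N + 1 : ℕ) : ℤ) * u := by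
  rw [← zpow_add_one, Nat.cast_succ, neg_add, neg_add_cancel_right]

namespace IteratedLaurent

variable {R : Type*} [CommRing R]

/-- The subring `R((x))⟦y⟧` of `R((x))((y))`. -/
def powerSeriesInY (R : Type*) [CommRing R] : Subring (IteratedLaurent R) where
  carrier := {f | ∀ i, ∀ j < 0, coeffXY f i j = 0}
  mul_mem' := by
    intro f g hf hg i j hj
    rw [coeffXY_mul, mulS2]
    refine (finsum_congr fun p => ?_).trans finsum_zero
    by_cases hp : p.2 < 0
    · rw [hf _ _ hp, zero_smul]
    · rw [hg _ _ (by omega), smul_zero]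
  one_mem' := fun i j hj => by rw [coeffXY_one, oneS2, if_neg (by omega)]
  add_mem' := fun hf hg i j hj => by rw [coeffXY_add, hf i j hj, hg i j hj, add_zero]
  zero_mem' := fun _ _ _ => rfl
  neg_mem' := fun hf i j hj => by rw [coeffXY_neg, hf i j hj, neg_zero]

lemma ofMvPowerSeries_mem_powerSeriesInY (f : MvPowerSeries (Fin 2) R) :
    ofMvPowerSeries f ∈ powerSeriesInY R :=
  fun _ _ hj => coeffXY_ofMvPowerSeries_of_neg f (.inr hj)

lemma monomial_mem_powerSeriesInY (i : ℤ) {j : ℤ} (hj : 0 ≤ j) (r : R) :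
    monomial i j r ∈ powerSeriesInY R :=
  fun k l hl => by rw [coeffXY_monomial, if_neg (by omega)]

lemma PowerSeriesSubst.unitX_zpow_mem_powerSeriesInY (s : PowerSeriesSubst R) (n : ℤ) :
    (↑(s.unitX ^ n) : IteratedLaurent R) ∈ powerSeriesInY R := fun i j hj =>
  s.leadingX.coeff_unit_zpow_of_lt <| by
    rw [show s.leadingX.exp = xy 1 0 from rfl, zsmul_xy, xy_lt_xy]
    omega

end IteratedLaurent

namespace FormalGroupLaw

variable {R : Type*} [CommRing R] (𝓕 : FormalGroupLaw R)

lemma iteratedRes_eq_zero {f : IteratedLaurent R} (hf : f ∈ powerSeriesInY R) :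
    𝓕.iteratedRes f = 0 :=
  mul_mem (mul_mem hf (ofMvPowerSeries_mem_powerSeriesInY _))
    (ofMvPowerSeries_mem_powerSeriesInY _) _ _ (by omega)

lemma exists_series_eq_X_zero_add : ∃ c, 𝓕.series = MvPowerSeries.X 0 + MvPowerSeries.X 1 * c := by
  obtain ⟨g, hg, -⟩ := 𝓕.exists_series_eq_X_one_add
  refine ⟨swapVars g, ?_⟩
  rw [← swapVars_series, hg, map_add, map_mul, swapVars_X_zero, swapVars_X_one]

lemma hasSubst_iotaX_series : MvPowerSeries.HasSubst ![𝓕.iotaX, 𝓕.series] :=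
  hasSubst_pair 𝓕.hasSubst_iotaX 𝓕.hasSubst_series

lemma series_subst_iotaX_series :
    MvPowerSeries.subst ![𝓕.iotaX, 𝓕.series] 𝓕.series = MvPowerSeries.X 1 := by
  simpa only [subst_pair_self] using 𝓕.series_subst_iota_series
    (PowerSeries.HasSubst.X (0 : Fin 2)) (PowerSeries.HasSubst.X (1 : Fin 2))

/-- The series `F(x, y)⁻ᴺ x ^ k y ^ l g(x, y)`. -/
def invSeriesTerm (N : ℕ) (k l : ℤ) (g : MvPowerSeries (Fin 2) R) : IteratedLaurent R :=
  (↑(𝓕.seriesSubst.unitX ^ (-N : ℤ)) : IteratedLaurent R) * monomial k l 1 * ofMvPowerSeries g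

/-- The series `F(x, y) ^ l y⁻ᴺ ι(x) ^ k g(ι(x), F(x, y))`, which arises from `invSeriesTerm` by
the substitution `x ↦ ι(x)`, `y ↦ F(x, y)`, expanded in the region `|y| < |x|`. -/
def invYTerm (N : ℕ) (k l : ℤ) (g : MvPowerSeries (Fin 2) R) : IteratedLaurent R :=
  (↑(𝓕.seriesSubst.unitX ^ l) : IteratedLaurent R) * monomial 0 (-N) 1 *
    (↑(𝓕.iotaSubst.unitX ^ k) : IteratedLaurent R) *
      ofMvPowerSeries (MvPowerSeries.subst ![𝓕.iotaX, 𝓕.series] g)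

section Recursion

variable {c : MvPowerSeries (Fin 2) R}

lemma invSeriesTerm_succ (hc : 𝓕.series = MvPowerSeries.X 0 + MvPowerSeries.X 1 * c)
    (N : ℕ) (k l : ℤ) (g : MvPowerSeries (Fin 2) R) :
    𝓕.invSeriesTerm (N + 1) k l g =
      𝓕.invSeriesTerm N (k - 1) l g - 𝓕.invSeriesTerm (N + 1) (k - 1) (l + 1) (c * g) := by
  have hF : (𝓕.seriesSubst.unitX : IteratedLaurent R) =
      monomial 1 0 1 + monomial 0 1 1 * ofMvPowerSeries c := by
    rw [PowerSeriesSubst.val_unitX, ← ofMvPowerSeries_X_zero, ← ofMvPowerSeries_X_one, ← map_mul,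
      ← map_add]
    exact congrArg ofMvPowerSeries hc
  have hx : monomial k l (1 : R) = monomial 1 0 1 * monomial (k - 1) l 1 := by
    rw [monomial_mul_monomial]; simp
  have hy : monomial (k - 1) (l + 1) (1 : R) = monomial 0 1 1 * monomial (k - 1) l 1 := by
    rw [monomial_mul_monomial, add_comm 1 l]; simp
  rw [invSeriesTerm, invSeriesTerm, invSeriesTerm, hx, hy, zpow_neg_natCast_eq_mul _ N,
    Units.val_mul, hF, map_mul]
  ring

lemma invSeriesTerm_swapVars_succ (hc : 𝓕.series = MvPowerSeries.X 0 + MvPowerSeries.X 1 * c)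
    (N : ℕ) (k l : ℤ) (g : MvPowerSeries (Fin 2) R) :
    𝓕.invSeriesTerm (N + 1) l k (swapVars g) = 𝓕.invSeriesTerm N l (k - 1) (swapVars g) -
      𝓕.invSeriesTerm (N + 1) (l + 1) (k - 1) (swapVars (c * g)) := by
  have hF : (𝓕.seriesSubst.unitX : IteratedLaurent R) =
      monomial 0 1 1 + monomial 1 0 1 * ofMvPowerSeries (swapVars c) := by
    rw [PowerSeriesSubst.val_unitX, ← ofMvPowerSeries_X_zero, ← ofMvPowerSeries_X_one,
      ← swapVars_X_zero, ← swapVars_X_one, ← map_mul, ← map_mul, ← map_add, ← map_add,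
      swapVars_X_one, ← hc, swapVars_series]
    rfl
  have hy : monomial l k (1 : R) = monomial 0 1 1 * monomial l (k - 1) 1 := by
    rw [monomial_mul_monomial]; simp
  have hx : monomial (l + 1) (k - 1) (1 : R) = monomial 1 0 1 * monomial l (k - 1) 1 := by
    rw [monomial_mul_monomial, add_comm 1 l]; simp
  rw [invSeriesTerm, invSeriesTerm, invSeriesTerm, hx, hy, zpow_neg_natCast_eq_mul _ N,
    Units.val_mul, hF, map_mul, map_mul]
  ring

lemma invYTerm_succ (hc : 𝓕.series = MvPowerSeries.X 0 + MvPowerSeries.X 1 * c)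
    (N : ℕ) (k l : ℤ) (g : MvPowerSeries (Fin 2) R) :
    𝓕.invYTerm (N + 1) k l g =
      𝓕.invYTerm N (k - 1) l g - 𝓕.invYTerm (N + 1) (k - 1) (l + 1) (c * g) := by
  have hs := 𝓕.hasSubst_iotaX_series
  have hX : (MvPowerSeries.X 1 : MvPowerSeries (Fin 2) R) =
      𝓕.iotaX + 𝓕.series * MvPowerSeries.subst ![𝓕.iotaX, 𝓕.series] c := by
    have h := congrArg (MvPowerSeries.subst ![𝓕.iotaX, 𝓕.series]) hc
    rw [series_subst_iotaX_series, MvPowerSeries.subst_add hs, MvPowerSeries.subst_mul hs,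
      MvPowerSeries.subst_X hs, MvPowerSeries.subst_X hs] at h
    exact h
  have hiota : (𝓕.iotaSubst.unitX : IteratedLaurent R) + (𝓕.seriesSubst.unitX : IteratedLaurent R) *
      ofMvPowerSeries (MvPowerSeries.subst ![𝓕.iotaX, 𝓕.series] c) = monomial 0 1 1 := by
    rw [PowerSeriesSubst.val_unitX, PowerSeriesSubst.val_unitX, ← ofMvPowerSeries_X_one, ← map_mul,
      ← map_add]
    exact congrArg ofMvPowerSeries hX.symm
  have hy : monomial 0 (-N : ℤ) (1 : R) = monomial 0 (-(N + 1 : ℕ) : ℤ) 1 * monomial 0 1 1 := by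
    rw [monomial_mul_monomial]; push_cast; simp
  have hk : (↑(𝓕.iotaSubst.unitX ^ k) : IteratedLaurent R) =
      (↑(𝓕.iotaSubst.unitX ^ (k - 1)) : IteratedLaurent R) * 𝓕.iotaSubst.unitX := by
    rw [← Units.val_mul, ← zpow_add_one, sub_add_cancel]
  have hl : (↑(𝓕.seriesSubst.unitX ^ (l + 1)) : IteratedLaurent R) =
      (↑(𝓕.seriesSubst.unitX ^ l) : IteratedLaurent R) * 𝓕.seriesSubst.unitX := by
    rw [← Units.val_mul, ← zpow_add_one]
  rw [invYTerm, invYTerm, invYTerm, hy, hk, hl, ← hiota, MvPowerSeries.subst_mul hs, map_mul]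
  ring

end Recursion

/-- The power series `F(x, ι(y))`. -/
def difference : MvPowerSeries (Fin 2) R :=
  MvPowerSeries.subst ![MvPowerSeries.X 0, 𝓕.iotaY] 𝓕.series

lemma hasSubst_difference : PowerSeries.HasSubst 𝓕.difference :=
  𝓕.hasSubst_series_subst (PowerSeries.HasSubst.X 0) 𝓕.hasSubst_iotaY

lemma swapVars_difference :
    swapVars 𝓕.difference = MvPowerSeries.subst ![MvPowerSeries.X 1, 𝓕.iotaX] 𝓕.series := by
  rw [difference, swapVars_subst_pair (hasSubst_pair (PowerSeries.HasSubst.X 0) 𝓕.hasSubst_iotaY),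
    swapVars_X_zero, swapVars_subst (PowerSeries.HasSubst.X 1), swapVars_X_one]

lemma hasSubst_swapVars_difference : PowerSeries.HasSubst (swapVars 𝓕.difference) := by
  rw [swapVars_difference]
  exact 𝓕.hasSubst_series_subst (PowerSeries.HasSubst.X 1) 𝓕.hasSubst_iotaX

lemma difference_subst_series :
    MvPowerSeries.subst ![𝓕.series, MvPowerSeries.X 1] 𝓕.difference = MvPowerSeries.X 0 := by
  have hs : MvPowerSeries.HasSubst ![𝓕.series, MvPowerSeries.X 1] := 𝓕.seriesSubst.hasSubst
  rw [difference, subst_pair_subst (hasSubst_pair (PowerSeries.HasSubst.X 0) 𝓕.hasSubst_iotaY) hs,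
    subst_powerSeries_subst (PowerSeries.HasSubst.X 1) hs, MvPowerSeries.subst_X hs,
    MvPowerSeries.subst_X hs]
  exact 𝓕.series_subst_series_iotaY

lemma swapVars_difference_subst_iotaX :
    MvPowerSeries.subst ![𝓕.iotaX, MvPowerSeries.X 1] (swapVars 𝓕.difference) = 𝓕.series := by
  have hs : MvPowerSeries.HasSubst ![𝓕.iotaX, MvPowerSeries.X 1] := 𝓕.iotaSubst.hasSubst
  rw [swapVars_difference,
    subst_pair_subst (hasSubst_pair (PowerSeries.HasSubst.X 1) 𝓕.hasSubst_iotaX) hs,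
    subst_powerSeries_subst (PowerSeries.HasSubst.X 0) hs, MvPowerSeries.subst_X hs,
    MvPowerSeries.subst_X hs]
  refine Eq.trans ?_ 𝓕.swapVars_series
  rw [swapVars_eq_subst]
  exact congrArg (fun t => MvPowerSeries.subst ![MvPowerSeries.X 1, t] 𝓕.series)
    (𝓕.iota_subst_iota_subst (PowerSeries.HasSubst.X 0))

lemma seriesSubst_hom_difference (N : ℕ) (k : ℤ) (l : ℕ) (g : MvPowerSeries (Fin 2) R) :
    𝓕.seriesSubst.hom (monomial (-N) k 1 * ofMvPowerSeries 𝓕.difference ^ l *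
      ofMvPowerSeries (MvPowerSeries.subst ![MvPowerSeries.X 1, 𝓕.difference] g)) =
        𝓕.invSeriesTerm N l k (swapVars g) := by
  have hs : MvPowerSeries.HasSubst ![𝓕.series, MvPowerSeries.X 1] := 𝓕.seriesSubst.hasSubst
  have hdiff : 𝓕.seriesSubst.hom (ofMvPowerSeries 𝓕.difference) = monomial 1 0 1 := by
    rw [PowerSeriesSubst.hom_ofMvPowerSeries, ← ofMvPowerSeries_X_zero]
    exact congrArg ofMvPowerSeries 𝓕.difference_subst_series
  have hg : 𝓕.seriesSubst.hom (ofMvPowerSeries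
      (MvPowerSeries.subst ![MvPowerSeries.X 1, 𝓕.difference] g)) =
        ofMvPowerSeries (swapVars g) := by
    rw [PowerSeriesSubst.hom_ofMvPowerSeries, swapVars_eq_subst]
    refine congrArg ofMvPowerSeries ((subst_pair_subst
      (hasSubst_pair (PowerSeries.HasSubst.X 1) 𝓕.hasSubst_difference) hs g).trans ?_)
    rw [difference_subst_series, MvPowerSeries.subst_X hs]
    rfl
  rw [map_mul, map_mul, map_pow, hdiff, hg, PowerSeriesSubst.hom_monomial,
    PowerSeriesSubst.val_unitY_zpow rfl, monomial_one_pow, invSeriesTerm, monomial_zero_one,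
    one_mul, mul_assoc (Units.val _), monomial_mul_monomial]
  simp only [mul_one, mul_zero, zero_add, add_zero]

lemma iotaSubst_hom_swapVars_difference (N : ℕ) (k : ℤ) (l : ℕ) (g : MvPowerSeries (Fin 2) R) :
    𝓕.iotaSubst.hom (monomial k (-N) 1 * ofMvPowerSeries (swapVars 𝓕.difference) ^ l *
      ofMvPowerSeries (MvPowerSeries.subst ![MvPowerSeries.X 0, swapVars 𝓕.difference] g)) =
        𝓕.invYTerm N k l g := by
  have hs : MvPowerSeries.HasSubst ![𝓕.iotaX, MvPowerSeries.X 1] := 𝓕.iotaSubst.hasSubst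
  have hdiff : 𝓕.iotaSubst.hom (ofMvPowerSeries (swapVars 𝓕.difference)) =
      𝓕.seriesSubst.unitX := by
    rw [PowerSeriesSubst.hom_ofMvPowerSeries, PowerSeriesSubst.val_unitX]
    exact congrArg ofMvPowerSeries 𝓕.swapVars_difference_subst_iotaX
  have hg : 𝓕.iotaSubst.hom (ofMvPowerSeries
      (MvPowerSeries.subst ![MvPowerSeries.X 0, swapVars 𝓕.difference] g)) =
        ofMvPowerSeries (MvPowerSeries.subst ![𝓕.iotaX, 𝓕.series] g) := by
    rw [PowerSeriesSubst.hom_ofMvPowerSeries]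
    refine congrArg ofMvPowerSeries ((subst_pair_subst
      (hasSubst_pair (PowerSeries.HasSubst.X 0) 𝓕.hasSubst_swapVars_difference) hs g).trans ?_)
    rw [swapVars_difference_subst_iotaX, MvPowerSeries.subst_X hs]
    rfl
  rw [map_mul, map_mul, map_pow, hdiff, hg, PowerSeriesSubst.hom_monomial,
    PowerSeriesSubst.val_unitY_zpow rfl, invYTerm, monomial_zero_one, one_mul, zpow_natCast,
    Units.val_pow_eq_pow_val]
  ring

lemma isSwap_difference (N : ℕ) (k : ℤ) (l : ℕ) (g : MvPowerSeries (Fin 2) R) :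
    IsSwap (monomial (-N) k 1 * ofMvPowerSeries 𝓕.difference ^ l *
        ofMvPowerSeries (MvPowerSeries.subst ![MvPowerSeries.X 1, 𝓕.difference] g))
      (monomial k (-N) 1 * ofMvPowerSeries (swapVars 𝓕.difference) ^ l *
        ofMvPowerSeries (MvPowerSeries.subst ![MvPowerSeries.X 0, swapVars 𝓕.difference] g)) := by
  refine ((IsSwap.monomial _ _ _).mul ?_).mul ?_
  · rw [← map_pow, ← map_pow, ← map_pow]
    exact isSwap_ofMvPowerSeries _
  · simpa only [swapVars_subst_pair
      (hasSubst_pair (PowerSeries.HasSubst.X 1) 𝓕.hasSubst_difference), swapVars_X_one] using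
      isSwap_ofMvPowerSeries (MvPowerSeries.subst ![MvPowerSeries.X 1, 𝓕.difference] g)

lemma iteratedRes_invYTerm_natCast (N : ℕ) (k : ℤ) (l : ℕ) (g : MvPowerSeries (Fin 2) R) :
    𝓕.iteratedRes (𝓕.invYTerm N k l g) =
      -𝓕.iteratedRes (𝓕.invSeriesTerm N l k (swapVars g)) := by
  rw [← iotaSubst_hom_swapVars_difference, ← seriesSubst_hom_difference, iteratedRes_iotaSubst_hom,
    iteratedRes_seriesSubst_hom, 𝓕.iteratedRes_eq_of_isSwap (𝓕.isSwap_difference N k l g)]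

lemma iteratedRes_invSeriesTerm_natCast (N : ℕ) (k : ℤ) (l : ℕ) (g : MvPowerSeries (Fin 2) R) :
    𝓕.iteratedRes (𝓕.invSeriesTerm N k l g) = 0 :=
  𝓕.iteratedRes_eq_zero (mul_mem (mul_mem (PowerSeriesSubst.unitX_zpow_mem_powerSeriesInY _ _)
    (monomial_mem_powerSeriesInY _ (by omega) _)) (ofMvPowerSeries_mem_powerSeriesInY _))

lemma iteratedRes_invYTerm_zero (k l : ℤ) (g : MvPowerSeries (Fin 2) R) :
    𝓕.iteratedRes (𝓕.invYTerm 0 k l g) = 0 :=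
  𝓕.iteratedRes_eq_zero (mul_mem (mul_mem (mul_mem
    (PowerSeriesSubst.unitX_zpow_mem_powerSeriesInY _ _)
    (monomial_mem_powerSeriesInY _ (by simp) _))
    (PowerSeriesSubst.unitX_zpow_mem_powerSeriesInY _ _)) (ofMvPowerSeries_mem_powerSeriesInY _))

lemma isSwap_invSeriesTerm_zero (k l : ℤ) (g : MvPowerSeries (Fin 2) R) :
    IsSwap (𝓕.invSeriesTerm 0 k l g) (𝓕.invSeriesTerm 0 l k (swapVars g)) := by
  simp only [invSeriesTerm, Nat.cast_zero, neg_zero, zpow_zero, Units.val_one, one_mul]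
  exact (IsSwap.monomial _ _ _).mul (isSwap_ofMvPowerSeries _)

/-- The three-term residue identity. Multiplying by `x = F(x, y) - y c(x, y)` lowers the power of
`F⁻¹` at the cost of raising that of `y`, which reduces to `N = 0` and to `0 ≤ l`. -/
theorem iteratedRes_invSeriesTerm_sub (N : ℕ) (k l : ℤ) (g : MvPowerSeries (Fin 2) R) :
    𝓕.iteratedRes (𝓕.invSeriesTerm N k l g) -
      𝓕.iteratedRes (𝓕.invSeriesTerm N l k (swapVars g)) = 𝓕.iteratedRes (𝓕.invYTerm N k l g) := by
  obtain ⟨c, hc⟩ := 𝓕.exists_series_eq_X_zero_add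
  induction N generalizing k l g with
  | zero =>
    rw [iteratedRes_invYTerm_zero, 𝓕.iteratedRes_eq_of_isSwap (𝓕.isSwap_invSeriesTerm_zero k l g),
      sub_self]
  | succ N ih =>
    obtain ⟨d, hd⟩ : ∃ d : ℕ, -l ≤ d := ⟨(-l).toNat, Int.self_le_toNat _⟩
    induction d generalizing k l g with
    | zero =>
      obtain ⟨l, rfl⟩ := Int.eq_ofNat_of_zero_le (show 0 ≤ l by omega)
      rw [iteratedRes_invSeriesTerm_natCast, iteratedRes_invYTerm_natCast, zero_sub]
    | succ d ihd =>
      rw [𝓕.invSeriesTerm_succ hc, 𝓕.invSeriesTerm_swapVars_succ hc, 𝓕.invYTerm_succ hc,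
        iteratedRes_sub, iteratedRes_sub, iteratedRes_sub, ← ih,
        ← ihd (k - 1) (l + 1) (c * g) (by push_cast at hd; omega)]
      ring

end FormalGroupLaw

/-! ### Base change and embeddings of modules -/

lemma map_finsum_of_injective {F M N ι : Type*} [AddCommMonoid M] [AddCommMonoid N]
    [FunLike F M N] [AddMonoidHomClass F M N] {φ : F} (hφ : Function.Injective φ) (f : ι → M) :
    φ (∑ᶠ i, f i) = ∑ᶠ i, φ (f i) :=
  AddMonoidHom.map_finsum_of_injective (φ : M →+ N) hφ f

section BaseChange

variable {R S : Type*} [CommRing R] [CommRing S] {φ : R →+* S}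

lemma map_oneS (n : ℤ) : φ (oneS R n) = oneS S n := by
  rw [oneS, oneS, apply_ite φ, map_one, map_zero]

lemma map_oneS2 (i j : ℤ) : φ (oneS2 R i j) = oneS2 S i j := by
  rw [oneS2, oneS2, apply_ite φ, map_one, map_zero]

lemma map_pow1 (hφ : Function.Injective φ) (f : ℤ → R) (k : ℕ) (n : ℤ) :
    φ (pow1 f k n) = pow1 (fun i => φ (f i)) k n := by
  induction k generalizing n with
  | zero => exact map_oneS n
  | succ k ih =>
    rw [pow1, mulS, map_finsum_of_injective hφ, pow1, mulS]
    simp only [smul_eq_mul, map_mul, ih]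

lemma map_pow2 (hφ : Function.Injective φ) (f : ℤ → ℤ → R) (k : ℕ) (i j : ℤ) :
    φ (pow2 f k i j) = pow2 (fun i j => φ (f i j)) k i j := by
  induction k generalizing i j with
  | zero => exact map_oneS2 i j
  | succ k ih =>
    rw [pow2, mulS2, map_finsum_of_injective hφ, pow2, mulS2]
    simp only [smul_eq_mul, map_mul, ih]

lemma map_izwPow (hφ : Function.Injective φ) (G : ℤ → ℤ → R) (n i j : ℤ) :
    φ (izwPow G n i j) = izwPow (fun i j => φ (G i j)) n i j := by
  rw [izwPow, map_finsum_of_injective hφ, izwPow]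
  refine finsum_congr fun k => ?_
  rw [map_mul, map_intCast, map_pow2 hφ]
  congr 2
  funext i j
  rw [hzS, map_sub, map_oneS2]
  rfl

lemma map_iotaPow (hφ : Function.Injective φ) (f : ℤ → R) (n i : ℤ) :
    φ (iotaPow f n i) = iotaPow (fun i => φ (f i)) n i := by
  rw [iotaPow, map_mul, map_intCast, map_finsum_of_injective hφ, iotaPow]
  congr 1
  refine finsum_congr fun k => ?_
  rw [map_mul, map_intCast, map_pow1 hφ]
  congr 2
  funext i
  rw [hS, map_sub, map_neg, map_oneS]
  rfl

lemma map_invOne (hφ : Function.Injective φ) (f : ℤ → R) (i : ℤ) :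
    φ (invOne f i) = invOne (fun i => φ (f i)) i := by
  rw [invOne, map_finsum_of_injective hφ, invOne]
  refine finsum_congr fun k => ?_
  rw [map_mul, map_pow, map_neg, map_one, map_pow1 hφ]
  congr 2
  funext i
  rw [hOneS, map_sub, map_oneS]
  rfl

/-- The base change of a formal group law along an injective ring homomorphism. Injectivity makes
`φ` commute with every `finsum`, including those that take the junk value `0`. -/
def FormalGroupLaw.map (𝓕 : FormalGroupLaw R) (φ : R →+* S) (hφ : Function.Injective φ) :
    FormalGroupLaw S where
  F i j := φ (𝓕.F i j)
  F_supp i j h := by rw [𝓕.F_supp i j h, map_zero]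
  F_modw i := by rw [𝓕.F_modw, apply_ite φ, map_one, map_zero]
  F_comm i j := by rw [𝓕.F_comm]
  F_assoc a b c := by
    have h := congrArg φ (𝓕.F_assoc a b c)
    rw [map_finsum_of_injective hφ, map_finsum_of_injective hφ] at h
    simpa only [map_mul, map_pow2 hφ] using h
  inv i := φ (𝓕.inv i)
  inv_supp i h := by rw [𝓕.inv_supp i h, map_zero]
  inv_one := by rw [𝓕.inv_one, map_neg, map_one]
  inv_eq n := by
    have h := congrArg φ (𝓕.inv_eq n)
    rw [map_finsum_of_injective hφ, map_zero] at h
    simpa only [map_mul, map_pow1 hφ] using h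

end BaseChange

/-- An embedding `e` of an `R`-module into a commutative ring `S`, semilinear over an embedding `φ`
of `R` into `S`. It turns series with coefficients in the module into ring elements. -/
structure ModuleEmbedding (R M S : Type*) [CommRing R] [AddCommGroup M] [Module R M]
    [CommRing S] where
  φ : R →+* S
  φ_injective : Function.Injective φ
  e : M →+ S
  e_injective : Function.Injective e
  e_smul : ∀ (r : R) (v : M), e (r • v) = φ r * e v

universe u v

theorem exists_moduleEmbedding (R : Type u) (M : Type v) [CommRing R] [AddCommGroup M]
    [Module R M] : ∃ (S : Type max u v) (_ : CommRing S), Nonempty (ModuleEmbedding R M S) := by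
  let _ : Module Rᵐᵒᵖ M := Module.compHom M ((RingHom.id R).fromOpposite mul_comm)
  have : IsCentralScalar R M := ⟨fun _ _ => rfl⟩
  exact ⟨TrivSqZeroExt R M, inferInstance, ⟨{
    φ := TrivSqZeroExt.inlHom R M
    φ_injective := TrivSqZeroExt.inl_injective
    e := (TrivSqZeroExt.inrHom R M).toAddMonoidHom
    e_injective := TrivSqZeroExt.inr_injective
    e_smul := fun r v => (TrivSqZeroExt.inl_mul_inr r v).symm }⟩⟩

namespace ModuleEmbedding

variable {R M S : Type*} [CommRing R] [AddCommGroup M] [Module R M] [CommRing S]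
  (E : ModuleEmbedding R M S) (𝓕 : FormalGroupLaw R)

/-- The formal group law over the ring `S`. -/
abbrev law : FormalGroupLaw S := 𝓕.map E.φ E.φ_injective

lemma izwPow_law (n i j : ℤ) : izwPow (E.law 𝓕).F n i j = E.φ (izwPow 𝓕.F n i j) :=
  (map_izwPow E.φ_injective _ _ _ _).symm

lemma iotaPow_law (n i : ℤ) : iotaPow (E.law 𝓕).inv n i = E.φ (iotaPow 𝓕.inv n i) :=
  (map_iotaPow E.φ_injective _ _ _).symm

lemma pow2_law (n : ℕ) (i j : ℤ) : pow2 (E.law 𝓕).F n i j = E.φ (pow2 𝓕.F n i j) :=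
  (map_pow2 E.φ_injective _ _ _ _).symm

lemma pF_law (i : ℤ) : (E.law 𝓕).pF i = E.φ (𝓕.pF i) := (map_invOne E.φ_injective _ _).symm

lemma e_resF (f : ℤ → M) : E.e (𝓕.resF f) = ∑ᶠ i : ℤ, (E.law 𝓕).pF i * E.e (f (-1 - i)) := by
  rw [FormalGroupLaw.resF, map_finsum_of_injective E.e_injective]
  simp only [e_smul, pF_law]

lemma e_mulS2 (f : ℤ → ℤ → R) (g : ℤ → ℤ → M) (i j : ℤ) :
    E.e (mulS2 f g i j) = mulS2 (fun i j => E.φ (f i j)) (fun i j => E.e (g i j)) i j := by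
  rw [mulS2, map_finsum_of_injective E.e_injective, mulS2]
  simp only [e_smul, smul_eq_mul]

lemma e_substF (c : ℤ → M) (k n : ℤ) :
    E.e (substF 𝓕 c k n) = ∑ᶠ m : ℤ, izwPow (E.law 𝓕).F m k n * E.e (c m) := by
  rw [substF, map_finsum_of_injective E.e_injective]
  simp only [e_smul, izwPow_law]

end ModuleEmbedding

namespace IteratedLaurent.PowerSeriesSubst

variable {R : Type*} [CommRing R] (s : PowerSeriesSubst R)

lemma coeffXY_hom (f : IteratedLaurent R) (i j : ℤ) :
    coeffXY (s.hom f) i j = ∑ᶠ p : ℤ × ℤ, coeffXY f p.1 p.2 *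
      coeffXY ((↑(s.unitX ^ p.1) : IteratedLaurent R) * (↑(s.unitY ^ p.2) : IteratedLaurent R))
        i j :=
  (s.monomialSubst.coeff_hom f _).trans
    (finsum_eq_of_bijective xyEquiv xyEquiv.bijective fun _ => rfl).symm

lemma hasFiniteSupport_coeffXY_hom (f : IteratedLaurent R) (i j : ℤ) :
    (fun p : ℤ × ℤ => coeffXY f p.1 p.2 *
      coeffXY ((↑(s.unitX ^ p.1) : IteratedLaurent R) * (↑(s.unitY ^ p.2) : IteratedLaurent R))
        i j).HasFiniteSupport :=
  (s.monomialSubst.hasFiniteSupport_coeff_hom f (xy i j)).preimage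
    (f := xyEquiv) xyEquiv.injective.injOn

lemma coeffXY_unitX_zpow_mul_unitY_zpow (hb : s.b = MvPowerSeries.X 1) (m n i j : ℤ) :
    coeffXY ((↑(s.unitX ^ m) : IteratedLaurent R) * (↑(s.unitY ^ n) : IteratedLaurent R)) i j =
      coeffXY (↑(s.unitX ^ m) : IteratedLaurent R) i (j - n) := by
  rw [s.val_unitY_zpow hb, mul_comm, coeffXY_monomial_mul, sub_zero, one_mul]

end IteratedLaurent.PowerSeriesSubst

namespace FormalGroupLaw

variable {R : Type*} [CommRing R] (𝓕 : FormalGroupLaw R)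

lemma coeffXY_mul_pX (f : IteratedLaurent R) (i j : ℤ) :
    coeffXY (f * 𝓕.pX) i j = ∑ᶠ k : ℤ, 𝓕.pF k * coeffXY f (i - k) j := by
  rw [mul_comm, coeffXY_mul, mulS2,
    ← finsum_comp_of_injective (e := fun k : ℤ => (k, (0 : ℤ))) fun _ _ h => (Prod.mk.inj h).1]
  · refine finsum_congr fun k => ?_
    rw [coeffXY_pX, if_pos rfl, smul_eq_mul, sub_zero]
  · rintro ⟨k, l⟩ h
    by_contra hl
    refine h ?_
    beta_reduce
    rw [coeffXY_pX, if_neg fun h0 => hl ⟨k, by rw [← h0]⟩, zero_smul]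

lemma coeffXY_mul_pY (f : IteratedLaurent R) (i j : ℤ) :
    coeffXY (f * 𝓕.pY) i j = ∑ᶠ k : ℤ, 𝓕.pF k * coeffXY f i (j - k) := by
  rw [mul_comm, coeffXY_mul, mulS2,
    ← finsum_comp_of_injective (e := fun k : ℤ => ((0 : ℤ), k)) fun _ _ h => (Prod.mk.inj h).2]
  · refine finsum_congr fun k => ?_
    rw [coeffXY_pY, if_pos rfl, smul_eq_mul, sub_zero]
  · rintro ⟨k, l⟩ h
    by_contra hk
    refine h ?_
    beta_reduce
    rw [coeffXY_pY, if_neg fun h0 => hk ⟨l, by rw [← h0]⟩, zero_smul]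

lemma iteratedRes_eq_finsum (f : IteratedLaurent R) : 𝓕.iteratedRes f =
    ∑ᶠ i : ℤ, 𝓕.pF i * ∑ᶠ j : ℤ, 𝓕.pF j * coeffXY f (-1 - i) (-1 - j) := by
  rw [iteratedRes, mul_right_comm, coeffXY_mul_pX]
  simp only [coeffXY_mul_pY]

lemma coeffXY_seriesSubst_hom (f : IteratedLaurent R) (i j : ℤ) :
    coeffXY (𝓕.seriesSubst.hom f) i j =
      ∑ᶠ p : ℤ × ℤ, coeffXY f p.1 p.2 * izwPow 𝓕.F p.1 i (j - p.2) := by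
  simp only [PowerSeriesSubst.coeffXY_hom,
    𝓕.seriesSubst.coeffXY_unitX_zpow_mul_unitY_zpow rfl, coeffXY_seriesSubst_unitX_zpow]

lemma hasFiniteSupport_coeffXY_seriesSubst_hom (f : IteratedLaurent R) (i j : ℤ) :
    (fun p : ℤ × ℤ => coeffXY f p.1 p.2 * izwPow 𝓕.F p.1 i (j - p.2)).HasFiniteSupport := by
  simpa only [𝓕.seriesSubst.coeffXY_unitX_zpow_mul_unitY_zpow rfl,
    coeffXY_seriesSubst_unitX_zpow] using 𝓕.seriesSubst.hasFiniteSupport_coeffXY_hom f i j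

lemma coeffXY_iotaSubst_hom (f : IteratedLaurent R) (i j : ℤ) :
    coeffXY (𝓕.iotaSubst.hom f) i j =
      ∑ᶠ p : ℤ × ℤ, coeffXY f p.1 p.2 * if j = p.2 then iotaPow 𝓕.inv p.1 i else 0 := by
  simp only [PowerSeriesSubst.coeffXY_hom, 𝓕.iotaSubst.coeffXY_unitX_zpow_mul_unitY_zpow rfl,
    coeffXY_iotaSubst_unitX_zpow, sub_eq_zero]

lemma coeffXY_seriesIotaSubst_unitY_zpow (n i j : ℤ) :
    coeffXY (↑(𝓕.seriesIotaSubst.unitY ^ n) : IteratedLaurent R) i j =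
      if i = 0 then iotaPow 𝓕.inv n j else 0 := by
  have h : 𝓕.seriesIotaSubst.unitY =
      Units.map (ofLaurentY (R := R) : HahnSeries ℤ R →* IteratedLaurent R) 𝓕.iotaLeading.unit := by
    refine Units.ext ?_
    rw [PowerSeriesSubst.val_unitY, Units.coe_map, LeadingUnit.val_unit]
    exact ofMvPowerSeries_subst_X_one _
  rw [h, ← map_zpow, Units.coe_map]
  refine (coeffXY_ofLaurentY _ i j).trans ?_
  rw [coeff_iotaLeading_zpow]

lemma seriesIotaSubst_unitX : 𝓕.seriesIotaSubst.unitX = 𝓕.seriesSubst.unitX :=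
  Units.ext (by rw [PowerSeriesSubst.val_unitX, PowerSeriesSubst.val_unitX]; rfl)

lemma isSwap_iota_zpow (n : ℤ) :
    IsSwap (↑(𝓕.seriesIotaSubst.unitY ^ n) : IteratedLaurent R) (↑(𝓕.iotaSubst.unitX ^ n)) :=
  fun i j => by rw [coeffXY_seriesIotaSubst_unitY_zpow, coeffXY_iotaSubst_unitX_zpow]

lemma coeffXY_seriesIotaSubst_zpow_mul_zpow (m n i j : ℤ) :
    coeffXY ((↑(𝓕.seriesIotaSubst.unitX ^ m) : IteratedLaurent R) *
      (↑(𝓕.seriesIotaSubst.unitY ^ n) : IteratedLaurent R)) i j =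
        ∑ᶠ k : ℤ, izwPow 𝓕.F m i k * iotaPow 𝓕.inv n (j - k) := by
  rw [coeffXY_mul, mulS2,
    ← finsum_comp_of_injective (e := fun k : ℤ => (i, k)) fun _ _ h => (Prod.mk.inj h).2]
  · refine finsum_congr fun k => ?_
    rw [seriesIotaSubst_unitX, coeffXY_seriesSubst_unitX_zpow, coeffXY_seriesIotaSubst_unitY_zpow,
      if_pos (sub_self i), smul_eq_mul]
  · rintro ⟨k, l⟩ h
    by_contra hk
    refine h ?_
    beta_reduce
    rw [coeffXY_seriesIotaSubst_unitY_zpow,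
      if_neg fun h0 => hk ⟨l, Prod.ext (sub_eq_zero.mp h0) rfl⟩, smul_zero]

lemma izwPow_eq_zero {m i j : ℤ} (h : j < 0) : izwPow 𝓕.F m i j = 0 := by
  rw [← coeffXY_seriesSubst_unitX_zpow]
  exact 𝓕.seriesSubst.unitX_zpow_mem_powerSeriesInY m i j h

lemma iotaPow_eq_zero {n i : ℤ} (h : i < n) : iotaPow 𝓕.inv n i = 0 := by
  rw [← coeff_iotaLeading_zpow]
  refine LeadingUnit.coeff_unit_zpow_of_lt _ ?_
  rwa [show 𝓕.iotaLeading.exp = 1 from rfl, smul_eq_mul, mul_one]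

lemma pF_eq_zero {i : ℤ} (h : i < 0) : 𝓕.pF i = 0 := by
  have hpX := 𝓕.coeffXY_pX i 0
  rwa [if_pos rfl, pX, coeffXY_ofMvPowerSeries_of_neg _ (.inl h), eq_comm] at hpX

end FormalGroupLaw

/-! ### Residues of vertex operators -/

lemma IsLaurent.map {F M N : Type*} [AddCommGroup M] [AddCommGroup N] [FunLike F M N]
    [ZeroHomClass F M N] (φ : F) {c : ℤ → M} (hc : IsLaurent c) : IsLaurent fun n => φ (c n) := by
  obtain ⟨N, hN⟩ := hc
  exact ⟨N, fun n hn => by beta_reduce; rw [hN n hn, map_zero]⟩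

namespace ModuleEmbedding

variable {R M S : Type*} [CommRing R] [AddCommGroup M] [Module R M] [CommRing S]
  (E : ModuleEmbedding R M S) (𝓕 : FormalGroupLaw R) {c : ℤ → M}

/-- The Laurent series `∑ e(cᵢ) xⁱ` in the variable `x`. -/
def seriesX (hc : IsLaurent c) : IteratedLaurent S :=
  ofCoeff (fun i j => if j = 0 then E.e (c i) else 0) ⟨0, fun j hj i => if_neg hj.ne⟩ fun j => by
    obtain ⟨N, hN⟩ := hc
    exact ⟨N, fun i hi => by rw [hN i hi, map_zero, ite_self]⟩

lemma coeffXY_seriesX (hc : IsLaurent c) (i j : ℤ) :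
    coeffXY (E.seriesX hc) i j = if j = 0 then E.e (c i) else 0 := rfl

lemma finsum_coeffXY_seriesX_mul (hc : IsLaurent c) (g : ℤ → ℤ → S) :
    ∑ᶠ p : ℤ × ℤ, coeffXY (E.seriesX hc) p.1 p.2 * g p.1 p.2 = ∑ᶠ m : ℤ, g m 0 * E.e (c m) := by
  rw [← finsum_comp_of_injective (e := fun m : ℤ => (m, (0 : ℤ))) fun _ _ h => (Prod.mk.inj h).1]
  · refine finsum_congr fun m => ?_
    rw [coeffXY_seriesX, if_pos rfl, mul_comm]
  · rintro ⟨m, l⟩ h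
    by_contra hl
    refine h ?_
    beta_reduce
    rw [coeffXY_seriesX, if_neg fun h0 => hl ⟨m, by rw [← h0]⟩, zero_mul]

lemma coeffXY_seriesSubst_seriesX (hc : IsLaurent c) (i j : ℤ) :
    coeffXY ((E.law 𝓕).seriesSubst.hom (E.seriesX hc)) i j = E.e (substF 𝓕 c i j) := by
  rw [FormalGroupLaw.coeffXY_seriesSubst_hom,
    E.finsum_coeffXY_seriesX_mul hc fun m l => izwPow (E.law 𝓕).F m i (j - l), sub_zero, e_substF]

lemma coeffXY_iotaSubst_seriesX (hc : IsLaurent c) (i : ℤ) :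
    coeffXY ((E.law 𝓕).iotaSubst.hom (E.seriesX hc)) i 0 =
      E.e (∑ᶠ m : ℤ, iotaPow 𝓕.inv m i • c m) := by
  rw [FormalGroupLaw.coeffXY_iotaSubst_hom, E.finsum_coeffXY_seriesX_mul hc
      fun m l => if 0 = l then iotaPow (E.law 𝓕).inv m i else 0,
    map_finsum_of_injective E.e_injective]
  simp only [e_smul, iotaPow_law, if_true]

lemma hasFiniteSupport_izwPow_mul (hc : IsLaurent c) (k n : ℤ) :
    (fun m : ℤ => izwPow (E.law 𝓕).F m k n * E.e (c m)).HasFiniteSupport := by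
  have h := ((E.law 𝓕).hasFiniteSupport_coeffXY_seriesSubst_hom (E.seriesX hc) k n).preimage
    (f := fun m : ℤ => (m, (0 : ℤ))) fun _ _ _ _ h => (Prod.mk.inj h).1
  refine h.subset fun m hm => ?_
  rwa [Set.mem_preimage, Function.mem_support, coeffXY_seriesX, if_pos rfl, sub_zero, mul_comm]

end ModuleEmbedding

namespace FormalGroupLaw

variable {R M : Type*} [CommRing R] [AddCommGroup M] [Module R M] (𝓕 : FormalGroupLaw R)
  {c d : ℤ → M}

/-- The substitution `z ↦ F(z, w)` preserves residues: only the coefficient of `w ^ 0` has one. -/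
theorem resF_substF_of_ne_zero (hc : IsLaurent c) {n : ℤ} (hn : n ≠ 0) :
    𝓕.resF (fun k => substF 𝓕 c k n) = 0 := by
  obtain ⟨S, _, ⟨E⟩⟩ := exists_moduleEmbedding R M
  refine E.e_injective ?_
  rw [E.e_resF, map_zero]
  simp only [← E.coeffXY_seriesSubst_seriesX 𝓕 hc]
  rw [← coeffXY_mul_pX, coeffXY_seriesSubst_hom_mul_pX, coeffXY_mul_pX]
  simp only [E.coeffXY_seriesX, if_neg hn, mul_zero, finsum_zero]

theorem resF_iota (hc : IsLaurent c) :
    𝓕.resF (fun k => ∑ᶠ m : ℤ, iotaPow 𝓕.inv m k • c m) = -𝓕.resF c := by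
  obtain ⟨S, _, ⟨E⟩⟩ := exists_moduleEmbedding R M
  refine E.e_injective ?_
  rw [E.e_resF, map_neg, E.e_resF]
  simp only [← E.coeffXY_iotaSubst_seriesX 𝓕 hc]
  rw [← coeffXY_mul_pX, coeffXY_iotaSubst_hom_mul_pX, coeffXY_mul_pX]
  simp only [E.coeffXY_seriesX, if_true]

lemma hasFiniteSupport_resF (hc : IsLaurent c) :
    (fun i : ℤ => 𝓕.pF i • c (-1 - i)).HasFiniteSupport := by
  obtain ⟨N, hN⟩ := hc
  refine (Set.finite_Icc 0 (-1 - N)).subset fun i hi => ?_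
  have h0 : 0 ≤ i := by
    by_contra! h
    exact hi (by beta_reduce; rw [𝓕.pF_eq_zero h, zero_smul])
  have hN' : N ≤ -1 - i := by
    by_contra! h
    exact hi (by beta_reduce; rw [hN _ h, smul_zero])
  exact ⟨h0, by omega⟩

lemma map_resF {M' : Type*} [AddCommGroup M'] [Module R M'] (L : M →ₗ[R] M') (hc : IsLaurent c) :
    L (𝓕.resF c) = 𝓕.resF fun i => L (c i) := by
  rw [resF, map_finsum L (𝓕.hasFiniteSupport_resF hc), resF]
  simp only [map_smul]

lemma resF_add (hc : IsLaurent c) (hd : IsLaurent d) :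
    𝓕.resF (c + d) = 𝓕.resF c + 𝓕.resF d := by
  rw [resF, resF, resF,
    ← finsum_add_distrib (𝓕.hasFiniteSupport_resF hc) (𝓕.hasFiniteSupport_resF hd)]
  simp only [Pi.add_apply, smul_add]

lemma resF_smul (r : R) (hc : IsLaurent c) : 𝓕.resF (r • c) = r • 𝓕.resF c :=
  (𝓕.map_resF (r • LinearMap.id) hc).symm

end FormalGroupLaw

/-- A vertex `F`-algebra without vacuum: a field map `Y` and shift coefficients `S n` with
`𝒮(0) = id`, covariance of `Y` under the shift, weak `F`-associativity and skew symmetry, but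
neither a vacuum nor the composition law `𝒮(z) ∘ 𝒮(w) = 𝒮(F(z,w))`. The encoding of the fields is
that of `VertexFAlgebra`. -/
structure NonunitalVertexFAlgebra (R : Type*) [CommRing R] (𝓕 : FormalGroupLaw R)
    (V : Type*) [AddCommGroup V] [Module R V] where
  S : ℕ → V →ₗ[R] V
  Y : V →ₗ[R] V →ₗ[R] (ℤ → V)
  Y_laurent : ∀ a b : V, IsLaurent (Y a b)
  S_zero : S 0 = LinearMap.id
  translation : ∀ (a b : V) (k : ℤ) (n : ℕ), Y (S n a) b k = substF 𝓕 (Y a b) k n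
  weak_assoc : ∀ a b c : V, ∃ N : ℕ,
    mulS2 (pow2 𝓕.F N) (fun k l => Y (Y a b k) c l) =
      mulS2 (pow2 𝓕.F N) (substFProd 𝓕 (fun v => Y a v) (Y b c))
  skew : ∀ (a b : V) (k : ℤ),
    Y a b k = ∑ᶠ q : ℕ × ℤ, iotaPow 𝓕.inv q.2 (k - q.1) • S q.1 (Y b a q.2)

/-- The underlying vertex `F`-algebra without vacuum. -/
def VertexFAlgebra.toNonunital {R V : Type*} [CommRing R] {𝓕 : FormalGroupLaw R}
    [AddCommGroup V] [Module R V] (A : VertexFAlgebra R 𝓕 V) : NonunitalVertexFAlgebra R 𝓕 V where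
  S := A.S
  Y := A.Y
  Y_laurent := A.Y_laurent
  S_zero := A.S_zero
  translation := A.translation
  weak_assoc := A.weak_assoc
  skew := A.skew

namespace NonunitalVertexFAlgebra

variable {R V : Type*} [CommRing R] {𝓕 : FormalGroupLaw R} [AddCommGroup V] [Module R V]
  (A : NonunitalVertexFAlgebra R 𝓕 V)

/-- The bracket `[a, b] = Res^F_{z=0} Y(a, z)b dz` on `V` itself. -/
def bracket : V →ₗ[R] V →ₗ[R] V :=
  LinearMap.mk₂ R (fun a b => 𝓕.resF (A.Y a b))
    (fun a a' b => by
      rw [map_add, LinearMap.add_apply, 𝓕.resF_add (A.Y_laurent _ _) (A.Y_laurent _ _)])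
    (fun r a b => by rw [map_smul, LinearMap.smul_apply, 𝓕.resF_smul r (A.Y_laurent _ _)])
    (fun a b b' => by rw [map_add, 𝓕.resF_add (A.Y_laurent _ _) (A.Y_laurent _ _)])
    (fun r a b => by rw [map_smul, 𝓕.resF_smul r (A.Y_laurent _ _)])

lemma bracket_apply (a b : V) : A.bracket a b = 𝓕.resF (A.Y a b) := rfl

theorem bracket_shift {n : ℕ} (hn : n ≠ 0) (a b : V) : A.bracket (A.S n a) b = 0 := by
  rw [bracket_apply, funext fun k => A.translation a b k n,
    𝓕.resF_substF_of_ne_zero (A.Y_laurent a b) (by exact_mod_cast hn)]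

lemma hasFiniteSupport_skew (a b : V) (k : ℤ) : (fun q : ℕ × ℤ =>
    iotaPow 𝓕.inv q.2 (k - q.1) • A.S q.1 (A.Y b a q.2)).HasFiniteSupport := by
  obtain ⟨N, hN⟩ := A.Y_laurent b a
  refine ((Set.finite_Iic (k - N).toNat).prod (Set.finite_Icc N k)).subset fun q hq => ?_
  have hNq : N ≤ q.2 := by
    by_contra! h
    exact hq (by beta_reduce; rw [hN _ h, map_zero, smul_zero])
  have hqk : q.2 ≤ k - q.1 := by
    by_contra! h
    exact hq (by beta_reduce; rw [𝓕.iotaPow_eq_zero h, zero_smul])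
  rw [Set.mem_prod, Set.mem_Iic, Set.mem_Icc]
  omega

lemma map_skew {M : Type*} [AddCommGroup M] [Module R M] (L : V →ₗ[R] M) (a b : V) (k : ℤ) :
    L (A.Y a b k) =
      ∑ᶠ q : ℕ × ℤ, iotaPow 𝓕.inv q.2 (k - q.1) • L (A.S q.1 (A.Y b a q.2)) := by
  rw [A.skew, map_finsum L (A.hasFiniteSupport_skew a b k)]
  simp only [map_smul]

theorem map_bracket_skew {M : Type*} [AddCommGroup M] [Module R M] {L : V →ₗ[R] M}
    (hL : ∀ n ≠ 0, ∀ v, L (A.S n v) = 0) (a b : V) :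
    L (A.bracket a b) = -L (A.bracket b a) := by
  have hLY (k : ℤ) : L (A.Y a b k) = ∑ᶠ m : ℤ, iotaPow 𝓕.inv m k • L (A.Y b a m) := by
    rw [A.map_skew, ← finsum_comp_of_injective (e := fun m : ℤ => (0, m))
      fun _ _ h => (Prod.mk.inj h).2]
    · simp only [Nat.cast_zero, sub_zero, A.S_zero, LinearMap.id_apply]
    · rintro ⟨n, m⟩ h
      by_contra hn
      exact h (by beta_reduce; rw [hL n fun h0 => hn ⟨m, by rw [h0]⟩, smul_zero])
  rw [bracket_apply, bracket_apply, 𝓕.map_resF L (A.Y_laurent _ _),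
    𝓕.map_resF L (A.Y_laurent _ _), ← 𝓕.resF_iota ((A.Y_laurent b a).map L), funext hLY]

end NonunitalVertexFAlgebra

namespace IteratedLaurent

variable {R : Type*} [CommRing R]

/-- Exchanging the variables is possible only if the poles in both variables are bounded. -/
lemma exists_eq_monomial_mul_of_isSwap {f f' : IteratedLaurent R} (h : IsSwap f f') :
    ∃ (k l : ℤ) (g : MvPowerSeries (Fin 2) R),
      f' = monomial k l 1 * ofMvPowerSeries g ∧
      f = monomial l k 1 * ofMvPowerSeries (swapVars g) := by
  obtain ⟨l, hl⟩ := exists_coeffXY_eq_zero_of_lt f'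
  obtain ⟨k, hk⟩ := exists_coeffXY_eq_zero_of_lt f
  let g : MvPowerSeries (Fin 2) R := fun d => coeffXY f' (d 0 + k) (d 1 + l)
  have hf' : f' = monomial k l 1 * ofMvPowerSeries g := by
    refine ext_coeffXY fun i j => ?_
    rw [coeffXY_monomial_mul, one_mul]
    rcases lt_or_ge i k with hi | hi
    · rw [coeffXY_ofMvPowerSeries_of_neg _ (.inl (sub_neg.mpr hi)), ← h, hk i hi]
    rcases lt_or_ge j l with hj | hj
    · rw [coeffXY_ofMvPowerSeries_of_neg _ (.inr (sub_neg.mpr hj)), hl j hj]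
    obtain ⟨m, hm⟩ := Int.eq_ofNat_of_zero_le (sub_nonneg.mpr hi)
    obtain ⟨n, hn⟩ := Int.eq_ofNat_of_zero_le (sub_nonneg.mpr hj)
    rw [hm, hn, coeffXY_ofMvPowerSeries_natCast]
    change _ = coeffXY f' (finTwoExponent m n 0 + k) (finTwoExponent m n 1 + l)
    rw [finTwoExponent_zero, finTwoExponent_one, ← hm, ← hn, sub_add_cancel, sub_add_cancel]
  refine ⟨k, l, g, hf', h.symm.unique ?_⟩
  simpa only [← hf'] using (IsSwap.monomial k l (1 : R)).mul (isSwap_ofMvPowerSeries g)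

end IteratedLaurent

namespace FormalGroupLaw

variable {R : Type*} [CommRing R] (𝓕 : FormalGroupLaw R)

lemma seriesSubst_unitX_pow (n : ℕ) :
    (↑(𝓕.seriesSubst.unitX ^ n) : IteratedLaurent R) = ofMvPowerSeries (𝓕.series ^ n) := by
  rw [Units.val_pow_eq_pow_val, PowerSeriesSubst.val_unitX, map_pow]
  rfl

lemma isSwap_unitX_pow (n : ℕ) : IsSwap (↑(𝓕.seriesSubst.unitX ^ n) : IteratedLaurent R)
    (↑(𝓕.seriesSubst.unitX ^ n) : IteratedLaurent R) := by
  rw [seriesSubst_unitX_pow]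
  have h := isSwap_ofMvPowerSeries (𝓕.series ^ n)
  rwa [map_pow swapVars, swapVars_series] at h

/-- The relation `f(x, y) = f'(y, x)` after multiplication by a power of `F(x, y)`. Since `F(x, y)`
is expanded in `y`, its negative powers are not symmetric in `x` and `y`, but they are for this
relation. -/
def IsWeakSwap (f f' : IteratedLaurent R) : Prop :=
  ∃ n : ℕ, IsSwap (↑(𝓕.seriesSubst.unitX ^ n) * f : IteratedLaurent R)
    (↑(𝓕.seriesSubst.unitX ^ n) * f' : IteratedLaurent R)

namespace IsWeakSwap

variable {𝓕} {f f' g g' : IteratedLaurent R}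

lemma of_isSwap (h : IsSwap f f') : 𝓕.IsWeakSwap f f' :=
  ⟨0, (𝓕.isSwap_unitX_pow 0).mul h⟩

lemma mul (hf : 𝓕.IsWeakSwap f f') (hg : 𝓕.IsWeakSwap g g') : 𝓕.IsWeakSwap (f * g) (f' * g') := by
  obtain ⟨m, hm⟩ := hf
  obtain ⟨n, hn⟩ := hg
  refine ⟨m + n, ?_⟩
  simpa only [_root_.pow_add, Units.val_mul, mul_mul_mul_comm] using hm.mul hn

lemma unique (hf : 𝓕.IsWeakSwap f f') (hg : 𝓕.IsWeakSwap f g) : f' = g := by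
  obtain ⟨m, hm⟩ := hf
  obtain ⟨n, hn⟩ := hg
  have hm' := (𝓕.isSwap_unitX_pow n).mul hm
  have hn' := (𝓕.isSwap_unitX_pow m).mul hn
  rw [mul_left_comm] at hm'
  refine ((𝓕.seriesSubst.unitX ^ n).mul_right_inj.mp <|
    (𝓕.seriesSubst.unitX ^ m).mul_right_inj.mp ?_)
  rw [← hm'.unique hn', mul_left_comm]

lemma unitX_zpow (l : ℤ) : 𝓕.IsWeakSwap (↑(𝓕.seriesSubst.unitX ^ l) : IteratedLaurent R)
    (↑(𝓕.seriesSubst.unitX ^ l) : IteratedLaurent R) := by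
  have h : 0 ≤ (l.natAbs : ℤ) + l := by
    omega
  refine ⟨l.natAbs, ?_⟩
  rw [← Units.val_mul, ← zpow_natCast, ← zpow_add, ← Int.toNat_of_nonneg h, zpow_natCast]
  exact 𝓕.isSwap_unitX_pow _

end IsWeakSwap

end FormalGroupLaw

lemma mulS2_swap {R M : Type*} [CommRing R] [AddCommGroup M] [Module R M] (f : ℤ → ℤ → R)
    (g : ℤ → ℤ → M) (i j : ℤ) :
    mulS2 (fun i j => f j i) (fun i j => g j i) i j = mulS2 f g j i :=
  finsum_eq_of_bijective _ (Equiv.prodComm ℤ ℤ).bijective fun _ => rfl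

namespace NonunitalVertexFAlgebra

variable {R V S : Type*} [CommRing R] {𝓕 : FormalGroupLaw R} [AddCommGroup V] [Module R V]
  [CommRing S] (A : NonunitalVertexFAlgebra R 𝓕 V) (E : ModuleEmbedding R V S) (a b c : V)

/-- The series `Y(Y(a, y)b, x)c`. -/
def iterateSeries : IteratedLaurent S :=
  ofCoeff (fun i j => E.e (A.Y (A.Y a b j) c i))
    (by
      obtain ⟨N, hN⟩ := A.Y_laurent a b
      exact ⟨N, fun j hj i => by
        rw [hN j hj, map_zero, LinearMap.zero_apply, Pi.zero_apply, map_zero]⟩)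
    fun j => (A.Y_laurent (A.Y a b j) c).map E.e

/-- The series `Y(a, x)Y(b, y)c`. -/
def productSeries : IteratedLaurent S :=
  ofCoeff (fun i j => E.e (A.Y a (A.Y b c j) i))
    (by
      obtain ⟨N, hN⟩ := A.Y_laurent b c
      exact ⟨N, fun j hj i => by rw [hN j hj, map_zero, Pi.zero_apply, map_zero]⟩)
    fun j => (A.Y_laurent a (A.Y b c j)).map E.e

/-- The series `Y(a, F(x, y))Y(b, y)c`. -/
def shiftedProductSeries : IteratedLaurent S :=
  (E.law 𝓕).seriesSubst.hom (A.productSeries E a b c)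

lemma coeffXY_iterateSeries (i j : ℤ) :
    coeffXY (A.iterateSeries E a b c) i j = E.e (A.Y (A.Y a b j) c i) := rfl

lemma coeffXY_productSeries (i j : ℤ) :
    coeffXY (A.productSeries E a b c) i j = E.e (A.Y a (A.Y b c j) i) := rfl

lemma coeffXY_shiftedProductSeries (i j : ℤ) : coeffXY (A.shiftedProductSeries E a b c) i j =
    E.e (substFProd 𝓕 (fun v => A.Y a v) (A.Y b c) i j) := by
  rw [shiftedProductSeries, FormalGroupLaw.coeffXY_seriesSubst_hom, substFProd,
    map_finsum_of_injective E.e_injective]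
  refine finsum_congr fun p => ?_
  rw [coeffXY_productSeries, E.e_smul, E.izwPow_law, mul_comm]

lemma iteratedRes_iterateSeries :
    (E.law 𝓕).iteratedRes (A.iterateSeries E a b c) = E.e (A.bracket (A.bracket a b) c) := by
  rw [FormalGroupLaw.iteratedRes_eq_finsum, bracket_apply _ _ c, E.e_resF]
  refine finsum_congr fun i => congrArg _ ?_
  have h : A.Y (A.bracket a b) c (-1 - i) = 𝓕.resF fun j => A.Y (A.Y a b j) c (-1 - i) :=
    𝓕.map_resF ((LinearMap.proj (-1 - i)).comp (A.Y.flip c)) (A.Y_laurent a b)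
  simp only [h, E.e_resF, coeffXY_iterateSeries]

lemma iteratedRes_productSeries :
    (E.law 𝓕).iteratedRes (A.productSeries E a b c) = E.e (A.bracket a (A.bracket b c)) := by
  rw [FormalGroupLaw.iteratedRes_eq_finsum, bracket_apply _ a, E.e_resF]
  refine finsum_congr fun i => congrArg _ ?_
  have h : A.Y a (A.bracket b c) (-1 - i) = 𝓕.resF fun j => A.Y a (A.Y b c j) (-1 - i) :=
    𝓕.map_resF ((LinearMap.proj (-1 - i)).comp (A.Y a)) (A.Y_laurent b c)
  simp only [h, E.e_resF, coeffXY_productSeries]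

lemma iteratedRes_shiftedProductSeries :
    (E.law 𝓕).iteratedRes (A.shiftedProductSeries E a b c) = E.e (A.bracket a (A.bracket b c)) := by
  rw [shiftedProductSeries, FormalGroupLaw.iteratedRes_seriesSubst_hom, iteratedRes_productSeries]

theorem isWeakSwap_iterateSeries :
    (E.law 𝓕).IsWeakSwap (A.iterateSeries E a b c) (A.shiftedProductSeries E a b c) := by
  obtain ⟨N, hN⟩ := A.weak_assoc a b c
  refine ⟨N, fun i j => ?_⟩
  set P : IteratedLaurent S := ↑((E.law 𝓕).seriesSubst.unitX ^ N) with hP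
  have hcoeff : coeffXY P = fun i j => E.φ (pow2 𝓕.F N i j) := by
    funext i j
    rw [hP, FormalGroupLaw.seriesSubst_unitX_pow, FormalGroupLaw.coeffXY_series_pow, E.pow2_law]
  have hsymm : coeffXY P = fun i j => coeffXY P j i :=
    funext₂ ((E.law 𝓕).isSwap_unitX_pow N)
  have h := congrArg E.e (congrFun₂ hN j i)
  rw [E.e_mulS2, E.e_mulS2, ← hcoeff] at h
  calc coeffXY (P * A.iterateSeries E a b c) i j
    _ = mulS2 (fun i j => coeffXY P j i) (fun i j => E.e (A.Y (A.Y a b j) c i)) i j := by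
      rw [coeffXY_mul, ← hsymm]
      rfl
    _ = mulS2 (coeffXY P) (fun k l => E.e (A.Y (A.Y a b k) c l)) j i := mulS2_swap _ _ i j
    _ = coeffXY (P * A.shiftedProductSeries E a b c) j i := by
      rw [h, coeffXY_mul, funext₂ (A.coeffXY_shiftedProductSeries E a b c)]

/-- The summands of `Y(𝒮(y)Y(a, ι(y))b, x)c`, as in `Y(Y(b, y)a, x)c` after skew symmetry, in
degree `(i, j)`. In `((t, s), m)`, `t` is the exponent of `y` that comes from the shift, and `s`
and `m` number the modes of the inner and of the outer field. -/
def skewTerm (i j : ℤ) (q : (ℤ × ℤ) × ℤ) : S :=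
  iotaPow (E.law 𝓕).inv q.1.2 (j - q.1.1) *
    (izwPow (E.law 𝓕).F q.2 i q.1.1 * E.e (A.Y (A.Y a b q.1.2) c q.2))

lemma hasFiniteSupport_skewTerm (i j : ℤ) : (A.skewTerm E a b c i j).HasFiniteSupport := by
  obtain ⟨N, hN⟩ := A.Y_laurent a b
  refine (((Set.finite_Icc 0 (j - N)).prod (Set.finite_Icc N j)).biUnion fun p _ =>
    (E.hasFiniteSupport_izwPow_mul 𝓕 (A.Y_laurent (A.Y a b p.2) c) i p.1).image
      (Prod.mk p)).subset ?_
  rintro ⟨⟨t, s⟩, m⟩ hq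
  have hNs : N ≤ s := by
    by_contra! h
    refine hq ?_
    rw [skewTerm, hN s h, map_zero, LinearMap.zero_apply, Pi.zero_apply, map_zero, mul_zero,
      mul_zero]
  have hst : s ≤ j - t := by
    by_contra! h
    exact hq (mul_eq_zero_of_left ((E.law 𝓕).iotaPow_eq_zero h) _)
  have ht : 0 ≤ t := by
    by_contra! h
    exact hq (mul_eq_zero_of_right _ (mul_eq_zero_of_left ((E.law 𝓕).izwPow_eq_zero h) _))
  exact Set.mem_biUnion (x := (t, s)) ⟨⟨ht, by dsimp only; omega⟩, ⟨hNs, by dsimp only; omega⟩⟩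
    ⟨m, right_ne_zero_of_mul hq, rfl⟩

lemma coeffXY_iterateSeries_eq_finsum_skewTerm (i j : ℤ) :
    coeffXY (A.iterateSeries E b a c) i j =
      ∑ᶠ p : ℤ × ℤ, ∑ᶠ m : ℤ, A.skewTerm E a b c i j (p, m) := by
  have h : A.Y (A.Y b a j) c i =
      ∑ᶠ q : ℕ × ℤ, iotaPow 𝓕.inv q.2 (j - q.1) • A.Y (A.S q.1 (A.Y a b q.2)) c i :=
    A.map_skew ((LinearMap.proj i).comp (A.Y.flip c)) b a j
  rw [coeffXY_iterateSeries, h, map_finsum_of_injective E.e_injective,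
    ← finsum_comp_of_injective (e := fun q : ℕ × ℤ => ((q.1 : ℤ), q.2))]
  · refine finsum_congr fun q => ?_
    rw [E.e_smul, A.translation, E.e_substF, ← E.iotaPow_law,
      mul_finsum' _ _ (E.hasFiniteSupport_izwPow_mul 𝓕 (A.Y_laurent (A.Y a b q.2) c) i q.1)]
    rfl
  · rintro ⟨n, s⟩ ⟨n', s'⟩ h
    simpa using h
  · rintro ⟨t, s⟩ h
    by_contra ht
    have ht' : t < 0 := by
      by_contra! h0
      exact ht ⟨(t.toNat, s), Prod.ext (Int.toNat_of_nonneg h0) rfl⟩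
    refine h ((finsum_congr fun m => ?_).trans finsum_zero)
    exact mul_eq_zero_of_right _ (mul_eq_zero_of_left ((E.law 𝓕).izwPow_eq_zero ht') _)

lemma finsum_skewTerm_eq (i j m s : ℤ) : ∑ᶠ t : ℤ, A.skewTerm E a b c i j ((t, s), m) =
    coeffXY (A.iterateSeries E a b c) m s *
      ∑ᶠ t : ℤ, izwPow (E.law 𝓕).F m i t * iotaPow (E.law 𝓕).inv s (j - t) := by
  rw [mul_finsum']
  · refine finsum_congr fun t => ?_
    rw [skewTerm, coeffXY_iterateSeries]
    ring
  · refine (Set.finite_Icc 0 (j - s)).subset fun t ht => ?_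
    have ht0 : 0 ≤ t := by
      by_contra! h
      exact ht (mul_eq_zero_of_left ((E.law 𝓕).izwPow_eq_zero h) _)
    have hts : s ≤ j - t := by
      by_contra! h
      exact ht (mul_eq_zero_of_right _ ((E.law 𝓕).iotaPow_eq_zero h))
    exact ⟨ht0, by omega⟩

/-- Skew symmetry and translation covariance: `Y(Y(b, y)a, x)c = Y(Y(a, ι(y))b, F(x, y))c`. -/
theorem seriesIotaSubst_hom_iterateSeries :
    (E.law 𝓕).seriesIotaSubst.hom (A.iterateSeries E a b c) = A.iterateSeries E b a c := by
  refine ext_coeffXY fun i j => ?_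
  let σ : (ℤ × ℤ) × ℤ ≃ (ℤ × ℤ) × ℤ :=
    ⟨fun q => ((q.2, q.1.2), q.1.1), fun q => ((q.2, q.1.2), q.1.1), fun _ => rfl, fun _ => rfl⟩
  have hfin := A.hasFiniteSupport_skewTerm E a b c i j
  rw [coeffXY_iterateSeries_eq_finsum_skewTerm, ← finsum_curry _ hfin, ← finsum_comp_equiv σ,
    finsum_curry _ (hfin.preimage σ.injective.injOn), PowerSeriesSubst.coeffXY_hom]
  refine finsum_congr fun p => ?_
  rw [FormalGroupLaw.coeffXY_seriesIotaSubst_zpow_mul_zpow]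
  exact (A.finsum_skewTerm_eq E a b c i j p.1 p.2).symm

variable {a b c} {N : ℕ} {k l : ℤ} {g : MvPowerSeries (Fin 2) S}

lemma monomial_mul_iterateSeries_swap
    (h : (↑((E.law 𝓕).seriesSubst.unitX ^ N) * A.iterateSeries E a b c : IteratedLaurent S) =
      monomial l k 1 * ofMvPowerSeries (swapVars g)) :
    monomial N 0 1 * A.iterateSeries E b a c = (↑((E.law 𝓕).seriesSubst.unitX ^ l) *
      (↑((E.law 𝓕).seriesIotaSubst.unitY ^ k) *
        ofMvPowerSeries (MvPowerSeries.subst ![(E.law 𝓕).iotaY, (E.law 𝓕).series] g)) :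
          IteratedLaurent S) := by
  set 𝓖 := E.law 𝓕
  have hs : MvPowerSeries.HasSubst ![𝓖.series, 𝓖.iotaY] := 𝓖.seriesIotaSubst.hasSubst
  have hF : 𝓖.seriesIotaSubst.hom ↑(𝓖.seriesSubst.unitX ^ N) = monomial N 0 1 := by
    rw [𝓖.seriesSubst_unitX_pow, map_pow, map_pow, 𝓖.seriesIotaSubst_hom_series,
      monomial_one_pow, mul_one, mul_zero]
  have hg : MvPowerSeries.subst ![𝓖.series, 𝓖.iotaY] (swapVars g) =
      MvPowerSeries.subst ![𝓖.iotaY, 𝓖.series] g := by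
    rw [swapVars_eq_subst, subst_pair_subst hasSubst_X_one_X_zero hs, MvPowerSeries.subst_X hs,
      MvPowerSeries.subst_X hs]
    rfl
  have hsubst := congrArg 𝓖.seriesIotaSubst.hom h
  rw [map_mul, map_mul, hF, seriesIotaSubst_hom_iterateSeries, PowerSeriesSubst.hom_monomial,
    monomial_zero_one, one_mul, 𝓖.seriesIotaSubst_unitX, mul_assoc,
    PowerSeriesSubst.hom_ofMvPowerSeries] at hsubst
  rw [hsubst, ← hg]
  rfl

theorem shiftedProductSeries_swap
    (h : (↑((E.law 𝓕).seriesSubst.unitX ^ N) * A.iterateSeries E a b c : IteratedLaurent S) =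
      monomial l k 1 * ofMvPowerSeries (swapVars g)) :
    A.shiftedProductSeries E b a c = (E.law 𝓕).invYTerm N k l g := by
  set 𝓖 := E.law 𝓕
  have hg : IsSwap (ofMvPowerSeries (MvPowerSeries.subst ![𝓖.iotaY, 𝓖.series] g))
      (ofMvPowerSeries (MvPowerSeries.subst ![𝓖.iotaX, 𝓖.series] g)) := by
    have hswap := isSwap_ofMvPowerSeries (MvPowerSeries.subst ![𝓖.iotaY, 𝓖.series] g)
    rwa [swapVars_subst_pair (hasSubst_pair 𝓖.hasSubst_iotaY 𝓖.hasSubst_series), 𝓖.swapVars_series,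
      swapVars_subst (PowerSeries.HasSubst.X 1), swapVars_X_one] at hswap
  have hleft := (FormalGroupLaw.IsWeakSwap.of_isSwap (𝓕 := 𝓖) (IsSwap.monomial N 0 1)).mul
    (A.isWeakSwap_iterateSeries E b a c)
  have hright := (FormalGroupLaw.IsWeakSwap.unitX_zpow (𝓕 := 𝓖) l).mul
    (.of_isSwap ((𝓖.isSwap_iota_zpow k).mul hg))
  rw [A.monomial_mul_iterateSeries_swap E h] at hleft
  have hmono : monomial 0 (-N : ℤ) (1 : S) * monomial 0 N 1 = 1 := by
    rw [monomial_mul_monomial, neg_add_cancel, add_zero, mul_one, monomial_zero_one]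
  rw [← one_mul (A.shiftedProductSeries E b a c), ← hmono, mul_assoc, hleft.unique hright,
    FormalGroupLaw.invYTerm]
  ring

end NonunitalVertexFAlgebra

/-! ### The Lie bracket -/

lemma FormalGroupLaw.eq_invSeriesTerm {R : Type*} [CommRing R] {𝓕 : FormalGroupLaw R} {N : ℕ}
    {k l : ℤ} {g : MvPowerSeries (Fin 2) R} {f : IteratedLaurent R}
    (h : (↑(𝓕.seriesSubst.unitX ^ N) * f : IteratedLaurent R) =
      monomial k l 1 * ofMvPowerSeries g) : f = 𝓕.invSeriesTerm N k l g := by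
  rw [invSeriesTerm, mul_assoc, ← h, zpow_neg, zpow_natCast, Units.inv_mul_cancel_left]

namespace NonunitalVertexFAlgebra

variable {R V : Type*} [CommRing R] {𝓕 : FormalGroupLaw R} [AddCommGroup V] [Module R V]
  (A : NonunitalVertexFAlgebra R 𝓕 V)

theorem bracket_jacobi (a b c : V) : A.bracket a (A.bracket b c) - A.bracket b (A.bracket a c) =
    A.bracket (A.bracket a b) c := by
  obtain ⟨S, _, ⟨E⟩⟩ := exists_moduleEmbedding R V
  obtain ⟨N, hN⟩ := A.isWeakSwap_iterateSeries E a b c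
  obtain ⟨k, l, g, hproduct, hiterate⟩ := exists_eq_monomial_mul_of_isSwap hN
  refine E.e_injective ?_
  rw [map_sub, sub_eq_iff_eq_add, ← sub_eq_iff_eq_add', ← A.iteratedRes_shiftedProductSeries,
    ← A.iteratedRes_shiftedProductSeries, ← A.iteratedRes_iterateSeries]
  rw [A.shiftedProductSeries_swap E hiterate, FormalGroupLaw.eq_invSeriesTerm hproduct,
    FormalGroupLaw.eq_invSeriesTerm hiterate, ← FormalGroupLaw.iteratedRes_invSeriesTerm_sub]

/-- The submodule `∑_{n ≥ 1} 𝒮⁽ⁿ⁾(V)`. -/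
def shiftSubmodule : Submodule R V :=
  ⨆ n : {n : ℕ // 1 ≤ n}, LinearMap.range (A.S n.1)

variable {A}

lemma shift_mem_shiftSubmodule {n : ℕ} (hn : n ≠ 0) (v : V) : A.S n v ∈ A.shiftSubmodule :=
  Submodule.mem_iSup_of_mem (p := fun n : {n : ℕ // 1 ≤ n} => LinearMap.range (A.S n.1))
    ⟨n, Nat.one_le_iff_ne_zero.mpr hn⟩ ⟨v, rfl⟩

lemma bracket_eq_zero_of_mem {w : V} (hw : w ∈ A.shiftSubmodule) (b : V) : A.bracket w b = 0 := by
  suffices h : A.shiftSubmodule ≤ LinearMap.ker (A.bracket.flip b) from h hw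
  refine iSup_le fun n => ?_
  rintro _ ⟨v, rfl⟩
  exact A.bracket_shift (Nat.one_le_iff_ne_zero.mp n.2) v b

variable (A)

lemma mkQ_bracket_skew (a b : V) : A.shiftSubmodule.mkQ (A.bracket a b) =
    -A.shiftSubmodule.mkQ (A.bracket b a) :=
  A.map_bracket_skew (fun _ hn v => (Submodule.Quotient.mk_eq_zero _).mpr
    (shift_mem_shiftSubmodule hn v)) a b

variable {A}

lemma mkQ_bracket_congr {a a' b b' : V} (ha : a - a' ∈ A.shiftSubmodule)
    (hb : b - b' ∈ A.shiftSubmodule) :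
    A.shiftSubmodule.mkQ (A.bracket a b) = A.shiftSubmodule.mkQ (A.bracket a' b') := by
  have hleft {v v' : V} (hv : v - v' ∈ A.shiftSubmodule) (w : V) :
      A.bracket v w = A.bracket v' w := by
    rw [← sub_eq_zero, ← LinearMap.map_sub₂, bracket_eq_zero_of_mem hv]
  rw [hleft ha, A.mkQ_bracket_skew, hleft hb, ← A.mkQ_bracket_skew]

end NonunitalVertexFAlgebra

end

theorem vertexF_lie_algebra_general (R : Type*) [CommRing R] (𝓕 : FormalGroupLaw R)
    (V : Type*) [AddCommGroup V] [Module R V] (A : NonunitalVertexFAlgebra R 𝓕 V) :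
    let W : Submodule R V := ⨆ n : {n : ℕ // 1 ≤ n}, LinearMap.range (A.S n.1)
    let π : V → V ⧸ W := Submodule.Quotient.mk
    let br : V → V → V := fun a b => 𝓕.resF (A.Y a b)
    (∀ a a' b b' : V, a - a' ∈ W → b - b' ∈ W → π (br a b) = π (br a' b')) ∧
    (∀ (r : R) (a a' b : V), π (br (r • a + a') b) = r • π (br a b) + π (br a' b)) ∧
    (∀ (r : R) (a b b' : V), π (br a (r • b + b')) = r • π (br a b) + π (br a b')) ∧
    (∀ a b : V, π (br a b) = - π (br b a)) ∧
    (∀ a b c : V, π (br a (br b c)) - π (br b (br a c)) = π (br (br a b) c)) := by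
  intro W π br
  refine ⟨fun _ _ _ _ => NonunitalVertexFAlgebra.mkQ_bracket_congr, fun r a a' b => ?_,
    fun r a b b' => ?_, A.mkQ_bracket_skew, fun a b c => congrArg W.mkQ (A.bracket_jacobi a b c)⟩
  · suffices h : A.bracket (r • a + a') b = r • A.bracket a b + A.bracket a' b from
      congrArg W.mkQ h
    rw [map_add, map_smul, LinearMap.add_apply, LinearMap.smul_apply]
  · suffices h : A.bracket a (r • b + b') = r • A.bracket a b + A.bracket a b' from
      congrArg W.mkQ h
    rw [map_add, map_smul]

/-- for a vertex `F`-algebra, `[a,b] = Res^F_{z=0} Y(a,z)b dz` descends to a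
well-defined `R`-bilinear bracket on `V/∑_{n≥1}𝒮⁽ⁿ⁾(V)` which is skew-symmetric and
satisfies the Jacobi identity, i.e. the quotient becomes a Lie algebra over `R`. -/
theorem vertexF_lie_algebra (R : Type*) [CommRing R] (𝓕 : FormalGroupLaw R)
    (V : Type*) [AddCommGroup V] [Module R V] (A : VertexFAlgebra R 𝓕 V) :
    let W : Submodule R V := ⨆ n : {n : ℕ // 1 ≤ n}, LinearMap.range (A.S n.1)
    let π : V → V ⧸ W := Submodule.Quotient.mk
    let br : V → V → V := fun a b => 𝓕.resF (A.Y a b)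
    (∀ a a' b b' : V, a - a' ∈ W → b - b' ∈ W → π (br a b) = π (br a' b')) ∧
    (∀ (r : R) (a a' b : V), π (br (r • a + a') b) = r • π (br a b) + π (br a' b)) ∧
    (∀ (r : R) (a b b' : V), π (br a (r • b + b')) = r • π (br a b) + π (br a b')) ∧
    (∀ a b : V, π (br a b) = - π (br b a)) ∧
    (∀ a b c : V, π (br a (br b c)) - π (br b (br a c)) = π (br (br a b) c)) :=
  vertexF_lie_algebra_general R 𝓕 V A.toNonunital
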